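/- arXiv:2206.11711 — 2 statements merged into one kernel-verified Lean document; each statement's English description precedes it below -/
import Mathlib

section
/- Let n ∈ ℕ and let f : 𝕊 → GL_n(ℂ) be a smooth (C^∞) map, where 𝕊 carries its structure as a one-dimensional real manifold. Then there exist integers κ₁ ≥ κ₂ ≥ ⋯ ≥ κ_n, a continuous map F₊ : 𝔻̄ → M_n(ℂ) which is holomorphic on 𝔻, takes invertible values on all of 𝔻̄, and whose restriction to 𝕊 is smooth, and a continuous map F₋ : {z ∈ ℂ : |z| ≥ 1} → M_n(ℂ) which is holomorphic on {z : |z| > 1}, takes invertible values, has an invertible limit F₋(∞) as |z| → ∞, and whose restriction to 𝕊 is smooth, such that f(z) = F₊(z)·diag(z^{κ₁},…,z^{κ_n})·F₋(z) for all z ∈ 𝕊. Moreover, the n-tuple (κ₁,…,κ_n) is uniquely determined by f. -/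
open Metric Filter

/-- The parametrization `t ↦ e^{2πit}` of the unit circle. -/
noncomputable def circleParam (t : ℝ) : ℂ :=
  Complex.exp (2 * (Real.pi : ℂ) * Complex.I * (t : ℂ))

/-- A Birkhoff decomposition `f = F₊ · diag(z^κ) · F₋` (on the unit circle) of a smooth
loop `f` in `GL_n(ℂ)`, with smooth boundary values:  `F₊` is continuous on the closed unit
disk, holomorphic on the open disk, `GL_n`-valued, with smooth restriction to `𝕊`; `F₋` is
continuous on `{|z| ≥ 1}`, holomorphic on `{|z| > 1}`, `GL_n`-valued, with smooth
restriction to `𝕊` and an invertible limit `L` at `∞`. -/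
def SmoothBirkhoffFactorization (n : ℕ) (f : ℂ → Matrix (Fin n) (Fin n) ℂ)
    (κ : Fin n → ℤ) (Fp Fm : ℂ → Matrix (Fin n) (Fin n) ℂ)
    (L : Matrix (Fin n) (Fin n) ℂ) : Prop :=
  (∀ i j, ContinuousOn (fun z => Fp z i j) (closedBall 0 1)) ∧
  (∀ i j, DifferentiableOn ℂ (fun z => Fp z i j) (ball 0 1)) ∧
  (∀ z ∈ closedBall (0 : ℂ) 1, IsUnit (Fp z)) ∧
  (∀ i j, ContDiff ℝ (⊤ : ℕ∞) fun t : ℝ => Fp (circleParam t) i j) ∧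
  (∀ i j, ContinuousOn (fun z => Fm z i j) {z : ℂ | 1 ≤ ‖z‖}) ∧
  (∀ i j, DifferentiableOn ℂ (fun z => Fm z i j) {z : ℂ | 1 < ‖z‖}) ∧
  (∀ z : ℂ, 1 ≤ ‖z‖ → IsUnit (Fm z)) ∧
  (∀ i j, ContDiff ℝ (⊤ : ℕ∞) fun t : ℝ => Fm (circleParam t) i j) ∧
  IsUnit L ∧
  (∀ i j, Tendsto (fun z => Fm z i j) (comap (fun z : ℂ => ‖z‖) atTop) (nhds (L i j))) ∧
  (∀ z : ℂ, ‖z‖ = 1 → f z = Fp z * Matrix.diagonal (fun i => z ^ κ i) * Fm z)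


namespace Birkhoff

/-! ### Function algebras on the two closed domains -/

lemma norm_circleParam (t : ℝ) : ‖circleParam t‖ = 1 := by
  have : circleParam t = Complex.exp (((2 * Real.pi * t : ℝ) : ℂ) * Complex.I) := by
    unfold circleParam; congr 1; push_cast; ring
  rw [this, Complex.norm_exp_ofReal_mul_I]

lemma circleParam_ne_zero (t : ℝ) : circleParam t ≠ 0 := Complex.exp_ne_zero _

lemma exists_circleParam (z : ℂ) (hz : ‖z‖ = 1) : ∃ t : ℝ, z = circleParam t := by
  refine ⟨Complex.arg z / (2 * Real.pi), ?_⟩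
  have h := Complex.norm_mul_exp_arg_mul_I z
  rw [hz, Complex.ofReal_one, one_mul] at h
  have hpi : (Real.pi : ℂ) ≠ 0 := by exact_mod_cast Real.pi_ne_zero
  have h2 : circleParam (Complex.arg z / (2 * Real.pi)) =
      Complex.exp (Complex.arg z * Complex.I) := by
    unfold circleParam
    congr 1
    push_cast
    field_simp
  rw [h2, h]

lemma contDiff_circleParam : ContDiff ℝ (⊤ : ℕ∞) circleParam := by
  unfold circleParam
  apply ContDiff.cexp
  apply ContDiff.mul contDiff_const
  exact Complex.ofRealCLM.contDiff

/-- Functions continuous on the closed disk, holomorphic inside, smooth on the circle. -/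
def plusAlg : Subalgebra ℂ (ℂ → ℂ) where
  carrier := {g | ContinuousOn g (closedBall 0 1) ∧ DifferentiableOn ℂ g (ball 0 1) ∧
    ContDiff ℝ (⊤ : ℕ∞) fun t : ℝ => g (circleParam t)}
  mul_mem' := fun ha hb => ⟨ha.1.mul hb.1, ha.2.1.mul hb.2.1, ha.2.2.mul hb.2.2⟩
  add_mem' := fun ha hb => ⟨ha.1.add hb.1, ha.2.1.add hb.2.1, ha.2.2.add hb.2.2⟩
  algebraMap_mem' := fun _ => ⟨continuousOn_const, differentiableOn_const _, contDiff_const⟩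

/-- Functions continuous on the closed exterior disk, holomorphic inside, smooth on the circle. -/
def minusAlg : Subalgebra ℂ (ℂ → ℂ) where
  carrier := {g | ContinuousOn g {z : ℂ | 1 ≤ ‖z‖} ∧ DifferentiableOn ℂ g {z : ℂ | 1 < ‖z‖} ∧
    ContDiff ℝ (⊤ : ℕ∞) fun t : ℝ => g (circleParam t)}
  mul_mem' := fun ha hb => ⟨ha.1.mul hb.1, ha.2.1.mul hb.2.1, ha.2.2.mul hb.2.2⟩
  add_mem' := fun ha hb => ⟨ha.1.add hb.1, ha.2.1.add hb.2.1, ha.2.2.add hb.2.2⟩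
  algebraMap_mem' := fun _ => ⟨continuousOn_const, differentiableOn_const _, contDiff_const⟩

lemma mem_plusAlg {g : ℂ → ℂ} : g ∈ plusAlg ↔ ContinuousOn g (closedBall 0 1) ∧
    DifferentiableOn ℂ g (ball 0 1) ∧ ContDiff ℝ (⊤ : ℕ∞) fun t : ℝ => g (circleParam t) := Iff.rfl

lemma mem_minusAlg {g : ℂ → ℂ} : g ∈ minusAlg ↔ ContinuousOn g {z : ℂ | 1 ≤ ‖z‖} ∧
    DifferentiableOn ℂ g {z : ℂ | 1 < ‖z‖} ∧
    ContDiff ℝ (⊤ : ℕ∞) fun t : ℝ => g (circleParam t) := Iff.rfl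

lemma circleParam_mem_closedBall (t : ℝ) : circleParam t ∈ closedBall (0 : ℂ) 1 := by
  simp [norm_circleParam]

lemma plusAlg_inv {g : ℂ → ℂ} (hg : g ∈ plusAlg) (h0 : ∀ z ∈ closedBall (0 : ℂ) 1, g z ≠ 0) :
    (fun z => (g z)⁻¹) ∈ plusAlg :=
  ⟨hg.1.inv₀ h0, fun z hz => (hg.2.1 z hz).inv (h0 z (ball_subset_closedBall hz)),
    hg.2.2.inv fun t => h0 _ (circleParam_mem_closedBall t)⟩

lemma minusAlg_inv {g : ℂ → ℂ} (hg : g ∈ minusAlg) (h0 : ∀ z : ℂ, 1 ≤ ‖z‖ → g z ≠ 0) :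
    (fun z => (g z)⁻¹) ∈ minusAlg :=
  ⟨hg.1.inv₀ h0, fun z hz => (hg.2.1 z hz).inv (h0 z (le_of_lt hz)),
    hg.2.2.inv fun t => h0 _ (norm_circleParam t).ge⟩

lemma const_mem (S : Subalgebra ℂ (ℂ → ℂ)) (c : ℂ) : (fun _ : ℂ => c) ∈ S := S.algebraMap_mem c

lemma id_mem_plus : (fun z : ℂ => z) ∈ plusAlg :=
  ⟨continuousOn_id, differentiableOn_id, contDiff_circleParam⟩

lemma inv_mem_minus : (fun z : ℂ => z⁻¹) ∈ minusAlg := by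
  refine ⟨?_, ?_, ?_⟩
  · refine continuousOn_id.inv₀ fun z hz h => ?_
    simp only [id] at h
    subst h; simp at hz; linarith
  · refine fun z hz => differentiableWithinAt_id.inv fun h => ?_
    subst h; simp at hz; linarith
  · exact contDiff_circleParam.inv circleParam_ne_zero

lemma poly_mem_plus (p : Polynomial ℂ) : (fun z : ℂ => p.eval z) ∈ plusAlg := by
  induction p using Polynomial.induction_on' with
  | add p q hp hq => simp only [Polynomial.eval_add]; exact plusAlg.add_mem hp hq
  | monomial n a =>
    simp only [Polynomial.eval_monomial]
    exact plusAlg.mul_mem (const_mem plusAlg a) (plusAlg.pow_mem id_mem_plus n)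

section mat
variable {n : ℕ}

/-- All entries of a matrix-valued function lie in `S`. -/
def MatIn (S : Subalgebra ℂ (ℂ → ℂ)) (G : ℂ → Matrix (Fin n) (Fin n) ℂ) : Prop :=
  ∀ i j, (fun z => G z i j) ∈ S

lemma MatIn.mul {S : Subalgebra ℂ (ℂ → ℂ)} {G H : ℂ → Matrix (Fin n) (Fin n) ℂ}
    (hG : MatIn S G) (hH : MatIn S H) : MatIn S (fun z => G z * H z) := by
  intro i j
  have := S.sum_mem (t := Finset.univ) fun k _ => S.mul_mem (hG i k) (hH k j)
  convert this using 1
  ext z; simp [Matrix.mul_apply]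

lemma MatIn.const (S : Subalgebra ℂ (ℂ → ℂ)) (C : Matrix (Fin n) (Fin n) ℂ) :
    MatIn S (fun _ => C) := fun i j => const_mem S (C i j)

lemma MatIn.add {S : Subalgebra ℂ (ℂ → ℂ)} {G H : ℂ → Matrix (Fin n) (Fin n) ℂ}
    (hG : MatIn S G) (hH : MatIn S H) : MatIn S (fun z => G z + H z) :=
  fun i j => S.add_mem (hG i j) (hH i j)

lemma MatIn.det {S : Subalgebra ℂ (ℂ → ℂ)} {G : ℂ → Matrix (Fin n) (Fin n) ℂ}
    (hG : MatIn S G) : (fun z => (G z).det) ∈ S := by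
  have := S.sum_mem (t := Finset.univ) fun (σ : Equiv.Perm (Fin n)) _ =>
    S.mul_mem (const_mem S ((Equiv.Perm.sign σ : ℤ) : ℂ))
      (S.prod_mem (t := Finset.univ) fun k _ => hG (σ k) k)
  convert this using 1
  ext z; simp [Matrix.det_apply']

lemma MatIn.adjugate {S : Subalgebra ℂ (ℂ → ℂ)} {G : ℂ → Matrix (Fin n) (Fin n) ℂ}
    (hG : MatIn S G) : MatIn S (fun z => (G z).adjugate) := by
  intro i j
  simp only [Matrix.adjugate_apply]
  apply MatIn.det
  intro k l
  by_cases h : k = j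
  · subst h; simpa using const_mem S _
  · simpa [Matrix.updateRow_ne h] using hG k l

lemma inv_eq (M : Matrix (Fin n) (Fin n) ℂ) : M⁻¹ = M.det⁻¹ • M.adjugate := by
  rw [Matrix.inv_def, Ring.inverse_eq_inv']

lemma det_ne {M : Matrix (Fin n) (Fin n) ℂ} (h : IsUnit M) : M.det ≠ 0 :=
  ((Matrix.isUnit_iff_isUnit_det _).1 h).ne_zero

lemma isUnit_of_det {M : Matrix (Fin n) (Fin n) ℂ} (h : M.det ≠ 0) : IsUnit M :=
  (Matrix.isUnit_iff_isUnit_det _).2 (isUnit_iff_ne_zero.2 h)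

lemma MatIn.inv_plus {G : ℂ → Matrix (Fin n) (Fin n) ℂ} (hG : MatIn plusAlg G)
    (h : ∀ z ∈ closedBall (0 : ℂ) 1, IsUnit (G z)) : MatIn plusAlg (fun z => (G z)⁻¹) := by
  intro i j
  simp only [inv_eq]
  exact plusAlg.mul_mem (plusAlg_inv hG.det fun z hz => det_ne (h z hz)) (hG.adjugate i j)

lemma MatIn.inv_minus {G : ℂ → Matrix (Fin n) (Fin n) ℂ} (hG : MatIn minusAlg G)
    (h : ∀ z : ℂ, 1 ≤ ‖z‖ → IsUnit (G z)) : MatIn minusAlg (fun z => (G z)⁻¹) := by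
  intro i j
  simp only [inv_eq]
  exact minusAlg.mul_mem (minusAlg_inv hG.det fun z hz => det_ne (h z hz)) (hG.adjugate i j)

lemma tendsto_inv_mat {G : ℂ → Matrix (Fin n) (Fin n) ℂ} {l : Filter ℂ}
    {L : Matrix (Fin n) (Fin n) ℂ} (hG : Tendsto G l (nhds L)) (hL : IsUnit L) :
    Tendsto (fun z => (G z)⁻¹) l (nhds L⁻¹) := by
  simp only [inv_eq]
  have h1 : Tendsto (fun z => (G z).det) l (nhds L.det) :=
    ((continuous_id.matrix_det).tendsto L).comp hG
  have h2 : Tendsto (fun z => (G z).adjugate) l (nhds L.adjugate) :=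
    ((continuous_id.matrix_adjugate).tendsto L).comp hG
  exact (h1.inv₀ (det_ne hL)).smul h2

end mat

/-! ### Uniqueness of the partial indices -/

lemma vanish_key {a b : ℂ → ℂ} {l : ℂ} (ha : a ∈ plusAlg) (hb : b ∈ minusAlg)
    (hl : Tendsto b (comap (fun z : ℂ => ‖z‖) atTop) (nhds l)) {m : ℕ} (hm : 0 < m)
    (h : ∀ z : ℂ, ‖z‖ = 1 → a z * z ^ m = b z) : ∀ z : ℂ, ‖z‖ = 1 → a z = 0 := by
  set φ : ℂ → ℂ := fun u => u ^ m * b u⁻¹ with hφ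
  have hφ0 : φ 0 = 0 := by simp [hφ, hm.ne']
  have hne : ∀ u : ℂ, u ≠ 0 → u ∈ closedBall (0 : ℂ) 1 → 1 ≤ ‖u⁻¹‖ := by
    intro u hu hu1
    rw [norm_inv]
    exact (one_le_inv₀ (norm_pos_iff.2 hu)).2 (by simpa using hu1)
  have hφc : ContinuousOn φ (closedBall 0 1) := by
    intro u hu
    by_cases hu0 : u = 0
    · subst hu0
      apply ContinuousAt.continuousWithinAt
      rw [continuousAt_iff_punctured_nhds, hφ0]
      have h1 : Tendsto (fun u : ℂ => u⁻¹) (nhdsWithin 0 {0}ᶜ)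
          (comap (fun z : ℂ => ‖z‖) atTop) := by
        rw [tendsto_comap_iff]
        exact tendsto_norm_inv_nhdsNE_zero_atTop
      have h2 : Tendsto (fun u : ℂ => u ^ m) (nhdsWithin 0 {0}ᶜ) (nhds 0) := by
        have := (continuous_pow (M := ℂ) m).tendsto 0
        rw [zero_pow hm.ne'] at this
        exact this.mono_left nhdsWithin_le_nhds
      simpa using h2.mul (hl.comp h1)
    · apply ContinuousWithinAt.mul (continuous_pow m).continuousWithinAt
      have h1 : ContinuousWithinAt b {z : ℂ | 1 ≤ ‖z‖} u⁻¹ := hb.1 _ (hne u hu0 hu)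
      have h2 : ContinuousWithinAt (fun u : ℂ => u⁻¹) (closedBall 0 1 ∩ {0}ᶜ) u :=
        (continuousAt_inv₀ hu0).continuousWithinAt
      have h4 : ContinuousWithinAt (fun u => b u⁻¹) (closedBall 0 1 ∩ {0}ᶜ) u :=
        ContinuousWithinAt.comp (t := {z : ℂ | 1 ≤ ‖z‖}) h1 h2
          (fun v hv => hne v hv.2 hv.1)
      exact (continuousWithinAt_inter (isOpen_compl_singleton.mem_nhds hu0)).1 h4
  have hφd : ∀ u ∈ ball (0 : ℂ) 1 \ {0}, DifferentiableAt ℂ φ u := by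
    intro u hu
    have hu0 : u ≠ 0 := hu.2
    apply DifferentiableAt.mul (differentiableAt_pow m)
    have h1 : DifferentiableAt ℂ b u⁻¹ := by
      apply (hb.2.1).differentiableAt
      apply (isOpen_lt continuous_const continuous_norm).mem_nhds
      show 1 < ‖u⁻¹‖
      rw [norm_inv]
      exact (one_lt_inv₀ (norm_pos_iff.2 hu0)).2 (by simpa using hu.1)
    exact h1.comp u (differentiableAt_inv hu0)
  set ks : ℂ → ℂ := fun z => starRingEnd ℂ (φ (starRingEnd ℂ z)) with hks
  have hksc : ContinuousOn ks (closedBall 0 1) := by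
    apply Complex.continuous_conj.comp_continuousOn
    apply hφc.comp Complex.continuous_conj.continuousOn
    intro z hz; simpa using hz
  have hksd : ∀ u ∈ ball (0 : ℂ) 1 \ {0}, DifferentiableAt ℂ ks u := by
    intro u hu
    have : DifferentiableAt ℂ φ (starRingEnd ℂ u) := by
      apply hφd
      refine ⟨by simpa using hu.1, by simpa using hu.2⟩
    exact differentiableAt_conj_conj_iff.2 this
  have havg := circleAverage_of_differentiable_on_off_countable
    (f := fun z => a z * ks z) (c := 0) (R := 1) (s := {0}) (Set.countable_singleton _)
    (by rw [abs_one]; exact ha.1.mul hksc)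
    (by
      rw [abs_one]
      intro z hz
      exact (ha.2.1.differentiableAt (isOpen_ball.mem_nhds hz.1)).mul (hksd z hz))
  have hks0 : ks 0 = 0 := by simp [hks, hφ0]
  rw [hks0, mul_zero] at havg
  have hcirc : ∀ z : ℂ, ‖z‖ = 1 → a z * ks z = ((‖a z‖ ^ 2 : ℝ) : ℂ) := by
    intro z hz
    have hz0 : z ≠ 0 := by intro h0; simp [h0] at hz
    have hcz : starRingEnd ℂ z = z⁻¹ := by
      rw [Complex.inv_def, Complex.normSq_eq_norm_sq, hz]; simp
    have : φ (starRingEnd ℂ z) = a z := by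
      simp only [hφ, hcz, inv_inv]
      rw [← h z hz, mul_comm (a z), ← mul_assoc, ← mul_pow, inv_mul_cancel₀ hz0, one_pow, one_mul]
    simp only [hks, this]
    rw [Complex.mul_conj, Complex.normSq_eq_norm_sq]
  have h_int0 : ∫ θ in (0 : ℝ)..2 * Real.pi, ‖a (circleMap 0 1 θ)‖ ^ 2 = 0 := by
    rw [Real.circleAverage_def] at havg
    have h1 : ∀ θ : ℝ, a (circleMap 0 1 θ) * ks (circleMap 0 1 θ) =
        ((‖a (circleMap 0 1 θ)‖ ^ 2 : ℝ) : ℂ) := fun θ => hcirc _ (by simp)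
    simp only [h1] at havg
    rw [intervalIntegral.integral_ofReal] at havg
    have hpi : Real.pi ≠ 0 := Real.pi_ne_zero
    rw [smul_eq_zero] at havg
    rcases havg with h | h
    · simp at h
    · exact_mod_cast h
  have hcont : Continuous fun θ : ℝ => ‖a (circleMap 0 1 θ)‖ ^ 2 := by
    have : Continuous fun θ : ℝ => a (circleMap 0 1 θ) :=
      ha.1.comp_continuous (continuous_circleMap 0 1) (fun θ => by simp)
    exact this.norm.pow 2
  intro z hz
  by_contra hne0
  obtain ⟨θ, hθ, rfl⟩ : ∃ θ ∈ Set.Ioc (0 : ℝ) (2 * Real.pi), circleMap 0 1 θ = z := by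
    have h1 : z ∈ circleMap 0 1 '' Set.Ioc 0 (2 * Real.pi) := by
      rw [image_circleMap_Ioc]; simpa using hz
    exact h1
  have := intervalIntegral.integral_pos (a := 0) (b := 2 * Real.pi) Real.two_pi_pos
    hcont.continuousOn (fun x _ => by positivity) ⟨θ, ⟨hθ.1.le, hθ.2⟩, by positivity⟩
  linarith

lemma det_zero_of_block {n : ℕ} (A : Matrix (Fin n) (Fin n) ℂ) (m : Fin n)
    (h : ∀ i j, m ≤ i → j ≤ m → A i j = 0) : A.det = 0 := by
  rw [Matrix.det_apply]
  apply Finset.sum_eq_zero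
  intro σ _
  obtain ⟨j, hj, hmj⟩ : ∃ j, j ≤ m ∧ m ≤ σ j := by
    by_contra hcon
    push Not at hcon
    have : ((Finset.Iic m).map σ.toEmbedding).card ≤ (Finset.Iio m).card := by
      apply Finset.card_le_card
      intro x hx
      simp only [Finset.mem_map, Finset.mem_Iic] at hx
      obtain ⟨j, hj, rfl⟩ := hx
      simpa using hcon j hj
    simp at this
  have h0 : ∏ i, A (σ i) i = 0 := Finset.prod_eq_zero (Finset.mem_univ j) (h _ _ hmj hj)
  rw [h0, smul_zero]

lemma tendsto_mat {n : ℕ} {F : ℂ → Matrix (Fin n) (Fin n) ℂ} {L : Matrix (Fin n) (Fin n) ℂ}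
    {l : Filter ℂ} : Tendsto F l (nhds L) ↔
    ∀ i j, Tendsto (fun z => F z i j) l (nhds (L i j)) := by
  constructor
  · intro h i j
    exact (tendsto_pi_nhds.1 (tendsto_pi_nhds.1 h i) j)
  · intro h
    exact tendsto_pi_nhds.2 fun i => tendsto_pi_nhds.2 fun j => h i j

lemma kappa_le {n : ℕ} {f : ℂ → Matrix (Fin n) (Fin n) ℂ} {κ κ' : Fin n → ℤ}
    {Fp Fm Gp Gm : ℂ → Matrix (Fin n) (Fin n) ℂ} {L L' : Matrix (Fin n) (Fin n) ℂ}
    (hκ : Antitone κ) (hκ' : Antitone κ')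
    (hF : SmoothBirkhoffFactorization n f κ Fp Fm L)
    (hG : SmoothBirkhoffFactorization n f κ' Gp Gm L') (m : Fin n) : κ m ≤ κ' m := by
  by_contra hlt
  push Not at hlt
  obtain ⟨a1, a2, a3, a4, a5, a6, a7, a8, a9, a10, a11⟩ := hF
  obtain ⟨b1, b2, b3, b4, b5, b6, b7, b8, b9, b10, b11⟩ := hG
  have hFp : MatIn plusAlg Fp := fun i j => ⟨a1 i j, a2 i j, a4 i j⟩
  have hGp : MatIn plusAlg Gp := fun i j => ⟨b1 i j, b2 i j, b4 i j⟩
  have hFm : MatIn minusAlg Fm := fun i j => ⟨a5 i j, a6 i j, a8 i j⟩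
  have hGm : MatIn minusAlg Gm := fun i j => ⟨b5 i j, b6 i j, b8 i j⟩
  have hA := (hGp.inv_plus b3).mul hFp
  have hB := hGm.mul (hFm.inv_minus a7)
  have hBl : Tendsto (fun z => Gm z * (Fm z)⁻¹) (comap (fun z : ℂ => ‖z‖) atTop)
      (nhds (L' * L⁻¹)) :=
    (tendsto_mat.2 b10).mul (tendsto_inv_mat (tendsto_mat.2 a10) a9)
  have hdet := det_zero_of_block ((Gp 1)⁻¹ * Fp 1) m ?_
  · rw [Matrix.det_mul] at hdet
    have h1 : (Fp 1).det ≠ 0 := det_ne (a3 1 (by simp))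
    have h2 : ((Gp 1)⁻¹).det ≠ 0 :=
      det_ne ((Matrix.isUnit_nonsing_inv_iff).2 (b3 1 (by simp)))
    exact mul_ne_zero h2 h1 hdet
  · intro i j hi hj
    have hpos : 0 < κ j - κ' i := by
      have := hκ hj; have := hκ' hi; linarith
    refine vanish_key (hA i j) (hB i j) (tendsto_mat.1 hBl i j) (m := (κ j - κ' i).toNat)
      (by omega) ?_ 1 (by simp)
    intro z hz
    have hz0 : z ≠ 0 := by intro h0; simp [h0] at hz
    have e1 := (a11 z hz).symm.trans (b11 z hz)
    have hGu : IsUnit (Gp z).det := (Matrix.isUnit_iff_isUnit_det _).1 (b3 z (by simp [hz]))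
    have hFu : IsUnit (Fm z).det := (Matrix.isUnit_iff_isUnit_det _).1 (a7 z hz.ge)
    have e2 : (Gp z)⁻¹ * Fp z * Matrix.diagonal (fun i => z ^ κ i) =
        Matrix.diagonal (fun i => z ^ κ' i) * (Gm z * (Fm z)⁻¹) := by
      calc _ = (Gp z)⁻¹ * (Fp z * Matrix.diagonal (fun i => z ^ κ i) * Fm z) * (Fm z)⁻¹ := by
            simp only [Matrix.mul_assoc, Matrix.mul_nonsing_inv _ hFu, Matrix.mul_one]
        _ = _ := by
            rw [e1]
            simp only [← Matrix.mul_assoc, Matrix.nonsing_inv_mul _ hGu, Matrix.one_mul]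
    have e3 := congrFun (congrFun e2 i) j
    rw [Matrix.mul_diagonal, Matrix.diagonal_mul] at e3
    have e4 : z ^ (κ j - κ' i).toNat = z ^ κ j * (z ^ κ' i)⁻¹ := by
      rw [← zpow_natCast, Int.toNat_of_nonneg hpos.le, zpow_sub₀ hz0, div_eq_mul_inv]
    rw [e4, ← mul_assoc, e3]
    have : z ^ κ' i ≠ 0 := zpow_ne_zero _ hz0
    field_simp

/-! ### Row reduction of polynomial matrices -/

open Polynomial in
lemma det_updateRow_one {R : Type*} [CommRing R] {n : ℕ} (i : Fin n) (v : Fin n → R) :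
    ((1 : Matrix (Fin n) (Fin n) R).updateRow i v).det = v i := by
  rw [← Matrix.cramer_transpose_apply, Matrix.transpose_one, Matrix.cramer_one]
  rfl

open Polynomial in
lemma row_reduce_aux {n : ℕ} (N : ℕ) : ∀ (Q : Matrix (Fin n) (Fin n) ℂ[X]) (d : Fin n → ℕ),
    Q.det ≠ 0 → (∀ i j, (Q i j).natDegree ≤ d i) → ∑ i, d i = N →
    ∃ (U : (Matrix (Fin n) (Fin n) ℂ[X])ˣ) (d' : Fin n → ℕ),
      (∀ i j, (((U : Matrix (Fin n) (Fin n) ℂ[X]) * Q) i j).natDegree ≤ d' i) ∧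
      IsUnit (Matrix.of fun i j => (((U : Matrix (Fin n) (Fin n) ℂ[X]) * Q) i j).coeff (d' i)) := by
  induction N using Nat.strong_induction_on with
  | _ N ih =>
    intro Q d hQ hd hN
    by_cases hu : IsUnit (Matrix.of fun i j => (Q i j).coeff (d i))
    · exact ⟨1, d, by simpa using hd, by simpa using hu⟩
    have hdet : (Matrix.of fun i j => (Q i j).coeff (d i)).det = 0 := by
      by_contra h; exact hu (isUnit_of_det h)
    obtain ⟨c, hc0, hc⟩ := Matrix.exists_vecMul_eq_zero_iff.2 hdet
    have hne : (Finset.univ.filter fun i => c i ≠ 0).Nonempty := by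
      obtain ⟨i, hi⟩ := Function.ne_iff.1 hc0
      exact ⟨i, by simpa using hi⟩
    obtain ⟨i0, hi0, hmax⟩ := Finset.exists_max_image _ d hne
    have hci0 : c i0 ≠ 0 := by simpa using hi0
    have hmax' : ∀ i, c i ≠ 0 → d i ≤ d i0 := fun i hi => hmax i (by simpa using hi)
    set T : Matrix (Fin n) (Fin n) ℂ[X] :=
      (1 : Matrix (Fin n) (Fin n) ℂ[X]).updateRow i0 (fun i => C (c i) * X ^ (d i0 - d i)) with hT
    have hTdet : T.det = C (c i0) := by
      rw [hT, det_updateRow_one]; simp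
    have hTu : IsUnit T := by
      rw [Matrix.isUnit_iff_isUnit_det, hTdet]
      exact Polynomial.isUnit_C.2 (isUnit_iff_ne_zero.2 hci0)
    have hrow : ∀ j, (T * Q) i0 j = ∑ i, C (c i) * X ^ (d i0 - d i) * Q i j := by
      intro j; simp [Matrix.mul_apply, hT]
    have hrow' : ∀ i, i ≠ i0 → ∀ j, (T * Q) i j = Q i j := by
      intro i hi j
      simp [Matrix.mul_apply, hT, Matrix.updateRow_ne hi, Matrix.one_apply]
    have hdeg : ∀ j, ((T * Q) i0 j).natDegree ≤ d i0 := by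
      intro j
      rw [hrow]
      apply Polynomial.natDegree_sum_le_of_forall_le
      intro i _
      by_cases hi : c i = 0
      · simp [hi]
      · have h1 := hmax' i hi
        have h2 := hd i j
        calc _ ≤ (C (c i) * X ^ (d i0 - d i) : ℂ[X]).natDegree + (Q i j).natDegree :=
              Polynomial.natDegree_mul_le
          _ ≤ (d i0 - d i) + d i := add_le_add (Polynomial.natDegree_C_mul_X_pow_le _ _) h2
          _ = d i0 := by omega
    have hcoef : ∀ j, ((T * Q) i0 j).coeff (d i0) = 0 := by
      intro j
      rw [hrow, Polynomial.finsetSum_coeff]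
      have := congrFun hc j
      simp only [Matrix.vecMul, dotProduct, Matrix.of_apply, Pi.zero_apply] at this
      rw [← this]
      apply Finset.sum_congr rfl
      intro i _
      by_cases hi : c i = 0
      · simp [hi]
      · have h1 := hmax' i hi
        rw [mul_assoc, Polynomial.coeff_C_mul, Polynomial.coeff_X_pow_mul']
        rw [if_pos (by omega)]
        congr 2; omega
    have hdet' : (T * Q).det ≠ 0 := by
      rw [Matrix.det_mul, hTdet]
      exact mul_ne_zero (by simpa using hci0) hQ
    have hpos : 0 < d i0 := by
      by_contra h0
      have h0 : d i0 = 0 := by omega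
      apply hdet'
      apply Matrix.det_eq_zero_of_row_eq_zero i0
      intro j
      have h1 := hdeg j
      have h2 := hcoef j
      rw [h0] at h1 h2
      rw [Polynomial.eq_C_of_natDegree_le_zero h1, h2, C_0]
    have hdeg' : ∀ i j, ((T * Q) i j).natDegree ≤ Function.update d i0 (d i0 - 1) i := by
      intro i j
      by_cases hi : i = i0
      · subst hi
        rw [Function.update_self]
        have h1 := hdeg j
        have h2 := hcoef j
        by_contra hlt
        have h3 : ((T * Q) i j).natDegree = d i := by omega
        rw [← h3] at h2
        have h4 := Polynomial.leadingCoeff_eq_zero.1 h2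
        rw [h4] at h3
        simp at h3
        omega
      · rw [Function.update_of_ne hi, hrow' i hi]; exact hd i j
    have hsum : ∑ i, Function.update d i0 (d i0 - 1) i < N := by
      rw [← hN]
      apply Finset.sum_lt_sum
      · intro i _
        by_cases hi : i = i0
        · subst hi; simp
        · simp [hi]
      · exact ⟨i0, Finset.mem_univ _, by simp; omega⟩
    obtain ⟨U, d', h1, h2⟩ := ih _ hsum (T * Q) _ hdet' hdeg' rfl
    refine ⟨U * hTu.unit, d', ?_, ?_⟩
    · simpa [Matrix.mul_assoc] using h1
    · simpa [Matrix.mul_assoc] using h2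

open Polynomial in
lemma row_reduce {n : ℕ} (Q : Matrix (Fin n) (Fin n) ℂ[X]) (hQ : Q.det ≠ 0) :
    ∃ (U : (Matrix (Fin n) (Fin n) ℂ[X])ˣ) (d' : Fin n → ℕ),
      (∀ i j, (((U : Matrix (Fin n) (Fin n) ℂ[X]) * Q) i j).natDegree ≤ d' i) ∧
      IsUnit (Matrix.of fun i j => (((U : Matrix (Fin n) (Fin n) ℂ[X]) * Q) i j).coeff (d' i)) :=
  row_reduce_aux _ Q (fun i => Finset.univ.sup fun j => (Q i j).natDegree) hQ
    (fun i j => Finset.le_sup (f := fun j => (Q i j).natDegree) (Finset.mem_univ j)) rfl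

/-- Evaluation of a polynomial matrix. -/
noncomputable def evalM {n : ℕ} (z : ℂ) :
    Matrix (Fin n) (Fin n) (Polynomial ℂ) →+* Matrix (Fin n) (Fin n) ℂ :=
  (Polynomial.evalRingHom z).mapMatrix

lemma evalM_apply {n : ℕ} (z : ℂ) (Q : Matrix (Fin n) (Fin n) (Polynomial ℂ)) (i j : Fin n) :
    evalM z Q i j = (Q i j).eval z := rfl

lemma evalM_det {n : ℕ} (z : ℂ) (Q : Matrix (Fin n) (Fin n) (Polynomial ℂ)) :
    (evalM z Q).det = Q.det.eval z := by
  have := (Polynomial.evalRingHom z).map_det Q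
  simpa [evalM] using this.symm

lemma evalM_plus {n : ℕ} (Q : Matrix (Fin n) (Fin n) (Polynomial ℂ)) :
    MatIn plusAlg (fun z => evalM z Q) := fun i j => poly_mem_plus (Q i j)

/-! ### Removing zeros of the determinant in the disk -/

lemma dslope_mem_plus {g : ℂ → ℂ} (hg : g ∈ plusAlg) {a : ℂ} (ha : a ∈ ball (0 : ℂ) 1) :
    dslope g a ∈ plusAlg := by
  have hd : DifferentiableAt ℂ g a := hg.2.1.differentiableAt (isOpen_ball.mem_nhds ha)
  refine ⟨?_, ?_, ?_⟩
  · exact (continuousOn_dslope (closedBall_mem_nhds_of_mem ha)).2 ⟨hg.1, hd⟩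
  · exact (Complex.differentiableOn_dslope (isOpen_ball.mem_nhds ha)).2 hg.2.1
  · have hne : ∀ t, circleParam t - a ≠ 0 := by
      intro t h
      rw [sub_eq_zero] at h
      rw [← h] at ha
      simp [norm_circleParam] at ha
    have : (fun t => dslope g a (circleParam t)) =
        fun t => (circleParam t - a)⁻¹ * (g (circleParam t) - g a) := by
      ext t
      rw [dslope_of_ne _ (sub_ne_zero.1 (hne t)), slope_def_module, smul_eq_mul]
    rw [this]
    exact ((contDiff_circleParam.sub contDiff_const).inv hne).mul (hg.2.2.sub contDiff_const)

open Polynomial in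
lemma remove_zeros {n : ℕ} (k : ℕ) : ∀ (G : ℂ → Matrix (Fin n) (Fin n) ℂ) (q : ℂ[X]) (u : ℂ → ℂ),
    MatIn plusAlg G → u ∈ plusAlg → (∀ z ∈ closedBall (0 : ℂ) 1, u z ≠ 0) →
    (∀ z ∈ closedBall (0 : ℂ) 1, (G z).det = q.eval z * u z) →
    (∀ z : ℂ, ‖z‖ = 1 → q.eval z ≠ 0) → q.natDegree = k →
    ∃ (G' : ℂ → Matrix (Fin n) (Fin n) ℂ) (Q : Matrix (Fin n) (Fin n) ℂ[X]),
      MatIn plusAlg G' ∧ (∀ z ∈ closedBall (0 : ℂ) 1, IsUnit (G' z)) ∧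
      (∀ z : ℂ, 1 ≤ ‖z‖ → Q.det.eval z ≠ 0) ∧
      (∀ z ∈ closedBall (0 : ℂ) 1, G z = G' z * evalM z Q) := by
  induction k with
  | zero =>
    intro G q u hG hu hu0 hdet hq hk
    refine ⟨G, 1, hG, ?_, by simp, by simp⟩
    intro z hz
    apply isUnit_of_det
    rw [hdet z hz]
    apply mul_ne_zero _ (hu0 z hz)
    have h1 := hq 1 (by simp)
    rw [Polynomial.eq_C_of_natDegree_eq_zero hk] at h1 ⊢
    simpa using h1
  | succ k ih =>
    intro G q u hG hu hu0 hdet hq hk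
    by_cases hz : ∀ z ∈ closedBall (0 : ℂ) 1, q.eval z ≠ 0
    · refine ⟨G, 1, hG, ?_, by simp, by simp⟩
      intro z hz'
      apply isUnit_of_det
      rw [hdet z hz']
      exact mul_ne_zero (hz z hz') (hu0 z hz')
    push Not at hz
    obtain ⟨a, ha, hqa⟩ := hz
    have hab : a ∈ ball (0 : ℂ) 1 := by
      rw [mem_ball_zero_iff]
      rw [mem_closedBall_zero_iff] at ha
      exact lt_of_le_of_ne ha fun h => hq a h hqa
    obtain ⟨q', rfl⟩ := Polynomial.dvd_iff_isRoot.2 hqa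
    have hq'0 : q' ≠ 0 := by
      rintro rfl
      exact hq 1 (by simp) (by simp)
    have hk' : q'.natDegree = k := by
      rw [Polynomial.natDegree_mul (Polynomial.X_sub_C_ne_zero a) hq'0,
        Polynomial.natDegree_X_sub_C] at hk
      omega
    obtain ⟨v, hv0, hv⟩ := Matrix.exists_mulVec_eq_zero_iff.2
      (show (G a).det = 0 by rw [hdet a ha, hqa, zero_mul])
    obtain ⟨j0, hj0⟩ := Function.ne_iff.1 hv0
    have hj0 : v j0 ≠ 0 := hj0
    -- constant column operation
    set Cm : Matrix (Fin n) (Fin n) ℂ := ((1 : Matrix (Fin n) (Fin n) ℂ).updateRow j0 v).transpose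
      with hCm
    have hCdet : Cm.det = v j0 := by rw [hCm, Matrix.det_transpose, det_updateRow_one]
    have hCu : IsUnit Cm.det := by rw [hCdet]; exact isUnit_iff_ne_zero.2 hj0
    have hGC : MatIn plusAlg (fun z => G z * Cm) := hG.mul (MatIn.const _ Cm)
    have hcol : ∀ i, (G a * Cm) i j0 = 0 := by
      intro i
      have := congrFun hv i
      simpa [Matrix.mul_apply, hCm, Matrix.mulVec, dotProduct] using this
    set H : ℂ → Matrix (Fin n) (Fin n) ℂ := fun z => Matrix.of fun i j =>
      if j = j0 then dslope (fun z => (G z * Cm) i j0) a z else (G z * Cm) i j with hH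
    have hHp : MatIn plusAlg H := by
      intro i j
      by_cases hj : j = j0
      · simp only [hH, Matrix.of_apply, hj, if_true]
        exact dslope_mem_plus (hGC i j0) hab
      · simp only [hH, Matrix.of_apply, hj, if_false]
        exact hGC i j
    -- the diagonal factor
    set Dp : Matrix (Fin n) (Fin n) ℂ[X] :=
      Matrix.diagonal (fun j => if j = j0 then X - C a else 1) with hDp
    have hDdet : Dp.det = X - C a := by
      rw [hDp, Matrix.det_diagonal]; simp
    have hfac : ∀ z, G z * Cm = H z * evalM z Dp := by
      intro z
      ext i j
      have : evalM z Dp = Matrix.diagonal (fun j => if j = j0 then z - a else 1) := by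
        ext k l
        rw [evalM_apply, hDp, Matrix.diagonal_apply, Matrix.diagonal_apply]
        by_cases hkl : k = l
        · subst hkl; by_cases hk0 : k = j0 <;> simp [hk0]
        · simp [hkl]
      rw [this, Matrix.mul_diagonal]
      by_cases hj : j = j0
      · subst hj
        simp only [hH, Matrix.of_apply, if_true]
        have h1 := sub_smul_dslope (fun z => (G z * Cm) i j) a z
        simp only [hcol i, sub_zero, smul_eq_mul] at h1
        rw [mul_comm, h1]
      · simp [hH, hj]
    have hHdet : ∀ z ∈ closedBall (0 : ℂ) 1, (H z).det = q'.eval z * (v j0 * u z) := by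
      have hoff : ∀ z ∈ closedBall (0 : ℂ) 1, z ≠ a →
          (H z).det = q'.eval z * (v j0 * u z) := by
        intro z hz hza
        have h1 := congrArg Matrix.det (hfac z)
        rw [Matrix.det_mul, Matrix.det_mul, hdet z hz, hCdet, evalM_det, hDdet] at h1
        simp only [eval_mul, eval_sub, eval_X, eval_C] at h1
        have h2 : z - a ≠ 0 := sub_ne_zero.2 hza
        apply mul_right_cancel₀ h2
        rw [← h1]; ring
      intro z hz
      by_cases hza : z = a
      · subst hza
        have c1 : ContinuousAt (fun z => (H z).det) z :=
          hHp.det.1.continuousAt (closedBall_mem_nhds_of_mem hab)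
        have c2 : ContinuousAt (fun z => q'.eval z * (v j0 * u z)) z := by
          apply ContinuousAt.mul q'.continuous.continuousAt
          apply ContinuousAt.mul continuousAt_const
          exact hu.1.continuousAt (closedBall_mem_nhds_of_mem hab)
        have t1 := c1.tendsto.mono_left (nhdsWithin_le_nhds (s := {z}ᶜ))
        have t2 := c2.tendsto.mono_left (nhdsWithin_le_nhds (s := {z}ᶜ))
        refine tendsto_nhds_unique_of_eventuallyEq t1 t2 ?_
        filter_upwards [self_mem_nhdsWithin,
          nhdsWithin_le_nhds (closedBall_mem_nhds_of_mem hab)] with w hw1 hw2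
        exact hoff w hw2 hw1
      · exact hoff z hz hza
    obtain ⟨G', Q, h1, h2, h3, h4⟩ := ih H q' (fun z => v j0 * u z) hHp
      (plusAlg.mul_mem (const_mem _ _) hu) (fun z hz => mul_ne_zero hj0 (hu0 z hz)) hHdet
      (fun z hz h => hq z hz (by simp [h])) hk'
    have hCeval : ∀ z, evalM z ((Cm⁻¹).map C) = Cm⁻¹ := by
      intro z; ext i j; simp [evalM_apply]
    refine ⟨G', Q * Dp * (Cm⁻¹).map C, h1, h2, ?_, ?_⟩
    · intro z hz
      rw [← evalM_det, map_mul, map_mul, Matrix.det_mul, Matrix.det_mul, evalM_det, evalM_det,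
        hCeval, hDdet]
      refine mul_ne_zero (mul_ne_zero (h3 z hz) ?_) ?_
      · simp only [eval_sub, eval_X, eval_C]
        intro h
        rw [sub_eq_zero] at h
        rw [← h] at hab
        rw [mem_ball_zero_iff] at hab
        linarith
      · exact det_ne ((Matrix.isUnit_nonsing_inv_iff).2 ((Matrix.isUnit_iff_isUnit_det _).2 hCu))
    · intro z hz
      rw [map_mul, map_mul, hCeval, ← Matrix.mul_assoc, ← Matrix.mul_assoc, ← h4 z hz, ← hfac z,
        Matrix.mul_assoc, Matrix.mul_nonsing_inv _ hCu, Matrix.mul_one]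

/-! ### Fourier series -/

/-- Rapidly decreasing coefficient families. -/
def Rapid {E : Type*} [NormedAddCommGroup E] (c : ℤ → E) : Prop :=
  ∀ s : ℕ, Summable fun k : ℤ => ‖c k‖ * (1 + |(k : ℝ)|) ^ s

lemma Rapid.summable {E : Type*} [NormedAddCommGroup E] {c : ℤ → E} (hc : Rapid c) :
    Summable fun k => ‖c k‖ := by simpa using hc 0

lemma circleParam_zpow (t : ℝ) (k : ℤ) :
    circleParam t ^ k = Complex.exp (2 * Real.pi * Complex.I * k * t) := by
  unfold circleParam
  rw [← Complex.exp_int_mul]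
  congr 1; ring

lemma circleParam_periodic (t : ℝ) : circleParam (t + 1) = circleParam t := by
  unfold circleParam
  rw [show (2 * (Real.pi : ℂ) * Complex.I * ((t + 1 : ℝ) : ℂ)) =
    2 * Real.pi * Complex.I * t + 2 * Real.pi * Complex.I by push_cast; ring]
  exact Complex.exp_periodic _

/-- Fourier coefficients on the unit interval. -/
noncomputable def fc (g : ℝ → ℂ) (k : ℤ) : ℂ :=
  ∫ t in (0 : ℝ)..1, Complex.exp (-(2 * Real.pi * Complex.I * k) * t) * g t

lemma norm_exp_aux (k : ℤ) (t : ℝ) :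
    ‖Complex.exp (-(2 * Real.pi * Complex.I * k) * t)‖ = 1 := by
  rw [show -(2 * (Real.pi : ℂ) * Complex.I * k) * t =
    ((-(2 * Real.pi * k * t) : ℝ) : ℂ) * Complex.I by push_cast; ring,
    Complex.norm_exp_ofReal_mul_I]

lemma fc_bound {g : ℝ → ℂ} (hg : Continuous g) : ∃ C : ℝ, 0 ≤ C ∧ ∀ k, ‖fc g k‖ ≤ C := by
  obtain ⟨C, hC⟩ := isCompact_Icc (a := (0 : ℝ)) (b := 1) |>.exists_bound_of_continuousOn
    hg.continuousOn
  refine ⟨C, (norm_nonneg _).trans (hC 0 (by simp)), fun k => ?_⟩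
  have := intervalIntegral.norm_integral_le_of_norm_le_const (a := (0 : ℝ)) (b := 1) (C := C)
    (f := fun t : ℝ => Complex.exp (-(2 * Real.pi * Complex.I * k) * t) * g t) ?_
  · simpa [fc] using this
  · intro t ht
    rw [norm_mul, norm_exp_aux, one_mul]
    rw [Set.uIoc_of_le zero_le_one] at ht
    exact hC t ⟨ht.1.le, ht.2⟩

lemma fc_deriv {g : ℝ → ℂ} (hg : ContDiff ℝ (⊤ : ℕ∞) g) (hp : ∀ t, g (t + 1) = g t) (k : ℤ) :
    fc (deriv g) k = (2 * Real.pi * Complex.I * k) * fc g k := by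
  have hd : Differentiable ℝ g := hg.differentiable (by simp)
  have hc : Continuous (deriv g) := hg.continuous_deriv (by simp)
  have hu : ∀ t : ℝ, HasDerivAt
      (fun t : ℝ => Complex.exp (-(2 * Real.pi * Complex.I * k) * t))
      (-(2 * Real.pi * Complex.I * k) * Complex.exp (-(2 * Real.pi * Complex.I * k) * t)) t := by
    intro t
    have h1 : HasDerivAt (fun t : ℝ => -(2 * Real.pi * Complex.I * k) * (t : ℂ))
        (-(2 * Real.pi * Complex.I * k)) t := by
      simpa using (Complex.ofRealCLM.hasDerivAt (x := t)).const_mul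
        (-(2 * Real.pi * Complex.I * k))
    have := h1.cexp
    rwa [mul_comm (Complex.exp _)] at this
  have key := intervalIntegral.integral_mul_deriv_eq_deriv_mul (a := (0 : ℝ)) (b := 1)
    (fun t _ => hu t) (fun t _ => (hd t).hasDerivAt)
    (Continuous.intervalIntegrable (by fun_prop) _ _) (hc.intervalIntegrable _ _)
  unfold fc
  rw [key]
  have h1 : g 1 = g 0 := by simpa using hp 0
  have h2 : Complex.exp (-(2 * Real.pi * Complex.I * k) * ((1 : ℝ) : ℂ)) = 1 := by
    rw [Complex.exp_eq_one_iff]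
    exact ⟨-k, by push_cast; ring⟩
  rw [h1, h2]
  simp only [mul_assoc, neg_mul]
  simp

lemma fc_decay (s : ℕ) : ∀ g : ℝ → ℂ, ContDiff ℝ (⊤ : ℕ∞) g → (∀ t, g (t + 1) = g t) →
    ∃ C : ℝ, 0 ≤ C ∧ ∀ k : ℤ, |(k : ℝ)| ^ s * ‖fc g k‖ ≤ C := by
  induction s with
  | zero => intro g hg _; simpa using fc_bound hg.continuous
  | succ s ih =>
    intro g hg hp
    have hg' : ContDiff ℝ (⊤ : ℕ∞) (deriv g) := by
      have := (contDiff_infty_iff_deriv).1 hg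
      exact this.2
    have hp' : ∀ t, deriv g (t + 1) = deriv g t := by
      intro t
      rw [← deriv_comp_add_const]
      congr 1; funext x; exact hp x
    obtain ⟨C, hC0, hC⟩ := ih _ hg' hp'
    refine ⟨C, hC0, fun k => ?_⟩
    refine le_trans ?_ (hC k)
    rw [fc_deriv hg hp, pow_succ, mul_assoc]
    gcongr
    rw [norm_mul]
    gcongr
    simp only [norm_mul, Complex.norm_I, Complex.norm_real, Complex.norm_intCast, mul_one]
    have : (1 : ℝ) ≤ ‖(2 : ℂ)‖ * ‖Real.pi‖ := by
      rw [Real.norm_of_nonneg Real.pi_pos.le]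
      have := Real.pi_gt_three
      norm_num; linarith
    nlinarith [abs_nonneg (k : ℝ)]

lemma summable_weight : Summable fun k : ℤ => ((1 + |(k : ℝ)|) ^ 2)⁻¹ := by
  have h : Summable fun n : ℕ => ((1 + (n : ℝ)) ^ 2)⁻¹ := by
    have := (summable_nat_add_iff 1).2 (Real.summable_nat_pow_inv.2 (show 1 < 2 by norm_num))
    refine this.congr fun n => ?_
    push_cast; rw [add_comm]
  apply Summable.of_nat_of_neg <;> simpa using h

lemma fc_rapid {g : ℝ → ℂ} (hg : ContDiff ℝ (⊤ : ℕ∞) g) (hp : ∀ t, g (t + 1) = g t) :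
    Rapid (fc g) := by
  intro s
  obtain ⟨C0, hC00, hC0⟩ := fc_decay 0 g hg hp
  obtain ⟨C, hC1, hC⟩ := fc_decay (s + 2) g hg hp
  refine Summable.of_nonneg_of_le (fun k => by positivity) (fun k => ?_)
    (summable_weight.mul_left (2 ^ (s + 2) * (C0 + C)))
  rw [← div_eq_mul_inv, le_div_iff₀ (by positivity), mul_assoc, ← pow_add]
  have hx := abs_nonneg (k : ℝ)
  have h1 : (1 + |(k : ℝ)|) ^ (s + 2) ≤ 2 ^ (s + 2) * (1 + |(k : ℝ)| ^ (s + 2)) := by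
    rcases le_total |(k : ℝ)| 1 with h | h
    · calc (1 + |(k : ℝ)|) ^ (s + 2) ≤ 2 ^ (s + 2) := by gcongr; linarith
        _ ≤ _ := by
          have : 0 ≤ |(k : ℝ)| ^ (s + 2) := by positivity
          nlinarith [pow_pos (two_pos (α := ℝ)) (s + 2)]
    · calc (1 + |(k : ℝ)|) ^ (s + 2) ≤ (2 * |(k : ℝ)|) ^ (s + 2) := by gcongr; linarith
        _ = 2 ^ (s + 2) * |(k : ℝ)| ^ (s + 2) := mul_pow _ _ _
        _ ≤ _ := by gcongr; linarith
  have h2 := hC0 k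
  have h3 := hC k
  rw [pow_zero, one_mul] at h2
  calc ‖fc g k‖ * (1 + |(k : ℝ)|) ^ (s + 2)
      ≤ ‖fc g k‖ * (2 ^ (s + 2) * (1 + |(k : ℝ)| ^ (s + 2))) := by gcongr
    _ = 2 ^ (s + 2) * (‖fc g k‖ + |(k : ℝ)| ^ (s + 2) * ‖fc g k‖) := by ring
    _ ≤ _ := by gcongr

lemma fc_hasSum {g : ℝ → ℂ} (hg : ContDiff ℝ (⊤ : ℕ∞) g) (hp : ∀ t, g (t + 1) = g t) (t : ℝ) :
    HasSum (fun k : ℤ => fc g k * circleParam t ^ k) (g t) := by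
  have hper : Function.Periodic g 1 := hp
  have : Fact ((0 : ℝ) < 1) := ⟨one_pos⟩
  set G : C(AddCircle (1 : ℝ), ℂ) := ⟨hper.lift, by
    exact hg.continuous.quotient_lift _⟩ with hG
  have hco : ∀ k, fourierCoeff (G : AddCircle (1 : ℝ) → ℂ) k = fc g k := by
    intro k
    rw [fourierCoeff_eq_intervalIntegral _ k 0]
    simp only [zero_add, div_one, one_smul, fc]
    apply intervalIntegral.integral_congr
    intro x _
    simp only [fourier_coe_apply, smul_eq_mul]
    congr 2
    push_cast; ring
  have hs : Summable (fourierCoeff (G : AddCircle (1 : ℝ) → ℂ)) := by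
    have h1 : Summable (fc g) := (fc_rapid hg hp).summable.of_norm
    exact h1.congr fun k => (hco k).symm
  have := has_pointwise_sum_fourier_series_of_summable hs (t : AddCircle (1 : ℝ))
  have h2 : G (t : AddCircle (1 : ℝ)) = g t := rfl
  rw [h2] at this
  refine this.congr_fun ?_ |> id
  intro k
  rw [hco, fourier_coe_apply, circleParam_zpow, smul_eq_mul]
  congr 2
  push_cast; ring

lemma iteratedDeriv_exp_aux (c a : ℂ) (m : ℕ) :
    iteratedDeriv m (fun t : ℝ => c * Complex.exp (a * t)) =
      fun t : ℝ => c * a ^ m * Complex.exp (a * t) := by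
  induction m with
  | zero => simp
  | succ m ih =>
    rw [iteratedDeriv_succ, ih]
    funext t
    have h1 : HasDerivAt (fun t : ℝ => a * (t : ℂ)) a t := by
      simpa using (Complex.ofRealCLM.hasDerivAt (x := t)).const_mul a
    have := (h1.cexp.const_mul (c * a ^ m)).deriv
    rw [this]; ring

lemma series_contDiff {c : ℤ → ℂ} (hc : Rapid c) :
    ContDiff ℝ (⊤ : ℕ∞) fun t : ℝ => ∑' k : ℤ, c k * circleParam t ^ k := by
  simp only [circleParam_zpow]
  refine contDiff_tsum (v := fun m k => (2 * Real.pi) ^ m * (‖c k‖ * (1 + |(k : ℝ)|) ^ m))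
    ?_ (fun m _ => (hc m).mul_left _) ?_
  · intro k
    apply contDiff_const.mul
    apply ContDiff.cexp
    apply contDiff_const.mul
    exact Complex.ofRealCLM.contDiff
  · intro m k t _
    rw [norm_iteratedFDeriv_eq_norm_iteratedDeriv, iteratedDeriv_exp_aux]
    have : ‖Complex.exp (2 * Real.pi * Complex.I * k * t)‖ = 1 := by
      have := norm_exp_aux (-k) t
      push_cast at this
      rw [← this]; congr 2; ring
    rw [norm_mul, norm_mul, this, mul_one, norm_pow]
    simp only [norm_mul, Complex.norm_I, Complex.norm_real, Complex.norm_intCast, mul_one,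
      Complex.norm_ofNat, Real.norm_of_nonneg Real.pi_pos.le]
    rw [mul_pow]
    have : |(k : ℝ)| ^ m ≤ (1 + |(k : ℝ)|) ^ m := by gcongr; linarith
    calc ‖c k‖ * ((2 * Real.pi) ^ m * |(k : ℝ)| ^ m)
        = (2 * Real.pi) ^ m * (‖c k‖ * |(k : ℝ)| ^ m) := by ring
      _ ≤ _ := by
        have := Real.pi_pos
        gcongr

lemma series_plus {c : ℤ → ℂ} (hc : Rapid c) (h0 : ∀ k < 0, c k = 0) :
    (fun z : ℂ => ∑' k : ℤ, c k * z ^ k) ∈ plusAlg := by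
  have hb : ∀ (k : ℤ) (z : ℂ), z ∈ closedBall (0 : ℂ) 1 → ‖c k * z ^ k‖ ≤ ‖c k‖ := by
    intro k z hz
    rcases lt_or_ge k 0 with hk | hk
    · simp [h0 k hk]
    · rw [norm_mul, norm_zpow]
      refine mul_le_of_le_one_right (norm_nonneg _) ?_
      lift k to ℕ using hk
      rw [zpow_natCast]
      exact pow_le_one₀ (norm_nonneg _) (by simpa using hz)
  have hd : ∀ k : ℤ, Differentiable ℂ fun z : ℂ => c k * z ^ k := by
    intro k
    rcases lt_or_ge k 0 with hk | hk
    · simp [h0 k hk]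
    · lift k to ℕ using hk
      simp only [zpow_natCast]
      fun_prop
  refine ⟨?_, ?_, series_contDiff hc⟩
  · exact continuousOn_tsum (fun k => (hd k).continuous.continuousOn) hc.summable hb
  · exact Complex.differentiableOn_tsum_of_summable_norm hc.summable
      (fun k => (hd k).differentiableOn) isOpen_ball
      (fun k z hz => hb k z (ball_subset_closedBall hz))

lemma series_minus {c : ℤ → ℂ} (hc : Rapid c) (h0 : ∀ k, 0 ≤ k → c k = 0) :
    (fun z : ℂ => ∑' k : ℤ, c k * z ^ k) ∈ minusAlg ∧
    Tendsto (fun z : ℂ => ∑' k : ℤ, c k * z ^ k) (comap (fun z : ℂ => ‖z‖) atTop) (nhds 0) := by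
  have hb : ∀ (k : ℤ) (z : ℂ), 1 ≤ ‖z‖ → ‖c k * z ^ k‖ ≤ ‖c k‖ * ‖z‖⁻¹ := by
    intro k z hz
    rcases lt_or_ge k 0 with hk | hk
    · rw [norm_mul, norm_zpow]
      gcongr
      rw [← zpow_neg_one]
      exact zpow_le_zpow_right₀ hz (by omega)
    · simp [h0 k hk]
  have hb' : ∀ (k : ℤ) (z : ℂ), 1 ≤ ‖z‖ → ‖c k * z ^ k‖ ≤ ‖c k‖ := by
    intro k z hz
    exact (hb k z hz).trans (mul_le_of_le_one_right (norm_nonneg _) (inv_le_one_of_one_le₀ hz))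
  have hd : ∀ (k : ℤ) (z : ℂ), 1 ≤ ‖z‖ → DifferentiableAt ℂ (fun z : ℂ => c k * z ^ k) z := by
    intro k z hz
    have hz0 : z ≠ 0 := by rintro rfl; simp at hz; linarith
    exact (differentiableAt_zpow.2 (Or.inl hz0)).const_mul _
  refine ⟨⟨?_, ?_, series_contDiff hc⟩, ?_⟩
  · exact continuousOn_tsum (fun k z hz => (hd k z hz).continuousAt.continuousWithinAt)
      hc.summable hb'
  · exact Complex.differentiableOn_tsum_of_summable_norm hc.summable
      (fun k z hz => (hd k z (le_of_lt hz)).differentiableWithinAt)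
      (isOpen_lt continuous_const continuous_norm) (fun k z hz => hb' k z (le_of_lt hz))
  · have ht : Tendsto (fun z : ℂ => (∑' k, ‖c k‖) * ‖z‖⁻¹) (comap (fun z : ℂ => ‖z‖) atTop)
        (nhds 0) := by
      have := (tendsto_inv_atTop_zero (𝕜 := ℝ)).comp
        (tendsto_comap (f := fun z : ℂ => ‖z‖) (x := atTop))
      simpa using this.const_mul (∑' k, ‖c k‖)
    refine squeeze_zero_norm' ?_ ht
    filter_upwards [preimage_mem_comap (Ici_mem_atTop (1 : ℝ))] with z hz
    have hz : 1 ≤ ‖z‖ := hz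
    rw [← tsum_mul_right]
    exact tsum_of_norm_bounded (hc.summable.mul_right _).hasSum fun k => hb k z hz

/-! ### Wiener algebra factorization of a perturbation of the identity -/

section wiener
set_option linter.unusedSectionVars false
variable {A : Type*} [NormedRing A] [NormedAlgebra ℂ A] [CompleteSpace A]

/-- Convolution of coefficient families. -/
noncomputable def conv (a b : ℤ → A) (m : ℤ) : A := ∑' k, a (m - k) * b k

/-- The reindexing `(m, k) ↦ (m - k, k)`. -/
def shear : ℤ × ℤ ≃ ℤ × ℤ where
  toFun p := (p.1 - p.2, p.2)
  invFun p := (p.1 + p.2, p.2)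
  left_inv p := by simp
  right_inv p := by simp

/-- Submultiplicative weights. -/
structure IsWeight (w : ℤ → ℝ) : Prop where
  one_le : ∀ k, 1 ≤ w k
  mul_le : ∀ j k, w (j + k) ≤ w j * w k

lemma IsWeight.summable {E : Type*} [NormedAddCommGroup E] {w : ℤ → ℝ} (hw : IsWeight w)
    {a : ℤ → E} (ha : Summable fun k => ‖a k‖ * w k) : Summable fun k => ‖a k‖ :=
  ha.of_nonneg_of_le (fun _ => norm_nonneg _)
    fun k => le_mul_of_one_le_right (norm_nonneg _) (hw.one_le k)

lemma IsWeight.pos {w : ℤ → ℝ} (hw : IsWeight w) (k : ℤ) : 0 < w k :=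
  lt_of_lt_of_le one_pos (hw.one_le k)

lemma conv_weight {w : ℤ → ℝ} (hw : IsWeight w) {a b : ℤ → A}
    (ha : Summable fun k => ‖a k‖ * w k) (hb : Summable fun k => ‖b k‖ * w k) :
    (Summable fun m => ‖conv a b m‖ * w m) ∧
    ∑' m, ‖conv a b m‖ * w m ≤ (∑' k, ‖a k‖ * w k) * ∑' k, ‖b k‖ * w k := by
  have hpos := hw.pos
  have hF : Summable fun p : ℤ × ℤ => (‖a p.1‖ * w p.1) * (‖b p.2‖ * w p.2) :=
    ha.mul_of_nonneg hb (fun k => by have := hpos k; positivity)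
      (fun k => by have := hpos k; positivity)
  have hF' : Summable fun p : ℤ × ℤ => (‖a (p.1 - p.2)‖ * w (p.1 - p.2)) * (‖b p.2‖ * w p.2) :=
    shear.summable_iff.2 hF
  have hle : ∀ m k, ‖a (m - k) * b k‖ * w m ≤
      (‖a (m - k)‖ * w (m - k)) * (‖b k‖ * w k) := by
    intro m k
    have h1 := hw.mul_le (m - k) k
    rw [sub_add_cancel] at h1
    calc ‖a (m - k) * b k‖ * w m ≤ (‖a (m - k)‖ * ‖b k‖) * (w (m - k) * w k) := by
          have := hpos m
          gcongr
          exact norm_mul_le _ _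
      _ = _ := by ring
  have hs : ∀ m, Summable fun k => (‖a (m - k)‖ * w (m - k)) * (‖b k‖ * w k) :=
    fun m => hF'.prod_factor m
  have hb1 : ∀ m, ‖conv a b m‖ * w m ≤ ∑' k, (‖a (m - k)‖ * w (m - k)) * (‖b k‖ * w k) := by
    intro m
    have h1 : Summable fun k => ‖a (m - k) * b k‖ * w m :=
      (hs m).of_nonneg_of_le (fun k => by have := hpos m; positivity) (hle m)
    have h2 : Summable fun k => ‖a (m - k) * b k‖ := by
      have := h1.mul_right (w m)⁻¹
      refine this.congr fun k => ?_
      rw [mul_assoc, mul_inv_cancel₀ (hpos m).ne', mul_one]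
    calc ‖conv a b m‖ * w m ≤ (∑' k, ‖a (m - k) * b k‖) * w m := by
          have := hpos m
          gcongr
          exact norm_tsum_le_tsum_norm h2
      _ = ∑' k, ‖a (m - k) * b k‖ * w m := tsum_mul_right.symm
      _ ≤ _ := h1.tsum_le_tsum (hle m) (hs m)
  have hs2 := hF'.prod
  have hsum : Summable fun m => ‖conv a b m‖ * w m :=
    hs2.of_nonneg_of_le (fun m => by have := hpos m; positivity) hb1
  refine ⟨hsum, ?_⟩
  calc _ ≤ ∑' m, ∑' k, (‖a (m - k)‖ * w (m - k)) * (‖b k‖ * w k) := hsum.tsum_le_tsum hb1 hs2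
    _ = ∑' p : ℤ × ℤ, (‖a (p.1 - p.2)‖ * w (p.1 - p.2)) * (‖b p.2‖ * w p.2) :=
        (hF'.tsum_prod' (fun m => hs m)).symm
    _ = ∑' p : ℤ × ℤ, (‖a p.1‖ * w p.1) * (‖b p.2‖ * w p.2) := shear.tsum_eq (fun p : ℤ × ℤ =>
        (‖a p.1‖ * w p.1) * (‖b p.2‖ * w p.2))
    _ = _ := (ha.tsum_mul_tsum hb hF).symm

/-- Laurent series. -/
noncomputable def lser (a : ℤ → A) (z : ℂ) : A := ∑' k, z ^ k • a k

lemma norm_term {z : ℂ} (hz : ‖z‖ = 1) (a : ℤ → A) (k : ℤ) : ‖z ^ k • a k‖ = ‖a k‖ := by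
  rw [norm_smul, norm_zpow, hz, one_zpow, one_mul]

lemma term_summable {z : ℂ} (hz : ‖z‖ = 1) {a : ℤ → A} (ha : Summable fun k => ‖a k‖) :
    Summable fun k => z ^ k • a k := by
  apply Summable.of_norm
  simpa only [norm_term hz] using ha

lemma summable_of_smul {ι : Type*} {c : ℂ} (hc : c ≠ 0) {f : ι → A}
    (hf : Summable fun k => c • f k) : Summable f := by
  refine (hf.const_smul c⁻¹).congr fun k => ?_
  rw [smul_smul, inv_mul_cancel₀ hc, one_smul]

lemma summable_shear {f : ℤ → ℤ → A} (h : Summable fun p : ℤ × ℤ => f p.1 p.2) :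
    Summable fun p : ℤ × ℤ => f (p.1 - p.2) p.2 := shear.summable_iff.2 h

lemma tsum_shear (f : ℤ → ℤ → A) :
    ∑' p : ℤ × ℤ, f (p.1 - p.2) p.2 = ∑' p : ℤ × ℤ, f p.1 p.2 :=
  shear.tsum_eq (fun p : ℤ × ℤ => f p.1 p.2)

lemma lser_conv0 {z : ℂ} (hz0 : z ≠ 0) {a b : ℤ → A} 
  (hs : Summable fun p : ℤ × ℤ => (z ^ p.1 • a p.1) * (z ^ p.2 • b p.2)) :
   lser (conv a b) z =  ∑' p : ℤ × ℤ, (z ^ p.1 • a p.1) * (z ^ p.2 • b p.2) := by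
  have hs2 : Summable fun p : ℤ × ℤ => (z ^ (p.1 - p.2) • a (p.1 - p.2)) * (z ^ p.2 • b p.2) :=
    summable_shear (f := fun j k : ℤ => (z ^ j • a j) * (z ^ k • b k)) hs
  have e1 : ∑' p : ℤ × ℤ, (z ^ p.1 • a p.1) * (z ^ p.2 • b p.2) =
      ∑' p : ℤ × ℤ, (z ^ (p.1 - p.2) • a (p.1 - p.2)) * (z ^ p.2 • b p.2) :=
    (tsum_shear (fun j k : ℤ => (z ^ j • a j) * (z ^ k • b k))).symm
  rw [e1, hs2.tsum_prod]
  refine tsum_congr fun m => ?_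
  unfold conv
  have hterm : ∀ k, (z ^ (m - k) • a (m - k)) * (z ^ k • b k) = z ^ m • (a (m - k) * b k) := by
    intro k
    rw [smul_mul_smul_comm, ← zpow_add₀ hz0, sub_add_cancel]
  have h3 : Summable fun k => z ^ m • (a (m - k) * b k) := by
    have h4 : Summable fun k => (z ^ (m - k) • a (m - k)) * (z ^ k • b k) := hs2.prod_factor m
    exact h4.congr fun k => hterm k
  have h5 : Summable fun k => a (m - k) * b k := summable_of_smul (zpow_ne_zero m hz0) h3
  rw [← h5.tsum_const_smul (z ^ m)]
  exact tsum_congr fun k => (hterm k).symm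

lemma norm_term_summable {z : ℂ} (hz : ‖z‖ = 1) {a : ℤ → A} (ha : Summable fun k => ‖a k‖) :
    Summable fun k => ‖z ^ k • a k‖ := ha.congr fun k => (norm_term hz a k).symm

lemma mul_aux {u v : ℤ → A} (hu : Summable fun k => ‖u k‖) (hv : Summable fun k => ‖v k‖) :
    (Summable fun p : ℤ × ℤ => u p.1 * v p.2) ∧
     (∑' k, u k) * ∑' k, v k = ∑' p : ℤ × ℤ, u p.1 * v p.2 :=
  ⟨summable_mul_of_summable_norm hu hv, tsum_mul_tsum_of_summable_norm hu hv⟩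

lemma lser_conv {z : ℂ} (hz : ‖z‖ = 1) {a b : ℤ → A} (ha : Summable fun k => ‖a k‖)
    (hb : Summable fun k => ‖b k‖) : lser (conv a b) z = lser a z * lser b z := by
  have hz0 : z ≠ 0 := by
    intro h
    rw [h, norm_zero] at hz
    exact zero_ne_one hz
  have h := mul_aux (norm_term_summable hz ha) (norm_term_summable hz hb)
  rw [lser_conv0 hz0 h.1]
  exact h.2.symm

/-- Negative part of a coefficient family. -/
def negp (a : ℤ → A) (k : ℤ) : A := if k < 0 then a k else 0
/-- Nonnegative part of a coefficient family. -/
def posp (a : ℤ → A) (k : ℤ) : A := if k < 0 then 0 else a k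

lemma norm_negp (a : ℤ → A) (k : ℤ) : ‖negp a k‖ ≤ ‖a k‖ := by
  unfold negp; split_ifs <;> simp

lemma norm_posp (a : ℤ → A) (k : ℤ) : ‖posp a k‖ ≤ ‖a k‖ := by
  unfold posp; split_ifs <;> simp

/-- The Picard iterates (differences): pairs of negative and nonnegative parts. -/
noncomputable def iter (e : ℤ → A) : ℕ → ℤ → A
  | 0 => e
  | (j + 1) => conv (fun k => - negp (iter e j) k) e

lemma iter_weight {w : ℤ → ℝ} (hw : IsWeight w) {e : ℤ → A}
    (he : Summable fun k => ‖e k‖ * w k) (j : ℕ) :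
    (Summable fun m => ‖iter e j m‖ * w m) ∧
    ∑' m, ‖iter e j m‖ * w m ≤ (∑' k, ‖e k‖ * w k) ^ (j + 1) := by
  have hpos := hw.pos
  induction j with
  | zero => exact ⟨he, by simp [iter]⟩
  | succ j ih =>
    have hle : ∀ k, ‖-negp (iter e j) k‖ * w k ≤ ‖iter e j k‖ * w k := by
      intro k
      have := hpos k
      rw [norm_neg]
      gcongr
      exact norm_negp _ _
    have hs : Summable fun k => ‖-negp (iter e j) k‖ * w k :=
      ih.1.of_nonneg_of_le (fun k => by have := hpos k; positivity) hle
    have h := conv_weight hw hs he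
    refine ⟨h.1, h.2.trans ?_⟩
    rw [pow_succ]
    have h0 : 0 ≤ ∑' k, ‖e k‖ * w k := tsum_nonneg fun k => by have := hpos k; positivity
    gcongr
    exact (hs.tsum_le_tsum hle ih.1).trans ih.2

lemma sum_iter_weight {w : ℤ → ℝ} (hw : IsWeight w) {e : ℤ → A}
    (he : Summable fun k => ‖e k‖ * w k) (hq : ∑' k, ‖e k‖ * w k < 1)
    (y : ℕ → ℤ → A) (hy : ∀ j k, ‖y j k‖ ≤ ‖iter e j k‖) :
    (Summable fun p : ℕ × ℤ => ‖y p.1 p.2‖ * w p.2) ∧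
    (Summable fun k => ‖∑' j, y j k‖ * w k) ∧
    ∑' k, ‖∑' j, y j k‖ * w k ≤ (∑' k, ‖e k‖ * w k) * (1 - ∑' k, ‖e k‖ * w k)⁻¹ := by
  have hpos := hw.pos
  set q := ∑' k, ‖e k‖ * w k with hqdef
  have h0 : 0 ≤ q := tsum_nonneg fun k => by have := hpos k; positivity
  have hle : ∀ j k, ‖y j k‖ * w k ≤ ‖iter e j k‖ * w k := by
    intro j k; have := hpos k; have := hy j k; gcongr
  have hs : ∀ j, Summable fun k => ‖y j k‖ * w k := fun j =>
    (iter_weight hw he j).1.of_nonneg_of_le (fun k => by have := hpos k; positivity) (hle j)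
  have hb : ∀ j, ∑' k, ‖y j k‖ * w k ≤ q ^ (j + 1) := fun j =>
    ((hs j).tsum_le_tsum (hle j) (iter_weight hw he j).1).trans (iter_weight hw he j).2
  have hgeo : HasSum (fun j : ℕ => q ^ (j + 1)) (q * (1 - q)⁻¹) := by
    simpa only [pow_succ'] using (hasSum_geometric_of_lt_one h0 hq).mul_left q
  have hP : Summable fun p : ℕ × ℤ => ‖y p.1 p.2‖ * w p.2 := by
    rw [summable_prod_of_nonneg (fun p => by have := hpos p.2; positivity)]
    exact ⟨hs, hgeo.summable.of_nonneg_of_le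
      (fun j => tsum_nonneg fun k => by have := hpos k; positivity) hb⟩
  have hP' : Summable fun p : ℤ × ℕ => ‖y p.2 p.1‖ * w p.1 := hP.prod_symm
  have hb1 : ∀ k, ‖∑' j, y j k‖ * w k ≤ ∑' j, ‖y j k‖ * w k := by
    intro k
    have h1 : Summable fun j => ‖y j k‖ * w k := hP'.prod_factor k
    have h2 : Summable fun j => ‖y j k‖ := by
      refine (h1.mul_right (w k)⁻¹).congr fun j => ?_
      rw [mul_assoc, mul_inv_cancel₀ (hpos k).ne', mul_one]
    rw [tsum_mul_right]
    have := hpos k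
    gcongr
    exact norm_tsum_le_tsum_norm h2
  have hS : Summable fun k => ‖∑' j, y j k‖ * w k :=
    hP'.prod.of_nonneg_of_le (fun k => by have := hpos k; positivity) hb1
  refine ⟨hP, hS, ?_⟩
  calc _ ≤ ∑' k, ∑' j, ‖y j k‖ * w k := hS.tsum_le_tsum hb1 hP'.prod
    _ = ∑' j, ∑' k, ‖y j k‖ * w k := hP.tsum_comm
    _ ≤ ∑' j, q ^ (j + 1) := hP.prod.tsum_le_tsum hb hgeo.summable
    _ = _ := hgeo.tsum_eq

lemma isWeight_one : IsWeight (fun _ => 1) := ⟨fun _ => le_rfl, fun _ _ => by simp⟩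

lemma isWeight_pow {ε : ℝ} (hε : 0 ≤ ε) (s : ℕ) :
    IsWeight (fun k : ℤ => (1 + ε * |(k : ℝ)|) ^ s) := by
  refine ⟨fun k => one_le_pow₀ (by have := abs_nonneg (k : ℝ); nlinarith), fun j k => ?_⟩
  rw [← mul_pow]
  have h1 := abs_add_le (j : ℝ) (k : ℝ)
  have h2 := abs_nonneg (j : ℝ)
  have h3 := abs_nonneg (k : ℝ)
  push_cast
  have h4 := abs_nonneg ((j : ℝ) + k)
  gcongr
  nlinarith [mul_le_mul_of_nonneg_left h1 hε, mul_nonneg (mul_nonneg hε h2) (mul_nonneg hε h3)]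

lemma exists_eps {e : ℤ → A} (he : Rapid e) (hq : ∑' k, ‖e k‖ < 1) (s : ℕ) :
    ∃ ε : ℝ, 0 < ε ∧ ε ≤ 1 ∧ (Summable fun k : ℤ => ‖e k‖ * (1 + ε * |(k : ℝ)|) ^ s) ∧
      ∑' k : ℤ, ‖e k‖ * (1 + ε * |(k : ℝ)|) ^ s < 1 := by
  have hle : ∀ ε : ℝ, 0 < ε → ε ≤ 1 → ∀ k : ℤ,
      ‖e k‖ * (1 + ε * |(k : ℝ)|) ^ s ≤ ‖e k‖ * (1 + |(k : ℝ)|) ^ s := by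
    intro ε h0 h1 k
    have := abs_nonneg (k : ℝ)
    gcongr
    nlinarith
  have hev : ∀ᶠ ε : ℝ in nhdsWithin 0 (Set.Ioi 0), 0 < ε ∧ ε ≤ 1 := by
    filter_upwards [self_mem_nhdsWithin,
      nhdsWithin_le_nhds (Iic_mem_nhds (zero_lt_one' ℝ))] with ε h1 h2 using ⟨h1, h2⟩
  have ht : Tendsto (fun ε : ℝ => ∑' k : ℤ, ‖e k‖ * (1 + ε * |(k : ℝ)|) ^ s)
      (nhdsWithin 0 (Set.Ioi 0)) (nhds (∑' k : ℤ, ‖e k‖)) := by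
    refine tendsto_tsum_of_dominated_convergence (he s) ?_ ?_
    · intro k
      have : Continuous fun ε : ℝ => ‖e k‖ * (1 + ε * |(k : ℝ)|) ^ s := by fun_prop
      have := this.tendsto 0
      simp only [zero_mul, add_zero, one_pow, mul_one] at this
      exact this.mono_left nhdsWithin_le_nhds
    · filter_upwards [hev] with ε hε k
      rw [Real.norm_of_nonneg (by have := hε.1; positivity)]
      exact hle ε hε.1 hε.2 k
  obtain ⟨ε, ⟨h1, h2⟩, h3⟩ := (hev.and (ht.eventually (gt_mem_nhds hq))).exists
  exact ⟨ε, h1, h2, (he s).of_nonneg_of_le (fun k => by positivity) (hle ε h1 h2), h3⟩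

lemma rapid_sum_iter {e : ℤ → A} (he : Rapid e) (hq : ∑' k, ‖e k‖ < 1)
    (y : ℕ → ℤ → A) (hy : ∀ j k, ‖y j k‖ ≤ ‖iter e j k‖) : Rapid fun k => ∑' j, y j k := by
  intro s
  obtain ⟨ε, h0, h1, hs, hlt⟩ := exists_eps he hq s
  have h := (sum_iter_weight (isWeight_pow h0.le s) hs hlt y hy).2.1
  refine (h.mul_left (ε⁻¹ ^ s)).of_nonneg_of_le (fun k => by positivity) fun k => ?_
  have h2 : (1 + |(k : ℝ)|) ^ s ≤ ε⁻¹ ^ s * (1 + ε * |(k : ℝ)|) ^ s := by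
    rw [← mul_pow]
    have := abs_nonneg (k : ℝ)
    gcongr
    rw [mul_add, mul_one, ← mul_assoc, inv_mul_cancel₀ h0.ne', one_mul]
    gcongr
    exact (one_le_inv₀ h0).2 h1
  calc _ ≤ ‖∑' j, y j k‖ * (ε⁻¹ ^ s * (1 + ε * |(k : ℝ)|) ^ s) := by gcongr
    _ = _ := by ring

lemma lser_exchange {z : ℂ} (hz : ‖z‖ = 1) (y : ℕ → ℤ → A)
    (hy : Summable fun p : ℕ × ℤ => ‖y p.1 p.2‖) :
    (Summable fun j => lser (y j) z) ∧
    lser (fun k => ∑' j, y j k) z = ∑' j, lser (y j) z := by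
  have hz0 : z ≠ 0 := by rintro rfl; simp at hz
  have h1 : Summable fun p : ℕ × ℤ => z ^ p.2 • y p.1 p.2 := by
    apply Summable.of_norm
    refine hy.congr fun p => ?_
    exact (norm_term hz (y p.1) p.2).symm
  refine ⟨h1.prod, ?_⟩
  have h2 : ∑' k : ℤ, ∑' j : ℕ, z ^ k • y j k = ∑' j : ℕ, ∑' k : ℤ, z ^ k • y j k :=
    Summable.tsum_comm (f := fun (j : ℕ) (k : ℤ) => z ^ k • y j k) h1
  unfold lser
  rw [← h2]
  refine tsum_congr fun k => ?_
  have h3 : Summable fun j => z ^ k • y j k := h1.prod_symm.prod_factor k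
  exact ((summable_of_smul (zpow_ne_zero k hz0) h3).tsum_const_smul (z ^ k)).symm

theorem wiener_factor {e : ℤ → A} (he : Rapid e) (hq : ∑' k, ‖e k‖ ≤ 1 / 3) :
    ∃ x y : ℤ → A, Rapid x ∧ Rapid y ∧ (∀ k, 0 ≤ k → x k = 0) ∧ (∀ k < 0, y k = 0) ∧
      ∑' k, ‖x k‖ < 1 ∧ ∑' k, ‖y k‖ < 1 ∧
      ∀ z : ℂ, ‖z‖ = 1 → (1 + lser x z) * (1 + lser e z) = 1 + lser y z := by
  have hq1 : ∑' k, ‖e k‖ < 1 := by linarith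
  set d : ℕ → ℤ → A := fun j k => - negp (iter e j) k with hd
  set r : ℕ → ℤ → A := fun j k => posp (iter e j) k with hr
  have hdle : ∀ j k, ‖d j k‖ ≤ ‖iter e j k‖ := fun j k => by
    rw [hd, norm_neg]; exact norm_negp _ _
  have hrle : ∀ j k, ‖r j k‖ ≤ ‖iter e j k‖ := fun j k => norm_posp _ _
  have he1 : Summable fun k => ‖e k‖ * 1 := by simpa using he.summable
  have hq1' : ∑' k, ‖e k‖ * 1 < 1 := by simpa using hq1
  have Dd := sum_iter_weight isWeight_one he1 hq1' d hdle
  have Dr := sum_iter_weight isWeight_one he1 hq1' r hrle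
  simp only [mul_one] at Dd Dr
  have h0 : 0 ≤ ∑' k, ‖e k‖ := tsum_nonneg fun k => norm_nonneg _
  have hlt : (∑' k, ‖e k‖) * (1 - ∑' k, ‖e k‖)⁻¹ < 1 := by
    rw [← div_eq_mul_inv, div_lt_one (by linarith)]; linarith
  refine ⟨fun k => ∑' j, d j k, fun k => ∑' j, r j k, rapid_sum_iter he hq1 d hdle,
    rapid_sum_iter he hq1 r hrle, ?_, ?_, Dd.2.2.trans_lt hlt, Dr.2.2.trans_lt hlt, ?_⟩
  · intro k hk
    simp [hd, negp, not_lt.2 hk]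
  · intro k hk
    simp [hr, posp, hk]
  · intro z hz
    obtain ⟨sd, ed⟩ := lser_exchange hz d Dd.1
    obtain ⟨sr, er⟩ := lser_exchange hz r Dr.1
    have hsum : ∀ j, Summable fun k => ‖iter e j k‖ := fun j => by
      simpa using (iter_weight isWeight_one he1 j).1
    have hsd : ∀ j, Summable fun k => ‖d j k‖ := fun j =>
      (hsum j).of_nonneg_of_le (fun _ => norm_nonneg _) (hdle j)
    have hsr : ∀ j, Summable fun k => ‖r j k‖ := fun j =>
      (hsum j).of_nonneg_of_le (fun _ => norm_nonneg _) (hrle j)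
    have hsplit : ∀ j, lser (iter e j) z = lser (r j) z - lser (d j) z := by
      intro j
      unfold lser
      rw [← (term_summable hz (hsr j)).tsum_sub (term_summable hz (hsd j))]
      congr 1; funext k
      rw [← smul_sub]
      congr 1
      simp only [hd, hr, negp, posp]
      split_ifs <;> simp
    have hstep : ∀ j, lser (d j) z * lser e z = lser (r (j + 1)) z - lser (d (j + 1)) z := by
      intro j
      rw [← hsplit (j + 1), ← lser_conv hz (hsd j) he.summable]
      rfl
    have hmul : (∑' j, lser (d j) z) * lser e z =
        (∑' j, lser (r (j + 1)) z) - ∑' j, lser (d (j + 1)) z := by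
      rw [← sd.tsum_mul_right]
      simp only [hstep]
      exact ((summable_nat_add_iff 1).2 sr).tsum_sub ((summable_nat_add_iff 1).2 sd)
    have h00 : lser e z = lser (r 0) z - lser (d 0) z := hsplit 0
    rw [ed, er]
    have t1 := sd.tsum_eq_zero_add
    have t2 := sr.tsum_eq_zero_add
    have : (1 + ∑' j, lser (d j) z) * (1 + lser e z) =
        1 + lser e z + ∑' j, lser (d j) z + (∑' j, lser (d j) z) * lser e z := by noncomm_ring
    rw [this, hmul, h00, t1, t2]
    abel

end wiener

/-! ### Approximation by trigonometric polynomials -/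

section approx
set_option linter.unusedSectionVars false
variable {A : Type*} [NormedRing A] [NormedAlgebra ℂ A] [CompleteSpace A]

lemma exists_trunc {a : ℤ → A} (ha : Rapid a) {ε : ℝ} (hε : 0 < ε) :
    ∃ (S : Finset ℤ) (b : ℤ → A), Rapid b ∧ ∑' k, ‖b k‖ < ε ∧
      ∀ k, a k + b k = if k ∈ S then a k else 0 := by
  have ht := tendsto_tsum_compl_atTop_zero (fun k => ‖a k‖)
  obtain ⟨S, hS⟩ := (ht.eventually (gt_mem_nhds hε)).exists
  refine ⟨S, fun k => if k ∈ S then 0 else - a k, ?_, ?_, ?_⟩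
  · intro s
    refine (ha s).of_nonneg_of_le (fun k => by positivity) fun k => ?_
    gcongr
    by_cases hk : k ∈ S <;> simp [hk]
  · refine lt_of_eq_of_lt ?_ hS
    have := tsum_subtype {x | x ∉ S} (fun k => ‖a k‖)
    refine Eq.trans ?_ this.symm
    refine tsum_congr fun k => ?_
    by_cases hk : k ∈ S <;> simp [Set.indicator, hk]
  · intro k
    by_cases hk : k ∈ S <;> simp [hk]

lemma rapid_conv {a b : ℤ → A} (ha : Rapid a) (hb : Rapid b) :
    Rapid (conv a b) ∧ ∑' k, ‖conv a b k‖ ≤ (∑' k, ‖a k‖) * ∑' k, ‖b k‖ := by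
  constructor
  · intro s
    have h := (conv_weight (a := a) (b := b) (isWeight_pow zero_le_one s)
      (by simpa only [one_mul] using ha s) (by simpa only [one_mul] using hb s)).1
    simpa only [one_mul] using h
  · have h := (conv_weight (a := a) (b := b) isWeight_one
      (by simpa only [mul_one] using ha.summable) (by simpa only [mul_one] using hb.summable)).2
    simpa only [mul_one] using h

lemma wiener_loop {a g : ℤ → A} (ha : Rapid a) (hg : Rapid g)
    (h : ∀ z : ℂ, ‖z‖ = 1 → lser a z * lser g z = 1) :
    ∃ (S : Finset ℤ) (x y : ℤ → A), Rapid x ∧ Rapid y ∧ (∀ k, 0 ≤ k → x k = 0) ∧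
      (∀ k < 0, y k = 0) ∧ ∑' k, ‖x k‖ < 1 ∧ ∑' k, ‖y k‖ < 1 ∧
      ∀ z : ℂ, ‖z‖ = 1 → ∃ E : A, lser a z * E = ∑ k ∈ S, z ^ k • a k ∧
        (1 + lser x z) * E = 1 + lser y z := by
  have hg0 : 0 ≤ ∑' k, ‖g k‖ := tsum_nonneg fun k => norm_nonneg _
  have hε : 0 < (1 / 3) / (1 + ∑' k, ‖g k‖) := by positivity
  obtain ⟨S, b, hb, hbε, hab⟩ := exists_trunc ha hε
  obtain ⟨he, hen⟩ := rapid_conv hg hb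
  have hq : ∑' k, ‖conv g b k‖ ≤ 1 / 3 := by
    refine hen.trans ?_
    have hb0 : 0 ≤ ∑' k, ‖b k‖ := tsum_nonneg fun k => norm_nonneg _
    rw [lt_div_iff₀ (by positivity)] at hbε
    nlinarith
  obtain ⟨x, y, hx, hy, hx0, hy0, hx1, hy1, hxy⟩ := wiener_factor he hq
  refine ⟨S, x, y, hx, hy, hx0, hy0, hx1, hy1, fun z hz => ⟨1 + lser (conv g b) z, ?_, hxy z hz⟩⟩
  rw [lser_conv hz hg.summable hb.summable, mul_add, mul_one, ← mul_assoc, h z hz, one_mul]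
  have h1 : lser a z + lser b z = ∑' k, z ^ k • (a k + b k) := by
    unfold lser
    rw [← (term_summable hz ha.summable).tsum_add (term_summable hz hb.summable)]
    exact tsum_congr fun k => (smul_add _ _ _).symm
  rw [h1, tsum_eq_sum (s := S)]
  · refine Finset.sum_congr rfl fun k hk => ?_
    rw [hab, if_pos hk]
  · intro k hk
    rw [hab, if_neg hk, smul_zero]

lemma lser_bound {z : ℂ} {a : ℤ → A} (ha : Summable fun k => ‖a k‖)
    (h : ∀ k, ‖z ^ k • a k‖ ≤ ‖a k‖) :
    (Summable fun k => z ^ k • a k) ∧ ‖lser a z‖ ≤ ∑' k, ‖a k‖ := by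
  have h1 : Summable fun k => ‖z ^ k • a k‖ := ha.of_nonneg_of_le (fun _ => norm_nonneg _) h
  exact ⟨h1.of_norm, (norm_tsum_le_tsum_norm h1).trans (h1.tsum_le_tsum h ha)⟩

lemma bound_minus {z : ℂ} (hz : 1 ≤ ‖z‖) {a : ℤ → A} (h0 : ∀ k, 0 ≤ k → a k = 0) (k : ℤ) :
    ‖z ^ k • a k‖ ≤ ‖a k‖ := by
  by_cases hk : 0 ≤ k
  · simp [h0 k hk]
  · rw [norm_smul, norm_zpow]
    exact mul_le_of_le_one_left (norm_nonneg _) (zpow_le_one_of_nonpos₀ hz (by omega))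

lemma bound_plus {z : ℂ} (hz : ‖z‖ ≤ 1) {a : ℤ → A} (h0 : ∀ k < 0, a k = 0) (k : ℤ) :
    ‖z ^ k • a k‖ ≤ ‖a k‖ := by
  by_cases hk : k < 0
  · simp [h0 k hk]
  · obtain ⟨m, rfl⟩ := Int.eq_ofNat_of_zero_le (not_lt.1 hk)
    rw [norm_smul, norm_zpow, zpow_natCast]
    exact mul_le_of_le_one_left (norm_nonneg _) (pow_le_one₀ (norm_nonneg _) hz)

lemma isUnit_one_add {t : A} (ht : ‖t‖ < 1) : IsUnit (1 + t) := by
  have := isUnit_one_sub_of_norm_lt_one (x := -t) (by rwa [norm_neg])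
  rwa [sub_neg_eq_add] at this

end approx

section matrixLoop
attribute [local instance] Matrix.linftyOpNormedRing Matrix.linftyOpNormedAlgebra

variable {n : ℕ}

lemma norm_entry (M : Matrix (Fin n) (Fin n) ℂ) (i j : Fin n) : ‖M i j‖ ≤ ‖M‖ := by
  have h1 : ‖M i j‖ ≤ ∑ l, ‖M i l‖ :=
    Finset.single_le_sum (f := fun l => ‖M i l‖) (fun _ _ => norm_nonneg _) (Finset.mem_univ j)
  refine h1.trans ?_
  rw [Matrix.linfty_opNorm_def]
  have := Finset.le_sup (f := fun i => ∑ j, ‖M i j‖₊) (Finset.mem_univ i)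
  have h2 : ((∑ j, ‖M i j‖₊ : NNReal) : ℝ) ≤ _ := NNReal.coe_le_coe.2 this
  simpa using h2

lemma norm_le_sum (M : Matrix (Fin n) (Fin n) ℂ) : ‖M‖ ≤ ∑ i, ∑ j, ‖M i j‖ := by
  rw [Matrix.linfty_opNorm_def]
  have : (Finset.univ.sup fun i => ∑ j, ‖M i j‖₊) ≤ ∑ i, ∑ j, ‖M i j‖₊ :=
    Finset.sup_le fun i hi => Finset.single_le_sum (f := fun i => ∑ j, ‖M i j‖₊)
      (fun _ _ => zero_le) hi
  have h2 := NNReal.coe_le_coe.2 this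
  simpa using h2

lemma rapid_of_entries {a : ℤ → Matrix (Fin n) (Fin n) ℂ}
    (h : ∀ i j, Rapid fun k => a k i j) : Rapid a := by
  intro s
  have h1 : Summable fun k : ℤ => ∑ i, ∑ j, ‖a k i j‖ * (1 + |(k : ℝ)|) ^ s :=
    summable_sum fun i _ => summable_sum fun j _ => h i j s
  refine h1.of_nonneg_of_le (fun k => by positivity) fun k => ?_
  calc _ ≤ (∑ i, ∑ j, ‖a k i j‖) * (1 + |(k : ℝ)|) ^ s := by
        gcongr; exact norm_le_sum _
    _ = _ := by simp only [Finset.sum_mul]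

lemma Rapid.entry {a : ℤ → Matrix (Fin n) (Fin n) ℂ} (h : Rapid a) (i j : Fin n) :
    Rapid fun k => a k i j := fun s =>
  (h s).of_nonneg_of_le (fun k => by positivity) fun k => by
    gcongr; exact norm_entry _ _ _

lemma continuous_entry (i j : Fin n) : Continuous fun M : Matrix (Fin n) (Fin n) ℂ => M i j :=
  continuous_id.matrix_elem i j

lemma lser_entry {a : ℤ → Matrix (Fin n) (Fin n) ℂ} {z : ℂ}
    (h : Summable fun k => z ^ k • a k) (i j : Fin n) :
    lser a z i j = ∑' k, a k i j * z ^ k := by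
  have h1 := h.hasSum.map (Matrix.entryAddMonoidHom ℂ i j) (continuous_entry i j)
  have h2 := h1.tsum_eq
  simp only [Function.comp_def, Matrix.entryAddMonoidHom_apply, Matrix.smul_apply,
    smul_eq_mul] at h2
  exact h2.symm.trans (tsum_congr fun k => mul_comm _ _)

/-- Matrix Fourier coefficients. -/
noncomputable def mfc (f : ℂ → Matrix (Fin n) (Fin n) ℂ) (k : ℤ) : Matrix (Fin n) (Fin n) ℂ :=
  Matrix.of fun i j => fc (fun t => f (circleParam t) i j) k

lemma mfc_rapid {f : ℂ → Matrix (Fin n) (Fin n) ℂ}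
    (hfs : ∀ i j, ContDiff ℝ (⊤ : ℕ∞) fun t : ℝ => f (circleParam t) i j) : Rapid (mfc f) :=
  rapid_of_entries fun i j => fc_rapid (hfs i j) fun t => by rw [circleParam_periodic]

lemma mfc_lser {f : ℂ → Matrix (Fin n) (Fin n) ℂ}
    (hfs : ∀ i j, ContDiff ℝ (⊤ : ℕ∞) fun t : ℝ => f (circleParam t) i j)
    {z : ℂ} (hz : ‖z‖ = 1) : lser (mfc f) z = f z := by
  obtain ⟨t, rfl⟩ := exists_circleParam z hz
  have hs := term_summable hz (mfc_rapid hfs).summable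
  refine Matrix.ext fun i j => ?_
  rw [lser_entry hs i j]
  exact (fc_hasSum (hfs i j) (fun t => by rw [circleParam_periodic]) t).tsum_eq

lemma smooth_inv {f : ℂ → Matrix (Fin n) (Fin n) ℂ}
    (hfu : ∀ z : ℂ, ‖z‖ = 1 → IsUnit (f z))
    (hfs : ∀ i j, ContDiff ℝ (⊤ : ℕ∞) fun t : ℝ => f (circleParam t) i j) (i j : Fin n) :
    ContDiff ℝ (⊤ : ℕ∞) fun t : ℝ => (f (circleParam t))⁻¹ i j := by
  have hdet : ∀ G : ℝ → Matrix (Fin n) (Fin n) ℂ,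
      (∀ i j, ContDiff ℝ (⊤ : ℕ∞) fun t : ℝ => G t i j) →
      ContDiff ℝ (⊤ : ℕ∞) fun t : ℝ => (G t).det := by
    intro G hG
    simp only [Matrix.det_apply']
    exact ContDiff.sum fun σ _ => contDiff_const.mul (contDiff_prod fun k _ => hG _ _)
  simp only [inv_eq, Matrix.smul_apply, smul_eq_mul]
  refine ((hdet _ hfs).inv fun t => det_ne (hfu _ (norm_circleParam t))).mul ?_
  simp only [Matrix.adjugate_apply]
  apply hdet
  intro k l
  by_cases h : k = j
  · subst h; simpa using contDiff_const
  · simpa [Matrix.updateRow_ne h] using hfs k l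

lemma loop_approx {f : ℂ → Matrix (Fin n) (Fin n) ℂ}
    (hfu : ∀ z : ℂ, ‖z‖ = 1 → IsUnit (f z))
    (hfs : ∀ i j, ContDiff ℝ (⊤ : ℕ∞) fun t : ℝ => f (circleParam t) i j) :
    ∃ (X Y : ℂ → Matrix (Fin n) (Fin n) ℂ) (S : Finset ℤ) (a : ℤ → Matrix (Fin n) (Fin n) ℂ),
      MatIn minusAlg X ∧ (∀ z : ℂ, 1 ≤ ‖z‖ → IsUnit (X z)) ∧
      (∀ i j, Tendsto (fun z => X z i j) (comap (fun z : ℂ => ‖z‖) atTop)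
        (nhds ((1 : Matrix (Fin n) (Fin n) ℂ) i j))) ∧
      MatIn plusAlg Y ∧ (∀ z ∈ closedBall (0 : ℂ) 1, IsUnit (Y z)) ∧
      ∀ z : ℂ, ‖z‖ = 1 → f z = (∑ k ∈ S, z ^ k • a k) * (Y z)⁻¹ * X z := by
  have ha := mfc_rapid hfs
  have hfs' := smooth_inv hfu hfs
  have hg := mfc_rapid (f := fun z => (f z)⁻¹) hfs'
  obtain ⟨S, x, y, hx, hy, hx0, hy0, hx1, hy1, hxy⟩ := wiener_loop ha hg (by
    intro z hz
    rw [mfc_lser hfs hz, mfc_lser (f := fun z => (f z)⁻¹) hfs' hz]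
    exact Matrix.mul_nonsing_inv _ ((Matrix.isUnit_iff_isUnit_det _).1 (hfu z hz)))
  -- entries of the two series
  have bm : ∀ z : ℂ, 1 ≤ ‖z‖ → _ := fun z hz => lser_bound hx.summable (bound_minus hz hx0)
  have bp : ∀ z : ℂ, ‖z‖ ≤ 1 → _ := fun z hz => lser_bound hy.summable (bound_plus hz hy0)
  have xs : ∀ i j, _ := fun i j => series_minus (hx.entry i j) (fun k hk => by simp [hx0 k hk])
  have ys : ∀ i j, _ := fun i j => series_plus (hy.entry i j) (fun k hk => by simp [hy0 k hk])
  -- we use the entrywise series as the definition, so that they agree everywhere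
  let X₀ : ℂ → Matrix (Fin n) (Fin n) ℂ := fun z => Matrix.of fun i j => ∑' k : ℤ, x k i j * z ^ k
  let Y₀ : ℂ → Matrix (Fin n) (Fin n) ℂ := fun z => Matrix.of fun i j => ∑' k : ℤ, y k i j * z ^ k
  have hX₀ : ∀ z : ℂ, 1 ≤ ‖z‖ → X₀ z = lser x z := fun z hz =>
    Matrix.ext fun i j => (lser_entry (bm z hz).1 i j).symm
  have hY₀ : ∀ z : ℂ, ‖z‖ ≤ 1 → Y₀ z = lser y z := fun z hz =>
    Matrix.ext fun i j => (lser_entry (bp z hz).1 i j).symm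
  have uX : ∀ z : ℂ, 1 ≤ ‖z‖ → IsUnit (1 + X₀ z) := fun z hz => by
    rw [hX₀ z hz]; exact isUnit_one_add ((bm z hz).2.trans_lt hx1)
  have uY : ∀ z : ℂ, ‖z‖ ≤ 1 → IsUnit (1 + Y₀ z) := fun z hz => by
    rw [hY₀ z hz]; exact isUnit_one_add ((bp z hz).2.trans_lt hy1)
  refine ⟨fun z => 1 + X₀ z, fun z => 1 + Y₀ z, S, mfc f,
    (MatIn.const _ 1).add fun i j => (xs i j).1, uX, ?_,
    (MatIn.const _ 1).add fun i j => ys i j, fun z hz => uY z (by simpa using hz), ?_⟩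
  · intro i j
    have := (tendsto_const_nhds (x := (1 : Matrix (Fin n) (Fin n) ℂ) i j)).add (xs i j).2
    rw [add_zero] at this
    exact this
  · intro z hz
    obtain ⟨E, h1, h2⟩ := hxy z hz
    rw [mfc_lser hfs hz] at h1
    rw [← hX₀ z hz.ge, ← hY₀ z hz.le] at h2
    have hdX := (Matrix.isUnit_iff_isUnit_det _).1 (uX z hz.ge)
    have hdY := (Matrix.isUnit_iff_isUnit_det _).1 (uY z hz.le)
    have hE : E * ((1 + Y₀ z)⁻¹ * (1 + X₀ z)) = 1 := by
      have h3 : ((1 + Y₀ z)⁻¹ * (1 + X₀ z)) * E = 1 := by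
        rw [mul_assoc, h2, Matrix.nonsing_inv_mul _ hdY]
      exact mul_eq_one_comm.1 h3
    rw [← h1, mul_assoc, mul_assoc, hE, mul_one]

end matrixLoop

/-! ### Existence -/

section existence
open Polynomial
variable {n : ℕ}

lemma inv_poly_mem_minus (p : ℂ[X]) : (fun z : ℂ => p.eval z⁻¹) ∈ minusAlg := by
  induction p using Polynomial.induction_on' with
  | add p q hp hq => simp only [Polynomial.eval_add]; exact minusAlg.add_mem hp hq
  | monomial n a =>
    simp only [Polynomial.eval_monomial]
    exact minusAlg.mul_mem (const_mem minusAlg a) (minusAlg.pow_mem inv_mem_minus n)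

lemma eval_reflect (p : ℂ[X]) (d : ℕ) (hp : p.natDegree ≤ d) {z : ℂ} (hz : z ≠ 0) :
    z ^ d * (reflect d p).eval z⁻¹ = p.eval z := by
  have : Invertible z := invertibleOfNonzero hz
  have h := eval₂_reflect_mul_pow (RingHom.id ℂ) z d p hp
  rw [invOf_eq_inv] at h
  simp only [eval₂_id] at h
  rw [mul_comm]; exact h

lemma exists_shift (S : Finset ℤ) : ∃ M : ℕ, ∀ k ∈ S, 0 ≤ k + M := by
  refine ⟨S.sup Int.natAbs, fun k hk => ?_⟩
  have := Finset.le_sup (f := Int.natAbs) hk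
  omega

/-- Clearing the negative powers of a trigonometric matrix polynomial. -/
lemma exists_poly (S : Finset ℤ) (a : ℤ → Matrix (Fin n) (Fin n) ℂ) :
    ∃ (M : ℕ) (P : Matrix (Fin n) (Fin n) ℂ[X]),
      ∀ z : ℂ, z ≠ 0 → evalM z P = z ^ M • ∑ k ∈ S, z ^ k • a k := by
  obtain ⟨M, hM⟩ := exists_shift S
  refine ⟨M, Matrix.of fun i j => ∑ k ∈ S, monomial (k + M).toNat (a k i j), fun z hz => ?_⟩
  ext i j
  rw [evalM_apply, Matrix.of_apply, eval_finsetSum, Matrix.smul_apply, Matrix.sum_apply,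
    smul_eq_mul, Finset.mul_sum]
  refine Finset.sum_congr rfl fun k hk => ?_
  have h1 : z ^ (k + M).toNat = z ^ M * z ^ k := by
    rw [← zpow_natCast z (k + M).toNat, Int.toNat_of_nonneg (hM k hk), zpow_add₀ hz, zpow_natCast,
      mul_comm]
  rw [eval_monomial, Matrix.smul_apply, smul_eq_mul, h1]
  ring

lemma exists_unsorted {f : ℂ → Matrix (Fin n) (Fin n) ℂ}
    (hfu : ∀ z : ℂ, ‖z‖ = 1 → IsUnit (f z))
    (hfs : ∀ i j, ContDiff ℝ (⊤ : ℕ∞) fun t : ℝ => f (circleParam t) i j) :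
    ∃ κ Fp Fm L, SmoothBirkhoffFactorization n f κ Fp Fm L := by
  obtain ⟨X, Y, S, a, hX, uX, tX, hY, uY, hf⟩ := loop_approx hfu hfs
  obtain ⟨M, P, hP⟩ := exists_poly S a
  have hz0 : ∀ z : ℂ, 1 ≤ ‖z‖ → z ≠ 0 := by
    rintro z hz rfl
    rw [norm_zero] at hz
    linarith
  have hfP : ∀ z : ℂ, ‖z‖ = 1 → z ^ M • f z = evalM z P * (Y z)⁻¹ * X z := by
    intro z hz
    rw [hP z (hz0 z hz.ge), hf z hz, Matrix.smul_mul, Matrix.smul_mul]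
  have hPdet : ∀ z : ℂ, ‖z‖ = 1 → P.det.eval z ≠ 0 := by
    intro z hz h0
    have h1 := congrArg Matrix.det (hfP z hz)
    rw [Matrix.det_smul, Matrix.det_mul, Matrix.det_mul, evalM_det, h0, zero_mul, zero_mul] at h1
    exact mul_ne_zero (pow_ne_zero _ (pow_ne_zero _ (hz0 z hz.ge))) (det_ne (hfu z hz)) h1
  obtain ⟨G, Q, hG, uG, hQ, hGQ⟩ := remove_zeros P.det.natDegree
    (fun z => evalM z P * (Y z)⁻¹) P.det (fun z => ((Y z).det)⁻¹)
    ((evalM_plus P).mul (hY.inv_plus uY)) (plusAlg_inv hY.det fun z hz => det_ne (uY z hz))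
    (fun z hz => inv_ne_zero (det_ne (uY z hz)))
    (fun z hz => by
      rw [Matrix.det_mul, evalM_det, Matrix.det_nonsing_inv, Ring.inverse_eq_inv'])
    hPdet rfl
  have hQ0 : Q.det ≠ 0 := by
    intro h
    apply hQ 1 (by simp)
    rw [h, eval_zero]
  obtain ⟨U, d, hd, hlead⟩ := row_reduce Q hQ0
  set R : Matrix (Fin n) (Fin n) ℂ[X] := (U : Matrix (Fin n) (Fin n) ℂ[X]) * Q with hR
  set T : Matrix (Fin n) (Fin n) ℂ[X] := Matrix.of fun i j => reflect (d i) (R i j) with hT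
  have hUR : Q = (↑U⁻¹ : Matrix (Fin n) (Fin n) ℂ[X]) * R := by
    rw [hR, ← mul_assoc, Units.inv_mul, one_mul]
  have hTR : ∀ z : ℂ, z ≠ 0 → Matrix.diagonal (fun i => z ^ d i) * evalM z⁻¹ T = evalM z R := by
    intro z hz
    ext i j
    rw [Matrix.diagonal_mul, evalM_apply, evalM_apply, hT, Matrix.of_apply]
    exact eval_reflect _ _ (hd i j) hz
  have uU : ∀ z, IsUnit (evalM z (↑U⁻¹ : Matrix (Fin n) (Fin n) ℂ[X])) := fun z =>
    (U⁻¹).isUnit.map (evalM z)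
  have uT : ∀ z : ℂ, 1 ≤ ‖z‖ → IsUnit (evalM z⁻¹ T) := by
    intro z hz
    apply isUnit_of_det
    intro h0
    have h1 : (evalM z Q).det = 0 := by
      rw [hUR, map_mul, ← hTR z (hz0 z hz), Matrix.det_mul, Matrix.det_mul, h0, mul_zero, mul_zero]
    rw [evalM_det] at h1
    exact hQ z hz h1
  have hTm : MatIn minusAlg fun z => evalM z⁻¹ T := by
    intro i j
    simp only [evalM_apply]
    exact inv_poly_mem_minus _
  have tT : Tendsto (fun z : ℂ => evalM z⁻¹ T) (comap (fun z : ℂ => ‖z‖) atTop)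
      (nhds (Matrix.of fun i j => (R i j).coeff (d i))) := by
    rw [tendsto_mat]
    intro i j
    have h1 : Tendsto (fun z : ℂ => z⁻¹) (comap (fun z : ℂ => ‖z‖) atTop) (nhds 0) := by
      rw [comap_norm_atTop]
      exact tendsto_inv₀_cobounded
    have h2 := ((T i j).continuous.tendsto 0).comp h1
    have h3 : (T i j).eval 0 = (R i j).coeff (d i) := by
      rw [← coeff_zero_eq_eval_zero, hT, Matrix.of_apply, coeff_reflect]
      simp [revAt_le]
    rw [h3] at h2
    simpa only [evalM_apply, Matrix.of_apply, Function.comp_def] using h2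
  have hFp : MatIn plusAlg fun z => G z * evalM z (↑U⁻¹ : Matrix (Fin n) (Fin n) ℂ[X]) :=
    hG.mul (evalM_plus _)
  have hFm : MatIn minusAlg fun z => evalM z⁻¹ T * X z := hTm.mul hX
  refine ⟨fun i => (d i : ℤ) - M, fun z => G z * evalM z (↑U⁻¹ : Matrix (Fin n) (Fin n) ℂ[X]),
    fun z => evalM z⁻¹ T * X z, Matrix.of fun i j => (R i j).coeff (d i),
    fun i j => (hFp i j).1, fun i j => (hFp i j).2.1, fun z hz => (uG z hz).mul (uU z),
    fun i j => (hFp i j).2.2, fun i j => (hFm i j).1, fun i j => (hFm i j).2.1,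
    fun z hz => (uT z hz).mul (uX z hz), fun i j => (hFm i j).2.2, hlead, ?_, ?_⟩
  · have h1 := tT.mul (tendsto_mat.2 tX)
    rw [mul_one] at h1
    exact tendsto_mat.1 h1
  · intro z hz
    have hzz := hz0 z hz.ge
    have hzM : z ^ M ≠ 0 := pow_ne_zero _ hzz
    have hdiag : z ^ M • Matrix.diagonal (fun i => z ^ ((d i : ℤ) - M)) =
        Matrix.diagonal (fun i => z ^ d i) := by
      rw [← Matrix.diagonal_smul]
      congr 1
      funext i
      rw [Pi.smul_apply, smul_eq_mul, zpow_sub₀ hzz, zpow_natCast, zpow_natCast]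
      field_simp
    have key : z ^ M • f z = z ^ M • (G z * evalM z (↑U⁻¹ : Matrix (Fin n) (Fin n) ℂ[X]) *
        Matrix.diagonal (fun i => z ^ ((d i : ℤ) - M)) * (evalM z⁻¹ T * X z)) := by
      rw [hfP z hz, hGQ z (by simp [hz]), ← Matrix.smul_mul, ← Matrix.mul_smul, hdiag,
        hUR, map_mul, ← hTR z hzz]
      simp only [mul_assoc]
    exact smul_right_injective _ hzM key

lemma exists_sorted {f : ℂ → Matrix (Fin n) (Fin n) ℂ}
    (hfu : ∀ z : ℂ, ‖z‖ = 1 → IsUnit (f z))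
    (hfs : ∀ i j, ContDiff ℝ (⊤ : ℕ∞) fun t : ℝ => f (circleParam t) i j) :
    ∃ κ : Fin n → ℤ, Antitone κ ∧ ∃ Fp Fm L, SmoothBirkhoffFactorization n f κ Fp Fm L := by
  obtain ⟨κ, Fp, Fm, L, h1, h2, h3, h4, h5, h6, h7, h8, h9, h10, h11⟩ := exists_unsorted hfu hfs
  set σ : Equiv.Perm (Fin n) := Tuple.sort fun i => - κ i with hσ
  have hmono := Tuple.monotone_sort fun i => - κ i
  refine ⟨κ ∘ σ, fun i j hij => ?_, fun z => (Fp z).submatrix (Equiv.refl _) σ,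
    fun z => (Fm z).submatrix σ (Equiv.refl _), L.submatrix σ (Equiv.refl _),
    fun i j => h1 _ _, fun i j => h2 _ _, fun z hz => ?_, fun i j => h4 _ _,
    fun i j => h5 _ _, fun i j => h6 _ _, fun z hz => ?_, fun i j => h8 _ _, ?_,
    fun i j => h10 _ _, fun z hz => ?_⟩
  · have := hmono hij
    simp only [Function.comp] at this ⊢
    rw [← hσ] at this
    omega
  · exact (Matrix.isUnit_submatrix_equiv _ _).2 (h3 z hz)
  · exact (Matrix.isUnit_submatrix_equiv _ _).2 (h7 z hz)
  · exact (Matrix.isUnit_submatrix_equiv _ _).2 h9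
  · have hdg : Matrix.diagonal (fun i => z ^ (κ ∘ σ) i) =
        (Matrix.diagonal fun i => z ^ κ i).submatrix σ σ := by
      rw [Matrix.submatrix_diagonal_equiv]
      rfl
    rw [hdg, Matrix.submatrix_mul_equiv, Matrix.submatrix_mul_equiv, h11 z hz]
    simp

end existence

end Birkhoff

/-- Every smooth loop `f : 𝕊 → GL_n(ℂ)` admits a Birkhoff decomposition
`f = F₊ · diag(z^{κ₁},…,z^{κ_n}) · F₋` with decreasing integer partial indices
`κ₁ ≥ ⋯ ≥ κ_n`, and the tuple of partial indices is uniquely determined by `f`. -/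
theorem stmt_4 (n : ℕ) (f : ℂ → Matrix (Fin n) (Fin n) ℂ)
    (hfu : ∀ z : ℂ, ‖z‖ = 1 → IsUnit (f z))
    (hfs : ∀ i j, ContDiff ℝ (⊤ : ℕ∞) fun t : ℝ => f (circleParam t) i j) :
    ∃ κ : Fin n → ℤ, Antitone κ ∧
      (∃ Fp Fm L, SmoothBirkhoffFactorization n f κ Fp Fm L) ∧
      ∀ κ' : Fin n → ℤ, Antitone κ' →
        (∃ Fp Fm L, SmoothBirkhoffFactorization n f κ' Fp Fm L) → κ' = κ := by
  obtain ⟨κ, hκ, Fp, Fm, L, hF⟩ := Birkhoff.exists_sorted hfu hfs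
  refine ⟨κ, hκ, ⟨Fp, Fm, L, hF⟩, ?_⟩
  rintro κ' hκ' ⟨Gp, Gm, L', hG⟩
  funext m
  exact le_antisymm (Birkhoff.kappa_le hκ' hκ hG hF m) (Birkhoff.kappa_le hκ hκ' hF hG m)
end

section
/- Let n ∈ ℕ, δ > 0, and let f be a holomorphic map from the annulus {z ∈ ℂ : 1−δ < |z| < 1+δ} to M_n(ℂ) with f(z) invertible for every z (this encodes a real-analytic loop 𝕊 → GL_n(ℂ)). Then there exist δ′ > 0, integers κ₁ ≥ κ₂ ≥ ⋯ ≥ κ_n, a holomorphic map F₊ : {z : |z| < 1+δ′} → M_n(ℂ) with invertible values, and a holomorphic map F₋ : {z : |z| > 1−δ′} → M_n(ℂ) with invertible values possessing an invertible limit F₋(∞) as |z| → ∞, such that f(z) = F₊(z)·diag(z^{κ₁},…,z^{κ_n})·F₋(z) for all z ∈ 𝕊. Moreover, the n-tuple (κ₁,…,κ_n) is uniquely determined by f. -/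
open Metric Filter

/-- A Birkhoff decomposition `f = F₊ · diag(z^κ) · F₋` on the unit circle, in which `F₊`
is holomorphic and `GL_n`-valued on a disk `{|z| < 1+δ'}` and `F₋` is holomorphic and
`GL_n`-valued on `{|z| > 1−δ'}` with an invertible limit at `∞` (for some `δ' > 0`). -/
def AnnulusBirkhoffFactorization (n : ℕ) (f : ℂ → Matrix (Fin n) (Fin n) ℂ)
    (κ : Fin n → ℤ) : Prop :=
  ∃ δ' : ℝ, 0 < δ' ∧
    ∃ Fp Fm : ℂ → Matrix (Fin n) (Fin n) ℂ, ∃ L : Matrix (Fin n) (Fin n) ℂ,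
      (∀ i j, DifferentiableOn ℂ (fun z => Fp z i j) {z : ℂ | ‖z‖ < 1 + δ'}) ∧
      (∀ z : ℂ, ‖z‖ < 1 + δ' → IsUnit (Fp z)) ∧
      (∀ i j, DifferentiableOn ℂ (fun z => Fm z i j) {z : ℂ | 1 - δ' < ‖z‖}) ∧
      (∀ z : ℂ, 1 - δ' < ‖z‖ → IsUnit (Fm z)) ∧
      IsUnit L ∧
      (∀ i j, Tendsto (fun z => Fm z i j)
        (comap (fun z : ℂ => ‖z‖) atTop) (nhds (L i j))) ∧
      (∀ z : ℂ, ‖z‖ = 1 →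
        f z = Fp z * Matrix.diagonal (fun i => z ^ κ i) * Fm z)


/-- entrywise holomorphy -/
def MDiff {n : ℕ} (F : ℂ → Matrix (Fin n) (Fin n) ℂ) (s : Set ℂ) : Prop :=
  ∀ i j, DifferentiableOn ℂ (fun z => F z i j) s

lemma MDiff.mono {n : ℕ} {F : ℂ → Matrix (Fin n) (Fin n) ℂ} {s t : Set ℂ}
    (h : MDiff F s) (hts : t ⊆ s) : MDiff F t := fun i j => (h i j).mono hts

lemma MDiff.mul {n : ℕ} {F G : ℂ → Matrix (Fin n) (Fin n) ℂ} {s : Set ℂ}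
    (hF : MDiff F s) (hG : MDiff G s) : MDiff (fun z => F z * G z) s := by
  intro i j
  simp only [Matrix.mul_apply]
  exact DifferentiableOn.fun_sum fun k _ => (hF i k).mul (hG k j)

lemma MDiff.det {n : ℕ} {F : ℂ → Matrix (Fin n) (Fin n) ℂ} {s : Set ℂ}
    (hF : MDiff F s) : DifferentiableOn ℂ (fun z => (F z).det) s := by
  simp only [Matrix.det_apply']
  refine DifferentiableOn.fun_sum fun σ _ => ?_
  refine (differentiableOn_const _).mul ?_
  exact DifferentiableOn.fun_finsetProd fun i _ => hF _ _

lemma MDiff.inv {n : ℕ} {F : ℂ → Matrix (Fin n) (Fin n) ℂ} {s : Set ℂ}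
    (hF : MDiff F s) (hu : ∀ z ∈ s, IsUnit (F z)) : MDiff (fun z => (F z)⁻¹) s := by
  intro i j
  have h1 : ∀ z, (F z)⁻¹ i j = ((F z).det)⁻¹ * ((F z).updateRow j (Pi.single i 1)).det := by
    intro z
    rw [Matrix.inv_def, Matrix.smul_apply, Matrix.adjugate_apply, Ring.inverse_eq_inv', smul_eq_mul]
  simp only [h1]
  refine (hF.det.inv fun z hz => ?_).mul (MDiff.det ?_)
  · exact ((Matrix.isUnit_iff_isUnit_det _).1 (hu z hz)).ne_zero
  · intro k l
    by_cases hk : k = j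
    · subst hk; simp only [Matrix.updateRow_self]; exact differentiableOn_const _
    · simp only [Matrix.updateRow_ne hk]; exact hF k l

/-- a large zero block forces zero determinant -/
lemma det_zero_block {n : ℕ} (A : Matrix (Fin n) (Fin n) ℂ) (k : Fin n)
    (h : ∀ i j, k ≤ i → j ≤ k → A i j = 0) : A.det = 0 := by
  rw [Matrix.det_apply']
  refine Finset.sum_eq_zero fun σ _ => ?_
  have : ∃ j, j ≤ k ∧ k ≤ σ j := by
    by_contra hcon
    push Not at hcon
    have h1 : (Finset.Iic k).card ≤ (Finset.Iio k).card := by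
      refine Finset.card_le_card_of_injOn σ ?_ (σ.injective.injOn)
      intro j hj
      simp only [Finset.coe_Iic, Set.mem_Iic, Finset.coe_Iio, Set.mem_Iio] at hj ⊢
      exact hcon j hj
    simp at h1
  obtain ⟨j, hj, hkj⟩ := this
  have h0 : ∏ i, A (σ i) i = 0 := Finset.prod_eq_zero (Finset.mem_univ j) (h _ _ hkj hj)
  rw [h0, mul_zero]

/-- Liouville type vanishing -/
lemma vanish_at_zero {δ : ℝ} (hδ : 0 < δ) (a b : ℂ → ℂ) (l : ℂ) (m : ℕ) (hm : 0 < m)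
    (ha : DifferentiableOn ℂ a {z : ℂ | ‖z‖ < 1 + δ})
    (hb : DifferentiableOn ℂ b {z : ℂ | 1 - δ < ‖z‖})
    (hl : Tendsto b (comap (fun z : ℂ => ‖z‖) atTop) (nhds l))
    (hab : ∀ z : ℂ, ‖z‖ = 1 → a z * z ^ m = b z) : a 0 = 0 := by
  have hopen : IsOpen {z : ℂ | 1 - δ < ‖z‖} := isOpen_lt continuous_const continuous_norm
  have h1 : (∮ z in C(0, 1), (z - 0)⁻¹ • a z) = (2 * Real.pi * Complex.I : ℂ) • a 0 := by
    have hd : DiffContOnCl ℂ a (ball 0 1) := by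
      apply DifferentiableOn.diffContOnCl
      refine ha.mono ?_
      intro z hz
      have := closure_ball_subset_closedBall hz
      simp only [mem_closedBall, dist_zero_right] at this
      simp only [Set.mem_ofPred_eq]; linarith
    exact hd.circleIntegral_sub_inv_smul (by simp)
  have h2 : ∀ R : ℝ, 1 ≤ R → (∮ z in C(0, R), (z - 0)⁻¹ • (b z / z ^ m)) =
      (2 * Real.pi * Complex.I : ℂ) • a 0 := by
    intro R hR
    rw [← h1]
    have hD : ∀ z : ℂ, 1 ≤ ‖z‖ → DifferentiableAt ℂ (fun z => b z / z ^ m) z := by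
      intro z hz
      have hz0 : z ≠ 0 := by rintro rfl; simp at hz; linarith
      refine DifferentiableAt.div ?_ (by fun_prop) (pow_ne_zero _ hz0)
      refine (hb z (by simp only [Set.mem_ofPred_eq]; linarith)).differentiableAt
        (hopen.mem_nhds (by simp only [Set.mem_ofPred_eq]; linarith))
    rw [Complex.circleIntegral_sub_center_inv_smul_eq_of_differentiable_on_annulus_off_countable
      (s := ∅) one_pos hR Set.countable_empty]
    · apply circleIntegral.integral_congr zero_le_one
      intro z hz
      have hz1 : ‖z‖ = 1 := by simpa using hz
      have hz0 : z ≠ 0 := by rintro rfl; simp at hz1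
      simp only
      rw [← hab z hz1, mul_div_cancel_right₀ _ (pow_ne_zero _ hz0)]
    · intro z hz
      refine (hD z ?_).continuousAt.continuousWithinAt
      simpa using hz.2
    · intro z hz
      refine hD z ?_
      have := hz.1.2
      simp at this
      exact this.le
  have hbd : ∃ B : ℝ, ∃ R0 : ℝ, ∀ z : ℂ, R0 ≤ ‖z‖ → ‖b z‖ ≤ B := by
    have h3 : ∀ᶠ z in comap (fun z : ℂ => ‖z‖) atTop, ‖b z‖ < ‖l‖ + 1 :=
      hl.norm.eventually (gt_mem_nhds (by linarith))
    rw [Filter.eventually_comap, eventually_atTop] at h3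
    obtain ⟨R0, hR0⟩ := h3
    exact ⟨‖l‖ + 1, R0, fun z hz => (hR0 _ hz z rfl).le⟩
  obtain ⟨B, R0, hB⟩ := hbd
  have h4 : ∀ R : ℝ, 1 ≤ R → R0 ≤ R → ‖(2 * Real.pi * Complex.I : ℂ) • a 0‖ ≤
      2 * Real.pi * (B / R) := by
    intro R hR hR0
    have hRp : 0 < R := by linarith
    rw [← h2 R hR]
    have := circleIntegral.norm_integral_le_of_norm_le_const
      (f := fun z => (z - 0)⁻¹ • (b z / z ^ m)) (c := 0) (R := R) (C := B / R / R) hRp.le ?_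
    · refine this.trans (le_of_eq ?_)
      field_simp
    · intro z hz
      have hz1 : ‖z‖ = R := by simpa using hz
      have hb' := hB z (by rw [hz1]; exact hR0)
      have hBn : 0 ≤ B := (norm_nonneg _).trans hb'
      simp only [sub_zero, smul_eq_mul, norm_mul, norm_inv, norm_div, norm_pow, hz1]
      rw [mul_comm, ← div_eq_mul_inv]
      gcongr
      exact le_self_pow₀ hR hm.ne'
  have h5 : Tendsto (fun R : ℝ => 2 * Real.pi * (B / R)) atTop (nhds 0) := by
    have := (tendsto_const_nhds (x := B)).div_atTop tendsto_id (α := ℝ) (l := atTop)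
    simpa using this.const_mul (2 * Real.pi)
  have h6 : ‖(2 * Real.pi * Complex.I : ℂ) • a 0‖ ≤ 0 := by
    refine ge_of_tendsto h5 ?_
    filter_upwards [eventually_ge_atTop 1, eventually_ge_atTop R0] with R h h' using h4 R h h'
  have h7 : (2 * Real.pi * Complex.I : ℂ) • a 0 = 0 := norm_le_zero_iff.1 h6
  rcases smul_eq_zero.1 h7 with h | h
  · exact absurd h Complex.two_pi_I_ne_zero
  · exact h

lemma tendsto_matrix_inv {n : ℕ} {l : Filter ℂ} (F : ℂ → Matrix (Fin n) (Fin n) ℂ)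
    (L : Matrix (Fin n) (Fin n) ℂ) (hL : IsUnit L)
    (h : ∀ i j, Tendsto (fun z => F z i j) l (nhds (L i j))) :
    Tendsto (fun z => (F z)⁻¹) l (nhds L⁻¹) := by
  have hF : Tendsto F l (nhds L) := by
    exact tendsto_pi_nhds.2 fun i => tendsto_pi_nhds.2 fun j => h i j
  have hd : L.det ≠ 0 := ((Matrix.isUnit_iff_isUnit_det _).1 hL).ne_zero
  simp only [Matrix.inv_def, Ring.inverse_eq_inv']
  refine Tendsto.smul ?_ ?_
  · exact Tendsto.inv₀ (((continuous_id.matrix_det).tendsto L).comp hF) hd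
  · exact ((continuous_id.matrix_adjugate).tendsto L).comp hF

lemma uniq_le {n : ℕ} {f : ℂ → Matrix (Fin n) (Fin n) ℂ} {κ κ' : Fin n → ℤ}
    (hκ : Antitone κ) (hκ' : Antitone κ')
    (H : AnnulusBirkhoffFactorization n f κ) (H' : AnnulusBirkhoffFactorization n f κ') :
    κ ≤ κ' := by
  obtain ⟨δ, hδ, P, M, L, hP, hPu, hM, hMu, hL, hML, hf⟩ := H
  obtain ⟨δ', hδ', P', M', L', hP', hPu', hM', hMu', hL', hML', hf'⟩ := H'
  intro k
  by_contra hk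
  push Not at hk
  set ε := min δ δ' with hε
  have hε0 : 0 < ε := lt_min hδ hδ'
  have e1 : ε ≤ δ := min_le_left _ _
  have e2 : ε ≤ δ' := min_le_right _ _
  set A : ℂ → Matrix (Fin n) (Fin n) ℂ := fun z => (P' z)⁻¹ * P z with hA
  set B : ℂ → Matrix (Fin n) (Fin n) ℂ := fun z => M' z * (M z)⁻¹ with hB
  have hAd : MDiff A {z : ℂ | ‖z‖ < 1 + ε} := by
    refine MDiff.mul (MDiff.inv (MDiff.mono (s := {z : ℂ | ‖z‖ < 1 + δ'}) hP' ?_) ?_)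
      (MDiff.mono (s := {z : ℂ | ‖z‖ < 1 + δ}) hP ?_)
    · intro z hz; simp only [Set.mem_ofPred_eq] at hz ⊢; linarith
    · intro z hz; simp only [Set.mem_ofPred_eq] at hz ⊢; exact hPu' z (by linarith)
    · intro z hz; simp only [Set.mem_ofPred_eq] at hz ⊢; linarith
  have hBd : MDiff B {z : ℂ | 1 - ε < ‖z‖} := by
    refine MDiff.mul (MDiff.mono (s := {z : ℂ | 1 - δ' < ‖z‖}) hM' ?_)
      (MDiff.inv (MDiff.mono (s := {z : ℂ | 1 - δ < ‖z‖}) hM ?_) ?_)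
    · intro z hz; simp only [Set.mem_ofPred_eq] at hz ⊢; linarith
    · intro z hz; simp only [Set.mem_ofPred_eq] at hz ⊢; linarith
    · intro z hz; simp only [Set.mem_ofPred_eq] at hz ⊢; exact hMu z (by linarith)
  have hBl : ∀ i j, Tendsto (fun z => B z i j) (comap (fun z : ℂ => ‖z‖) atTop)
      (nhds ((L' * L⁻¹) i j)) := by
    intro i j
    have t1 := tendsto_matrix_inv M L hL hML
    simp only [hB, Matrix.mul_apply]
    refine tendsto_finsetSum _ fun q _ => (hML' i q).mul ?_
    exact (tendsto_pi_nhds.1 ((tendsto_pi_nhds.1 t1) q)) j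
  have hAB : ∀ z : ℂ, ‖z‖ = 1 → ∀ i j, A z i j * z ^ κ j = z ^ κ' i * B z i j := by
    intro z hz i j
    have u1 := (Matrix.isUnit_iff_isUnit_det _).1 (hPu' z (by linarith))
    have u2 := (Matrix.isUnit_iff_isUnit_det _).1 (hMu z (by linarith))
    have e : P z * Matrix.diagonal (fun i => z ^ κ i) * M z =
        P' z * Matrix.diagonal (fun i => z ^ κ' i) * M' z := by rw [← hf z hz, ← hf' z hz]
    have e' : A z * Matrix.diagonal (fun i => z ^ κ i) =
        Matrix.diagonal (fun i => z ^ κ' i) * B z := by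
      calc A z * Matrix.diagonal (fun i => z ^ κ i)
          = (P' z)⁻¹ * (P z * Matrix.diagonal (fun i => z ^ κ i) * M z) * (M z)⁻¹ := by
            simp only [hA, Matrix.mul_assoc, Matrix.mul_nonsing_inv _ u2, Matrix.mul_one]
        _ = _ := by
            rw [e]
            simp only [hB, ← Matrix.mul_assoc, Matrix.nonsing_inv_mul _ u1, Matrix.one_mul]
    have := congrFun (congrFun e' i) j
    rwa [Matrix.mul_diagonal, Matrix.diagonal_mul] at this
  have hz0 : ∀ i j, k ≤ i → j ≤ k → A 0 i j = 0 := by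
    intro i j hi hj
    have hlt : κ' i < κ j := (hκ' hi).trans_lt (hk.trans_le (hκ hj))
    refine vanish_at_zero hε0 (fun z => A z i j) (fun z => B z i j) _ (κ j - κ' i).toNat
      (by omega) (hAd i j) (hBd i j) (hBl i j) ?_
    intro z hz
    have hzne : z ≠ 0 := by rintro rfl; simp at hz
    have h1 := hAB z hz i j
    have h2 : z ^ (κ j - κ' i).toNat = z ^ (κ j - κ' i) := by
      rw [← zpow_natCast, Int.toNat_of_nonneg (by omega)]
    change A z i j * z ^ (κ j - κ' i).toNat = B z i j
    rw [h2, zpow_sub₀ hzne, mul_div_assoc', h1, mul_div_cancel_left₀ _ (zpow_ne_zero _ hzne)]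
  have hdet := det_zero_block (A 0) k hz0
  have hunit : IsUnit (A 0) := by
    have h1 := hPu' 0 (by simp; linarith)
    have h2 := hPu 0 (by simp; linarith)
    exact (Matrix.isUnit_nonsing_inv_iff.2 h1).mul h2
  exact ((Matrix.isUnit_iff_isUnit_det _).1 hunit).ne_zero hdet


lemma det_one_updateRow' {n : ℕ} (i : Fin n) (r : Fin n → ℂ) :
    ((1 : Matrix (Fin n) (Fin n) ℂ).updateRow i r).det = r i := by
  have h := Matrix.det_updateRow_sum (1 : Matrix (Fin n) (Fin n) ℂ) i r
  have h2 : (∑ k, r k • (1 : Matrix (Fin n) (Fin n) ℂ) k) = r := by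
    funext j
    simp [Finset.sum_apply, Matrix.one_apply]
  rw [h2] at h
  simpa using h

lemma reduce {n : ℕ} (s : Multiset ℂ) :
    (∀ b ∈ s, ‖b‖ < 1) → ∀ (ρ : ℝ), 1 < ρ → ∀ (H : ℂ → Matrix (Fin n) (Fin n) ℂ)
      (κ : Fin n → ℤ) (g : ℂ → ℂ), MDiff H (ball 0 ρ) → ContinuousOn g (ball 0 ρ) →
      (∀ w ∈ ball (0 : ℂ) ρ, g w ≠ 0) →
      (∀ w ∈ ball (0 : ℂ) ρ, (H w).det = g w * (s.map (fun b => w - b)).prod) →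
      ∃ ρ' : ℝ, 1 < ρ' ∧ ∃ (P H' : ℂ → Matrix (Fin n) (Fin n) ℂ) (κ' : Fin n → ℤ),
        MDiff P (ball 0 ρ') ∧ (∀ z ∈ ball (0 : ℂ) ρ', IsUnit (P z)) ∧
        MDiff H' (ball 0 ρ) ∧ (∀ z ∈ ball (0 : ℂ) ρ, IsUnit (H' z)) ∧
        ∀ z : ℂ, ‖z‖ = 1 → Matrix.diagonal (fun i => z ^ κ i) * H z⁻¹ =
          P z * Matrix.diagonal (fun i => z ^ κ' i) * H' z⁻¹ := by
  induction s using Multiset.induction_on with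
  | empty =>
    intro _ ρ hρ H κ g hH hg hg0 hdet
    refine ⟨ρ, hρ, fun _ => 1, H, κ, ?_, fun _ _ => isUnit_one, hH, ?_, ?_⟩
    · intro i j; exact differentiableOn_const _
    · intro z hz
      rw [Matrix.isUnit_iff_isUnit_det, hdet z hz]
      simpa using hg0 z hz
    · intro z _
      rw [Matrix.one_mul]
  | cons b t ih =>
    intro hs ρ hρ H κ g hH hg hg0 hdet
    have hb1 : ‖b‖ < 1 := hs b (Multiset.mem_cons_self b t)
    have hbρ : b ∈ ball (0 : ℂ) ρ := by simp; linarith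
    have hdb : (H b).det = 0 := by rw [hdet b hbρ]; simp
    obtain ⟨v, hv0, hv⟩ := Matrix.exists_vecMul_eq_zero_iff.2 hdb
    have hsupp : (Finset.univ.filter fun l => v l ≠ 0).Nonempty := by
      obtain ⟨l, hl⟩ := Function.ne_iff.1 hv0
      exact ⟨l, by simpa using hl⟩
    obtain ⟨i, hi, himax⟩ := Finset.exists_max_image _ κ hsupp
    have hvi : v i ≠ 0 := by simpa using hi
    have hmax : ∀ l, v l ≠ 0 → κ l ≤ κ i := fun l hl => himax l (by simpa using hl)
    set h : Fin n → ℂ → ℂ := fun j w => ∑ l, v l * H w l j with hh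
    have hhb : ∀ j, h j b = 0 := by
      intro j
      have := congrFun hv j
      simpa [Matrix.vecMul, dotProduct] using this
    have hhd : ∀ j, DifferentiableOn ℂ (h j) (ball 0 ρ) := fun j =>
      DifferentiableOn.fun_sum fun l _ => (differentiableOn_const _).mul (hH l j)
    have hds : ∀ j w, (w - b) * dslope (h j) b w = h j w := by
      intro j w
      have := sub_smul_dslope (h j) b w
      rw [hhb j, sub_zero, smul_eq_mul] at this
      exact this
    set H1 : ℂ → Matrix (Fin n) (Fin n) ℂ :=
      fun w => (H w).updateRow i (fun j => dslope (h j) b w) with hH1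
    have hH1d : MDiff H1 (ball 0 ρ) := by
      intro k l
      by_cases hk : k = i
      · subst hk
        simp only [hH1, Matrix.updateRow_self]
        exact (Complex.differentiableOn_dslope (isOpen_ball.mem_nhds hbρ)).2 (hhd l)
      · simp only [hH1, Matrix.updateRow_ne hk]
        exact hH k l
    have hdet1 : ∀ w, (w - b) * (H1 w).det = v i * (H w).det := by
      intro w
      rw [hH1, ← Matrix.det_updateRow_smul]
      have e : ((w - b) • fun j => dslope (h j) b w) = ∑ k, v k • H w k := by
        funext j
        rw [Pi.smul_apply, smul_eq_mul, hds, Finset.sum_apply]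
        rfl
      rw [e, Matrix.det_updateRow_sum, smul_eq_mul]
    set φ : ℂ → ℂ := fun w => (H1 w).det - v i * g w * (t.map (fun b => w - b)).prod with hφ
    have hφc : ContinuousOn φ (ball 0 ρ) := by
      refine hH1d.det.continuousOn.sub ((continuousOn_const.mul hg).mul ?_)
      exact (continuous_multiset_prod t fun c _ => continuous_id.sub continuous_const).continuousOn
    have hφ0 : ∀ w ∈ ball (0 : ℂ) ρ, w ≠ b → φ w = 0 := by
      intro w hw hwb
      have h1 := hdet1 w
      rw [hdet w hw, Multiset.map_cons, Multiset.prod_cons] at h1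
      have h2 : (w - b) * φ w = 0 := by
        simp only [hφ]
        linear_combination h1
      exact (mul_eq_zero.1 h2).resolve_left (sub_ne_zero.2 hwb)
    have hφb : φ b = 0 := by
      have c : ContinuousAt φ b := hφc.continuousAt (isOpen_ball.mem_nhds hbρ)
      have t1 : Tendsto φ (nhdsWithin b {b}ᶜ) (nhds (φ b)) := c.tendsto.mono_left nhdsWithin_le_nhds
      have t2 : Tendsto φ (nhdsWithin b {b}ᶜ) (nhds 0) := by
        refine tendsto_const_nhds.congr' ?_
        filter_upwards [self_mem_nhdsWithin,
          nhdsWithin_le_nhds (isOpen_ball.mem_nhds hbρ)] with w hw hw2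
        exact (hφ0 w hw2 hw).symm
      exact tendsto_nhds_unique t1 t2
    have hφz : ∀ w ∈ ball (0 : ℂ) ρ, φ w = 0 := by
      intro w hw
      by_cases hwb : w = b
      · rw [hwb, hφb]
      · exact hφ0 w hw hwb
    obtain ⟨ρ1, hρ1, P1, H', κ', hP1, hP1u, hH', hH'u, heq⟩ :=
      ih (fun c hc => hs c (Multiset.mem_cons_of_mem hc)) ρ hρ H1
        (Function.update κ i (κ i - 1)) (fun w => v i * g w) hH1d (continuousOn_const.mul hg)
        (fun w hw => mul_ne_zero hvi (hg0 w hw))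
        (fun w hw => sub_eq_zero.1 (hφz w hw))
    set ρ2 : ℝ := min ρ1 (2 / (1 + ‖b‖)) with hρ2
    have hb0 : 0 ≤ ‖b‖ := norm_nonneg b
    have hρ2' : 1 < ρ2 := by
      refine lt_min hρ1 ?_
      rw [lt_div_iff₀ (by linarith)]; linarith
    have hne : ∀ z ∈ ball (0 : ℂ) ρ2, 1 - b * z ≠ 0 := by
      intro z hz h0
      have hz1 : ‖z‖ < 2 / (1 + ‖b‖) := by
        have : ‖z‖ < ρ2 := by simpa using hz
        exact this.trans_le (min_le_right _ _)
      rw [lt_div_iff₀ (by linarith)] at hz1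
      have h1 : ‖b‖ * ‖z‖ = 1 := by
        rw [← norm_mul, ← sub_eq_zero.1 h0, norm_one]
      nlinarith [norm_nonneg z]
    set r : ℂ → Fin n → ℂ :=
      fun z l => v l * z ^ (κ i - κ l).toNat / (1 - b * z) with hr
    set Q : ℂ → Matrix (Fin n) (Fin n) ℂ := fun z => (1 : Matrix _ _ ℂ).updateRow i (r z) with hQ
    have hQdet : ∀ z, (Q z).det = v i / (1 - b * z) := by
      intro z
      rw [hQ, det_one_updateRow', hr]
      simp
    have hQu : ∀ z ∈ ball (0 : ℂ) ρ2, IsUnit (Q z) := by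
      intro z hz
      rw [Matrix.isUnit_iff_isUnit_det, hQdet]
      exact (div_ne_zero hvi (hne z hz)).isUnit
    have hQd : MDiff Q (ball 0 ρ2) := by
      intro k l
      by_cases hk : k = i
      · subst hk
        simp only [hQ, Matrix.updateRow_self, hr]
        refine DifferentiableOn.div ?_ ?_ hne
        · exact ((differentiable_id.pow _).const_mul _).differentiableOn
        · exact (Differentiable.const_sub (differentiable_id.const_mul _) _).differentiableOn
      · simp only [hQ, Matrix.updateRow_ne hk]
        exact differentiableOn_const _
    refine ⟨ρ2, hρ2', fun z => (Q z)⁻¹ * P1 z, H', κ', ?_, ?_, hH', hH'u, ?_⟩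
    · exact (hQd.inv hQu).mul (hP1.mono (ball_subset_ball (min_le_left _ _)))
    · intro z hz
      exact (Matrix.isUnit_nonsing_inv_iff.2 (hQu z hz)).mul
        (hP1u z (ball_subset_ball (min_le_left _ _) hz))
    · intro z hz
      have hzne : z ≠ 0 := by rintro rfl; simp at hz
      have hzb : z ∈ ball (0 : ℂ) ρ2 := by simp [hz, hρ2']
      have key : Q z * (Matrix.diagonal (fun i => z ^ κ i) * H z⁻¹) =
          Matrix.diagonal (fun k => z ^ (Function.update κ i (κ i - 1) k)) * H1 z⁻¹ := by
        ext k j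
        by_cases hk : k = i
        · subst hk
          rw [Matrix.diagonal_mul, Matrix.mul_apply]
          simp only [hQ, hH1, Matrix.updateRow_self, Matrix.diagonal_mul, Function.update_self, hr]
          have e1 : ∀ l, v l * z ^ (κ k - κ l).toNat / (1 - b * z) * (z ^ κ l * H z⁻¹ l j) =
              z ^ κ k / (1 - b * z) * (v l * H z⁻¹ l j) := by
            intro l
            by_cases hl : v l = 0
            · simp [hl]
            · have h2 : z ^ (κ k - κ l).toNat * z ^ κ l = z ^ κ k := by
                rw [← zpow_natCast, Int.toNat_of_nonneg (by have := hmax l hl; omega),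
                  ← zpow_add₀ hzne]
                simp
              rw [← h2]; ring
          simp only [e1]
          rw [← Finset.mul_sum]
          change z ^ κ k / (1 - b * z) * h j z⁻¹ = _
          rw [← hds j z⁻¹, zpow_sub_one₀ hzne]
          have := hne z hzb
          field_simp
        · rw [Matrix.diagonal_mul, Matrix.mul_apply]
          simp only [hQ, hH1, Matrix.updateRow_ne hk, Matrix.diagonal_mul,
            Function.update_of_ne hk, Matrix.one_apply]
          simp
      have hu := (Matrix.isUnit_iff_isUnit_det _).1 (hQu z hzb)
      rw [← Matrix.nonsing_inv_mul_cancel_left (Q z) (Matrix.diagonal (fun i => z ^ κ i) * H z⁻¹) hu,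
        key, heq z hz]
      simp only [Matrix.mul_assoc]


lemma summable_geom_int {q : ℝ} (h0 : 0 ≤ q) (h1 : q < 1) :
    Summable (fun k : ℤ => q ^ k.natAbs) := by
  refine Summable.of_nat_of_neg ?_ ?_
  · simpa using summable_geometric_of_lt_one h0 h1
  · simpa using summable_geometric_of_lt_one h0 h1

lemma zpow_norm_le {τ : ℝ} (hτ : 0 < τ) {z : ℂ} (h1 : τ⁻¹ ≤ ‖z‖) (h2 : ‖z‖ ≤ τ) (k : ℤ) :
    ‖z ^ k‖ ≤ τ ^ k.natAbs := by
  have hz : 0 < ‖z‖ := (inv_pos.2 hτ).trans_le h1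
  rw [norm_zpow]
  rcases Int.natAbs_eq k with h | h
  · conv_lhs => rw [h, zpow_natCast]
    gcongr
  · conv_lhs => rw [h, zpow_neg, zpow_natCast, ← inv_pow]
    gcongr
    exact inv_le_of_inv_le₀ hτ h1

lemma laurent {R : ℝ} (hR : 1 < R) (h : ℂ → ℂ)
    (hd : DifferentiableOn ℂ h {z : ℂ | R⁻¹ < ‖z‖ ∧ ‖z‖ < R}) :
    ∃ c : ℤ → ℂ, (∀ z : ℂ, R⁻¹ < ‖z‖ → ‖z‖ < R → HasSum (fun k => c k * z ^ k) (h z)) ∧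
      ∀ σ : ℝ, 1 ≤ σ → σ < R → ∀ B : ℝ, (∀ z : ℂ, σ⁻¹ ≤ ‖z‖ → ‖z‖ ≤ σ → ‖h z‖ ≤ B) →
        ∀ k, ‖c k‖ ≤ B * (σ⁻¹) ^ k.natAbs := by
  have hR0 : 0 < R := by linarith
  have hopen : IsOpen {z : ℂ | R⁻¹ < ‖z‖ ∧ ‖z‖ < R} :=
    (isOpen_lt continuous_const continuous_norm).inter (isOpen_lt continuous_norm continuous_const)
  have hRi : R⁻¹ < 1 := inv_lt_one_of_one_lt₀ hR
  have hRip : 0 < R⁻¹ := inv_pos.2 hR0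
  set J : ℤ → ℝ → ℂ := fun k s => ∮ z in C(0, s), (z - 0)⁻¹ • (z ^ (-k) * h z) with hJ
  have hDk : ∀ (k : ℤ) (z : ℂ), R⁻¹ < ‖z‖ → ‖z‖ < R →
      DifferentiableAt ℂ (fun z => z ^ (-k) * h z) z := by
    intro k z h1 h2
    have hz0 : z ≠ 0 := by rintro rfl; simp at h1; linarith
    exact (differentiableAt_zpow.2 (Or.inl hz0)).mul
      ((hd z ⟨h1, h2⟩).differentiableAt (hopen.mem_nhds ⟨h1, h2⟩))
  have hJle : ∀ (k : ℤ) (s t : ℝ), R⁻¹ < s → s ≤ t → t < R → J k t = J k s := by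
    intro k s t hs hst ht
    refine Complex.circleIntegral_sub_center_inv_smul_eq_of_differentiable_on_annulus_off_countable
      (s := ∅) (by linarith) hst Set.countable_empty ?_ ?_
    · intro z hz
      have h1 : ‖z‖ ≤ t := by simpa using hz.1
      have h2 : s ≤ ‖z‖ := by simpa using hz.2
      exact (hDk k z (by linarith) (by linarith)).continuousAt.continuousWithinAt
    · intro z hz
      have h1 : ‖z‖ < t := by simpa using hz.1.1
      have h2 : s < ‖z‖ := by simpa using hz.1.2
      exact hDk k z (by linarith) (by linarith)
  have hJ1 : ∀ (k : ℤ) (s : ℝ), R⁻¹ < s → s < R → J k s = J k 1 := by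
    intro k s h1 h2
    rcases le_total s 1 with h | h
    · exact (hJle k s 1 h1 h hR).symm
    · exact hJle k 1 s hRi h h2
  set c : ℤ → ℂ := fun k => (2 * Real.pi * Complex.I : ℂ)⁻¹ * J k 1 with hc
  have hJbound : ∀ (k : ℤ) (s B : ℝ), R⁻¹ < s → s < R → (∀ z : ℂ, ‖z‖ = s → ‖h z‖ ≤ B) →
      ‖c k‖ ≤ B * s ^ (-k) := by
    intro k s B h1 h2 hB
    have hs0 : 0 < s := by linarith
    have hn : ‖(2 * Real.pi * Complex.I : ℂ)⁻¹‖ = (2 * Real.pi)⁻¹ := by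
      simp [abs_of_pos Real.pi_pos]
    have h3 : ‖J k s‖ ≤ 2 * Real.pi * s * (s⁻¹ * (s ^ (-k) * B)) := by
      refine circleIntegral.norm_integral_le_of_norm_le_const hs0.le ?_
      intro z hz
      have hz1 : ‖z‖ = s := by simpa using hz
      have hBz := hB z hz1
      rw [sub_zero, norm_smul, norm_mul, norm_inv, norm_zpow, hz1]
      gcongr
    rw [hc]
    simp only
    rw [norm_mul, hn, ← hJ1 k s h1 h2]
    have hpi := Real.pi_pos
    calc (2 * Real.pi)⁻¹ * ‖J k s‖ ≤ (2 * Real.pi)⁻¹ * (2 * Real.pi * s * (s⁻¹ * (s ^ (-k) * B))) := by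
          gcongr
      _ = B * s ^ (-k) := by field_simp
  have hbd : ∀ σ : ℝ, 1 ≤ σ → σ < R → ∀ B : ℝ,
      (∀ z : ℂ, σ⁻¹ ≤ ‖z‖ → ‖z‖ ≤ σ → ‖h z‖ ≤ B) →
        ∀ k, ‖c k‖ ≤ B * (σ⁻¹) ^ k.natAbs := by
    intro σ h1 h2 B hB k
    have hσ0 : 0 < σ := by linarith
    have hσi : σ⁻¹ ≤ 1 := inv_le_one_of_one_le₀ h1
    have hσR : R⁻¹ < σ⁻¹ := by gcongr
    rcases Int.natAbs_eq k with hk | hk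
    · have := hJbound k σ B (by linarith) h2 (fun z hz => hB z (by linarith) hz.le)
      rw [hk, zpow_neg, zpow_natCast, ← inv_pow, ← hk] at this
      exact this
    · have := hJbound k σ⁻¹ B hσR (by linarith) (fun z hz => hB z hz.ge (by linarith))
      rw [hk, neg_neg, zpow_natCast, ← hk] at this
      exact this
  refine ⟨c, ?_, hbd⟩
  intro z hz1 hz2
  set s := ‖z‖ with hs
  have hs0 : 0 < s := by linarith
  have : Fact (0 < 2 * Real.pi) := ⟨Real.two_pi_pos⟩
  have hnorm : ∀ x : AddCircle (2 * Real.pi), ‖(s : ℂ) * (AddCircle.toCircle x : ℂ)‖ = s := by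
    intro x
    rw [norm_mul, Circle.norm_coe, mul_one, Complex.norm_real, Real.norm_of_nonneg hs0.le]
  set F : C(AddCircle (2 * Real.pi), ℂ) :=
    ⟨fun x => h ((s : ℂ) * (AddCircle.toCircle x : ℂ)), by
      refine ContinuousOn.comp_continuous hd.continuousOn ?_ ?_
      · exact continuous_const.mul (continuous_subtype_val.comp AddCircle.continuous_toCircle)
      · intro x
        simp only [Set.mem_ofPred_eq, hnorm]
        exact ⟨hz1, hz2⟩⟩ with hF
  have hcoef : ∀ k, fourierCoeff F k = c k * (s : ℂ) ^ k := by
    intro k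
    have e0 : c k = (2 * Real.pi * Complex.I : ℂ)⁻¹ * J k s := by rw [hJ1 k s hz1 hz2]
    rw [fourierCoeff_eq_intervalIntegral F k 0, e0, hJ]
    simp only [circleIntegral]
    rw [zero_add, Complex.real_smul, mul_assoc, ← intervalIntegral.integral_mul_const]
    push_cast
    rw [mul_inv (2 * (Real.pi : ℂ)) Complex.I, mul_assoc (2 * (Real.pi : ℂ))⁻¹, one_div]
    congr 1
    rw [← intervalIntegral.integral_const_mul]
    apply intervalIntegral.integral_congr
    intro θ _
    have hsC : (s : ℂ) ≠ 0 := by exact_mod_cast hs0.ne'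
    have hpi : (Real.pi : ℂ) ≠ 0 := by exact_mod_cast Real.pi_ne_zero
    have e1 : circleMap 0 s θ = s * Complex.exp (θ * Complex.I) := by simp [circleMap]
    have e2 : (AddCircle.toCircle (θ : AddCircle (2 * Real.pi)) : ℂ) =
        Complex.exp (θ * Complex.I) := by
      rw [AddCircle.toCircle_apply_mk]
      simp
    have e3 : (fourier (-k) (θ : AddCircle (2 * Real.pi)) : ℂ) =
        Complex.exp (θ * Complex.I) ^ (-k) := by
      rw [fourier_apply, AddCircle.toCircle_zsmul, Circle.coe_zpow, e2]
    have hE := Complex.exp_ne_zero (θ * Complex.I)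
    have e4 : F (θ : AddCircle (2 * Real.pi)) = h (s * Complex.exp (θ * Complex.I)) := by
      rw [← e2]; rfl
    simp only [deriv_circleMap, e3, e4, e1, sub_zero, smul_eq_mul]
    simp only [mul_zpow]
    have hsk : (s : ℂ) ^ k ≠ 0 := zpow_ne_zero _ hsC
    rw [zpow_neg (s : ℂ)]
    field_simp
  have hsum : Summable (fourierCoeff F) := by
    set τ := max s s⁻¹ with hτ
    have hsi : s⁻¹ < R := inv_lt_of_inv_lt₀ hR0 hz1
    have hτR : τ < R := max_lt hz2 hsi
    have hτ1 : 1 ≤ τ := by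
      rcases le_total 1 s with h | h
      · exact h.trans (le_max_left _ _)
      · exact (one_le_inv₀ hs0 |>.2 h).trans (le_max_right _ _)
    obtain ⟨σ, hσ1, hσ2⟩ := exists_between hτR
    have hσ0 : 0 < σ := by linarith
    have hcomp : IsCompact (closedBall (0 : ℂ) σ \ ball 0 σ⁻¹) :=
      (isCompact_closedBall _ _).diff isOpen_ball
    have hcont : ContinuousOn h (closedBall (0 : ℂ) σ \ ball 0 σ⁻¹) := by
      refine hd.continuousOn.mono ?_
      intro w hw
      have h1 : ‖w‖ ≤ σ := by simpa using hw.1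
      have h2 : σ⁻¹ ≤ ‖w‖ := by simpa using hw.2
      have : R⁻¹ < σ⁻¹ := by gcongr
      exact ⟨by linarith, by linarith⟩
    obtain ⟨B, hB⟩ := hcomp.exists_bound_of_continuousOn hcont
    have hB' := hbd σ (by linarith) hσ2 B (fun w h1 h2 => hB w ⟨by simpa using h2, by simpa using h1⟩)
    have hq : σ⁻¹ * τ < 1 := by
      rw [inv_mul_lt_iff₀ hσ0]; linarith
    refine Summable.of_norm_bounded
      ((summable_geom_int (q := σ⁻¹ * τ) (by positivity) hq).mul_left B) ?_
    intro k
    rw [hcoef k, norm_mul, mul_pow, ← mul_assoc]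
    refine mul_le_mul (hB' k) ?_ (norm_nonneg _) ((norm_nonneg _).trans (hB' k))
    refine zpow_norm_le (by linarith) ?_ ?_ k
    · rw [Complex.norm_real, Real.norm_of_nonneg hs0.le]
      exact inv_le_of_inv_le₀ hs0 (le_max_right _ _)
    · rw [Complex.norm_real, Real.norm_of_nonneg hs0.le]
      exact le_max_left _ _
  have hmain := has_pointwise_sum_fourier_series_of_summable hsum
    ((Complex.arg z : ℝ) : AddCircle (2 * Real.pi))
  have ez : (s : ℂ) * (AddCircle.toCircle ((Complex.arg z : ℝ) : AddCircle (2 * Real.pi)) : ℂ)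
      = z := by
    rw [AddCircle.toCircle_apply_mk]
    simp [hs]
  have e5 : F ((Complex.arg z : ℝ) : AddCircle (2 * Real.pi)) = h z := by
    change h _ = _
    rw [ez]
  rw [e5] at hmain
  convert! hmain using 2 with k
  rw [hcoef k, fourier_apply, AddCircle.toCircle_zsmul, Circle.coe_zpow, smul_eq_mul,
    mul_assoc (c k) _ _, ← mul_zpow, ez]


lemma isUnit_one_add {𝔸 : Type*} [NormedRing 𝔸] [CompleteSpace 𝔸] {x : 𝔸} (h : ‖x‖ < 1) : IsUnit (1 + x) := by
  have := isUnit_one_sub_of_norm_lt_one (x := -x) (by rwa [norm_neg])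
  rwa [sub_neg_eq_add] at this

section WienerHopf

variable {𝔸 : Type*} [NormedRing 𝔸] [NormedAlgebra ℂ 𝔸] [CompleteSpace 𝔸]

lemma conv_bound {ρ : ℝ} (hρ : 1 < ρ) {e Y : ℤ → 𝔸} {η b : ℝ}
    (hs : Summable (fun k => ‖e k‖ * ρ ^ k.natAbs))
    (hη : ∑' k, ‖e k‖ * ρ ^ k.natAbs ≤ η) (hb : 0 ≤ b) (hY : ∀ j, ‖Y j‖ * ρ ^ j.natAbs ≤ b)
    (k : ℤ) : Summable (fun j => ‖Y j * e (k - j)‖) ∧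
      ‖∑' j, Y j * e (k - j)‖ * ρ ^ k.natAbs ≤ b * η := by
  have hρ0 : 0 < ρ := by linarith
  have hs' : HasSum (fun j : ℤ => ‖e (k - j)‖ * ρ ^ (k - j).natAbs)
      (∑' k, ‖e k‖ * ρ ^ k.natAbs) :=
    (Equiv.subLeft k).hasSum_iff (f := fun k => ‖e k‖ * ρ ^ k.natAbs) |>.2 hs.hasSum
  have hterm : ∀ j, ‖Y j * e (k - j)‖ * ρ ^ k.natAbs ≤
      b * (‖e (k - j)‖ * ρ ^ (k - j).natAbs) := by
    intro j
    have h1 : ρ ^ k.natAbs ≤ ρ ^ j.natAbs * ρ ^ (k - j).natAbs := by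
      rw [← pow_add]
      exact pow_le_pow_right₀ hρ.le (by omega)
    calc ‖Y j * e (k - j)‖ * ρ ^ k.natAbs
        ≤ (‖Y j‖ * ‖e (k - j)‖) * (ρ ^ j.natAbs * ρ ^ (k - j).natAbs) := by
          gcongr
          exact norm_mul_le _ _
      _ = (‖Y j‖ * ρ ^ j.natAbs) * (‖e (k - j)‖ * ρ ^ (k - j).natAbs) := by ring
      _ ≤ _ := by
          gcongr
          exact hY j
  have hsum1 : Summable (fun j => ‖Y j * e (k - j)‖ * ρ ^ k.natAbs) :=
    Summable.of_nonneg_of_le (fun j => by positivity) hterm (hs'.summable.mul_left b)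
  have hsum2 : Summable (fun j => ‖Y j * e (k - j)‖) :=
    (summable_mul_right_iff (pow_pos hρ0 _).ne').1 hsum1
  refine ⟨hsum2, ?_⟩
  calc ‖∑' j, Y j * e (k - j)‖ * ρ ^ k.natAbs
      ≤ (∑' j, ‖Y j * e (k - j)‖) * ρ ^ k.natAbs := by
        gcongr
        exact norm_tsum_le_tsum_norm hsum2
    _ = ∑' j, ‖Y j * e (k - j)‖ * ρ ^ k.natAbs := by rw [tsum_mul_right]
    _ ≤ ∑' j, b * (‖e (k - j)‖ * ρ ^ (k - j).natAbs) :=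
        hsum1.tsum_le_tsum hterm (hs'.summable.mul_left b)
    _ = b * ∑' k, ‖e k‖ * ρ ^ k.natAbs := by rw [tsum_mul_left, hs'.tsum_eq]
    _ ≤ b * η := by gcongr

lemma wh_fixed {ρ : ℝ} (hρ : 1 < ρ) {e : ℤ → 𝔸} {η : ℝ}
    (hs : Summable (fun k => ‖e k‖ * ρ ^ k.natAbs))
    (hη : ∑' k, ‖e k‖ * ρ ^ k.natAbs ≤ η) (hη2 : η ≤ 1 / 2) :
    ∃ Y : ℤ → 𝔸, (∀ k, 0 ≤ k → Y k = 0) ∧ (∀ k, ‖Y k‖ * ρ ^ k.natAbs ≤ 2 * η) ∧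
      ∀ k, k < 0 → Y k + e k + ∑' j, Y j * e (k - j) = 0 := by
  have hρ0 : 0 < ρ := by linarith
  have hη0 : 0 ≤ η := (tsum_nonneg fun k => by positivity).trans hη
  have he : ∀ k, ‖e k‖ * ρ ^ k.natAbs ≤ η := fun k =>
    (hs.le_tsum k (fun j _ => by positivity)).trans hη
  set S : (ℤ → 𝔸) → ℤ → 𝔸 := fun y j => ((ρ : ℂ) ^ j.natAbs)⁻¹ • y j with hS
  have hnρ : ∀ m : ℕ, ‖(ρ : ℂ) ^ m‖ = ρ ^ m := by
    intro m; rw [norm_pow, Complex.norm_real, Real.norm_of_nonneg hρ0.le]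
  have hSn : ∀ y j, ‖S y j‖ * ρ ^ j.natAbs = ‖y j‖ := by
    intro y j
    have : ρ ^ j.natAbs ≠ 0 := (pow_pos hρ0 _).ne'
    rw [hS]; simp only
    rw [norm_smul, norm_inv, hnρ]; field_simp
  set F0 : (ℤ → 𝔸) → ℤ → 𝔸 := fun y k =>
    if k < 0 then -((ρ : ℂ) ^ k.natAbs • (e k + ∑' j, S y j * e (k - j))) else 0 with hF0
  have hconv : ∀ (y : ℤ → 𝔸) (b : ℝ), 0 ≤ b → (∀ j, ‖y j‖ ≤ b) → ∀ k,
      Summable (fun j => ‖S y j * e (k - j)‖) ∧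
      ‖∑' j, S y j * e (k - j)‖ * ρ ^ k.natAbs ≤ b * η := by
    intro y b hb hy k
    exact conv_bound hρ hs hη hb (fun j => by rw [hSn]; exact hy j) k
  have hF0b : ∀ (y : ℤ → 𝔸) (b : ℝ), 0 ≤ b → (∀ j, ‖y j‖ ≤ b) → ∀ k, ‖F0 y k‖ ≤ η + b * η := by
    intro y b hb hy k
    have h1 := (hconv y b hb hy k).2
    simp only [hF0]
    split_ifs with hk
    · rw [norm_neg, norm_smul, hnρ]
      have h2 := norm_add_le (e k) (∑' j, S y j * e (k - j))
      have h3 := he k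
      have h4 : 0 < ρ ^ k.natAbs := pow_pos hρ0 _
      nlinarith
    · rw [norm_zero]; positivity
  set F : BoundedContinuousFunction ℤ 𝔸 → BoundedContinuousFunction ℤ 𝔸 := fun y =>
    BoundedContinuousFunction.ofNormedAddCommGroupDiscrete (F0 y) (η + ‖y‖ * η)
      (hF0b y ‖y‖ (norm_nonneg _) (fun j => y.norm_coe_le_norm j)) with hF
  have hFa : ∀ y k, F y k = F0 y k := fun y k => rfl
  have hlip : ContractingWith (1 / 2 : NNReal) F := by
    refine ⟨by rw [← NNReal.coe_lt_coe]; norm_num, LipschitzWith.of_dist_le_mul ?_⟩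
    intro y y'
    rw [BoundedContinuousFunction.dist_le (by positivity)]
    intro k
    rw [hFa, hFa, dist_eq_norm, dist_eq_norm]
    have h1 := hconv y ‖y‖ (norm_nonneg _) (fun j => y.norm_coe_le_norm j) k
    have h1' := hconv y' ‖y'‖ (norm_nonneg _) (fun j => y'.norm_coe_le_norm j) k
    have h2 := hconv (⇑(y - y')) ‖y - y'‖ (norm_nonneg _) (fun j => (y - y').norm_coe_le_norm j) k
    have h3 : ∑' j, S (⇑(y - y')) j * e (k - j) =
        ∑' j, S y j * e (k - j) - ∑' j, S y' j * e (k - j) := by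
      rw [← h1.1.of_norm.tsum_sub h1'.1.of_norm]
      refine tsum_congr fun j => ?_
      simp only [hS, BoundedContinuousFunction.coe_sub, Pi.sub_apply, smul_sub, sub_mul]
    simp only [hF0]
    split_ifs with hk
    · rw [← neg_sub_neg, neg_neg, neg_neg, ← smul_sub, add_sub_add_left_eq_sub, norm_smul, hnρ,
        norm_sub_rev, ← h3, mul_comm]
      refine h2.2.trans ?_
      rw [mul_comm]
      gcongr
      simpa using hη2
    · rw [sub_zero, norm_zero]; positivity
  set y := hlip.fixedPoint F with hy
  have hyF : F y = y := hlip.fixedPoint_isFixedPt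
  have hyn : ‖y‖ ≤ 2 * η := by
    have h1 : ‖F y‖ ≤ η + ‖y‖ * η := by
      rw [BoundedContinuousFunction.norm_le (by positivity)]
      exact hF0b y ‖y‖ (norm_nonneg _) (fun j => y.norm_coe_le_norm j)
    rw [hyF] at h1
    nlinarith [norm_nonneg y]
  refine ⟨S y, ?_, ?_, ?_⟩
  · intro k hk
    have h1 : y k = F0 y k := by rw [← hFa, hyF]
    rw [hS]; simp only
    rw [h1, hF0]; simp only
    rw [if_neg (by omega), smul_zero]
  · intro k
    rw [hSn]
    exact (y.norm_coe_le_norm k).trans hyn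
  · intro k hk
    have h1 : y k = F0 y k := by rw [← hFa, hyF]
    have h2 : S y k = -(e k + ∑' j, S y j * e (k - j)) := by
      have hne : (ρ : ℂ) ^ k.natAbs ≠ 0 := pow_ne_zero _ (by exact_mod_cast hρ0.ne')
      have h3 : S y k = ((ρ : ℂ) ^ k.natAbs)⁻¹ • y k := rfl
      rw [h3, h1]
      simp only [hF0]
      rw [if_pos hk, smul_neg, inv_smul_smul₀ hne]
    rw [add_assoc, add_eq_zero_iff_eq_neg]
    exact h2

/-- product of two absolutely convergent Laurent series on the unit circle -/
lemma laurent_mul {Y e : ℤ → 𝔸} (hY : Summable fun k => ‖Y k‖) (he : Summable fun k => ‖e k‖)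
    {z : ℂ} (hz : ‖z‖ = 1) :
    HasSum (fun k : ℤ => z ^ k • ∑' j, Y j * e (k - j))
      ((∑' k : ℤ, z ^ k • Y k) * ∑' k : ℤ, z ^ k • e k) := by
  have hz0 : z ≠ 0 := by rintro rfl; simp at hz
  have hn : ∀ (a : ℤ → 𝔸) (k : ℤ), ‖z ^ k • a k‖ = ‖a k‖ := by
    intro a k; rw [norm_smul, norm_zpow, hz, one_zpow, one_mul]
  have h1 : Summable fun k : ℤ => ‖z ^ k • Y k‖ := by simpa only [hn] using hY
  have h2 : Summable fun k : ℤ => ‖z ^ k • e k‖ := by simpa only [hn] using he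
  have h3 : HasSum (fun p : ℤ × ℤ => (z ^ p.1 • Y p.1) * (z ^ p.2 • e p.2))
      ((∑' k : ℤ, z ^ k • Y k) * ∑' k : ℤ, z ^ k • e k) := by
    rw [tsum_mul_tsum_of_summable_norm h1 h2]
    exact (summable_mul_of_summable_norm h1 h2).hasSum
  let E : ℤ × ℤ ≃ ℤ × ℤ :=
    { toFun := fun p => (p.2, p.1 - p.2)
      invFun := fun p => (p.1 + p.2, p.1)
      left_inv := fun p => by ext <;> simp
      right_inv := fun p => by ext <;> simp }
  have h4 : HasSum (fun p : ℤ × ℤ => z ^ p.1 • (Y p.2 * e (p.1 - p.2)))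
      ((∑' k : ℤ, z ^ k • Y k) * ∑' k : ℤ, z ^ k • e k) := by
    convert! E.hasSum_iff.2 h3 using 2 with p
    simp only [E, Function.comp, Equiv.coe_fn_mk]
    rw [smul_mul_smul_comm, ← zpow_add₀ hz0]
    congr 2
    ring
  have h5 := h4.prod_fiberwise (g := fun k : ℤ => z ^ k • ∑' j, Y j * e (k - j)) ?_
  · exact h5
  · intro k
    have := (h4.summable.prod_factor k).hasSum
    have hzk : z ^ k ≠ 0 := zpow_ne_zero _ hz0
    have h6 : Summable fun j => Y j * e (k - j) := by
      have h7 := (h4.summable.prod_factor k).const_smul (z ^ k)⁻¹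
      simpa only [inv_smul_smul₀ hzk] using h7
    exact h6.hasSum.const_smul _

lemma series_small {ρ τ : ℝ} (hτ0 : 0 < τ) (hτρ : τ < ρ) (a : ℕ → 𝔸) (b : ℝ)
    (ha : ∀ k, ‖a k‖ * ρ ^ k ≤ b) :
    DifferentiableOn ℂ (fun z : ℂ => ∑' k : ℕ, z ^ k • a k) (ball 0 τ) ∧
    ∀ z ∈ ball (0 : ℂ) τ, ‖∑' k : ℕ, z ^ k • a k‖ ≤ b * (1 - τ / ρ)⁻¹ := by
  have hρ0 : 0 < ρ := hτ0.trans hτρ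
  have hq : τ / ρ < 1 := (div_lt_one hρ0).2 hτρ
  have hg := (hasSum_geometric_of_lt_one (by positivity) hq).mul_left b
  have hle : ∀ (k : ℕ) (z : ℂ), z ∈ ball (0 : ℂ) τ → ‖z ^ k • a k‖ ≤ b * (τ / ρ) ^ k := by
    intro k z hz
    have hz1 : ‖z‖ ≤ τ := by
      have : ‖z‖ < τ := by simpa using hz
      exact this.le
    rw [norm_smul, norm_pow, div_pow]
    have h1 : ‖a k‖ ≤ b / ρ ^ k := by rw [le_div_iff₀ (pow_pos hρ0 _)]; exact ha k
    calc ‖z‖ ^ k * ‖a k‖ ≤ τ ^ k * (b / ρ ^ k) := by gcongr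
      _ = _ := by ring
  refine ⟨?_, ?_⟩
  · refine Complex.differentiableOn_tsum_of_summable_norm hg.summable ?_ isOpen_ball hle
    intro k
    exact ((differentiable_id.pow k).smul_const (a k)).differentiableOn
  · intro z hz
    exact tsum_of_norm_bounded hg (fun k => hle k z hz)

lemma wh {ρ τ : ℝ} (hτ : 1 < τ) (hτρ : τ < ρ) : ∃ η : ℝ, 0 < η ∧ ∀ e : ℤ → 𝔸,
    Summable (fun k => ‖e k‖ * ρ ^ k.natAbs) → ∑' k, ‖e k‖ * ρ ^ k.natAbs ≤ η →
    ∃ X G : ℂ → 𝔸, DifferentiableOn ℂ X (ball 0 τ) ∧ (∀ z ∈ ball (0 : ℂ) τ, IsUnit (X z)) ∧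
      DifferentiableOn ℂ G (ball 0 τ) ∧ (∀ z ∈ ball (0 : ℂ) τ, IsUnit (G z)) ∧
      ∀ z : ℂ, ‖z‖ = 1 → X z⁻¹ * (1 + ∑' k : ℤ, z ^ k • e k) = G z := by
  have hτ0 : 0 < τ := by linarith
  have hρ1 : 1 < ρ := by linarith
  have hρ0 : 0 < ρ := by linarith
  have hq : 0 < 1 - τ / ρ := by
    have := (div_lt_one hρ0).2 hτρ
    linarith
  have hq1 : 1 - τ / ρ ≤ 1 := by
    have : 0 < τ / ρ := by positivity
    linarith
  refine ⟨(1 - τ / ρ) / 8, by positivity, ?_⟩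
  intro e hs hη
  set η := (1 - τ / ρ) / 8 with hηd
  have hη0 : 0 < η := by positivity
  obtain ⟨Y, hY0, hYb, hYe⟩ := wh_fixed hρ1 hs hη (by linarith)
  set c : ℤ → 𝔸 := fun k => Y k + e k + ∑' j, Y j * e (k - j) with hc
  have hconv := fun k => conv_bound hρ1 hs hη (by positivity) hYb k
  have hcb : ∀ k, ‖c k‖ * ρ ^ k.natAbs ≤ 4 * η := by
    intro k
    have h1 := (hconv k).2
    have h2 := hYb k
    have h3 : ‖e k‖ * ρ ^ k.natAbs ≤ η := (hs.le_tsum k (fun j _ => by positivity)).trans hη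
    have h4 : ‖c k‖ ≤ ‖Y k‖ + ‖e k‖ + ‖∑' j, Y j * e (k - j)‖ := norm_add₃_le
    have h5 : 0 < ρ ^ k.natAbs := pow_pos hρ0 _
    nlinarith
  have hYs : Summable fun k => ‖Y k‖ := by
    refine Summable.of_nonneg_of_le (fun k => norm_nonneg _) (fun k => ?_)
      ((summable_geom_int (q := ρ⁻¹) (by positivity) (inv_lt_one_of_one_lt₀ hρ1)).mul_left (2 * η))
    rw [inv_pow, ← div_eq_mul_inv, le_div_iff₀ (pow_pos hρ0 _)]
    exact hYb k
  have hes : Summable fun k => ‖e k‖ := by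
    refine Summable.of_nonneg_of_le (fun k => norm_nonneg _) (fun k => ?_) hs
    exact le_mul_of_one_le_right (norm_nonneg _) (one_le_pow₀ hρ1.le)
  obtain ⟨dY, bY⟩ := series_small hτ0 hτρ (fun k : ℕ => Y (-(k : ℤ))) (2 * η)
    (fun k => by simpa using hYb (-(k : ℤ)))
  obtain ⟨dG, bG⟩ := series_small hτ0 hτρ (fun k : ℕ => c (k : ℤ)) (4 * η)
    (fun k => by simpa using hcb (k : ℤ))
  have hsm : 4 * η * (1 - τ / ρ)⁻¹ < 1 := by
    rw [hηd, mul_assoc, div_mul_eq_mul_div, mul_inv_cancel₀ hq.ne']; norm_num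
  have hsm2 : 2 * η * (1 - τ / ρ)⁻¹ < 1 := by
    rw [hηd, mul_assoc, div_mul_eq_mul_div, mul_inv_cancel₀ hq.ne']; norm_num
  refine ⟨fun w => 1 + ∑' k : ℕ, w ^ k • Y (-(k : ℤ)), fun z => 1 + ∑' k : ℕ, z ^ k • c (k : ℤ),
    dY.const_add 1, ?_, dG.const_add 1, ?_, ?_⟩
  · intro z hz
    exact isUnit_one_add ((bY z hz).trans_lt hsm2)
  · intro z hz
    exact isUnit_one_add ((bG z hz).trans_lt hsm)
  · intro z hz
    have hz0 : z ≠ 0 := by rintro rfl; simp at hz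
    have hn : ∀ (a : ℤ → 𝔸) (k : ℤ), ‖z ^ k • a k‖ = ‖a k‖ := by
      intro a k; rw [norm_smul, norm_zpow, hz, one_zpow, one_mul]
    have sY : Summable fun k : ℤ => z ^ k • Y k :=
      Summable.of_norm (by simpa only [hn] using hYs)
    have se : Summable fun k : ℤ => z ^ k • e k :=
      Summable.of_norm (by simpa only [hn] using hes)
    have eY : ∑' k : ℕ, (z⁻¹) ^ k • Y (-(k : ℤ)) = ∑' k : ℤ, z ^ k • Y k := by
      have hinj : Function.Injective (fun k : ℕ => -(k : ℤ)) := fun a b h => by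
        simpa using h
      rw [← hinj.tsum_eq (f := fun k : ℤ => z ^ k • Y k)]
      · refine tsum_congr fun k => ?_
        rw [zpow_neg, zpow_natCast, inv_pow]
      · intro k hk
        by_contra hcon
        apply hk
        have : 0 ≤ k := by
          by_contra hneg
          exact hcon ⟨k.natAbs, by simp only; omega⟩
        simp only
        rw [hY0 k this, smul_zero]
    have eG : ∑' k : ℕ, z ^ k • c (k : ℤ) = ∑' k : ℤ, z ^ k • c k := by
      have hinj : Function.Injective (fun k : ℕ => (k : ℤ)) := fun a b h => by
        simpa using h
      rw [← hinj.tsum_eq (f := fun k : ℤ => z ^ k • c k)]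
      · refine tsum_congr fun k => ?_
        rw [zpow_natCast]
      · intro k hk
        by_contra hcon
        apply hk
        have : k < 0 := by
          by_contra hneg
          exact hcon ⟨k.natAbs, by simp only; omega⟩
        simp only
        rw [hc]; simp only
        rw [hYe k this, smul_zero]
    have hm := laurent_mul hYs hes hz
    have hcs := (sY.hasSum.add se.hasSum).add hm
    have hcs' : ∑' k : ℤ, z ^ k • c k = (∑' k : ℤ, z ^ k • Y k) + (∑' k : ℤ, z ^ k • e k) +
        (∑' k : ℤ, z ^ k • Y k) * ∑' k : ℤ, z ^ k • e k := by
      rw [← hcs.tsum_eq]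
      refine tsum_congr fun k => ?_
      simp only [hc, smul_add]
    simp only
    rw [eY, eG, hcs']
    noncomm_ring

end WienerHopf


section MatrixWH

attribute [local instance] Matrix.linftyOpNormedRing Matrix.linftyOpNormedAlgebra

lemma linfty_norm_le {n : ℕ} (A : Matrix (Fin n) (Fin n) ℂ) :
    ‖A‖ ≤ ∑ i, ∑ j, ‖A i j‖ := by
  rw [Matrix.linfty_opNorm_def]
  have h : (Finset.univ.sup fun i => ∑ j, ‖A i j‖₊) ≤ ∑ i, ∑ j, ‖A i j‖₊ := by
    refine Finset.sup_le fun i _ => ?_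
    exact Finset.single_le_sum (f := fun i => ∑ j, ‖A i j‖₊) (fun _ _ => zero_le) (Finset.mem_univ i)
  have h' := NNReal.coe_le_coe.2 h
  simpa only [NNReal.coe_sum, coe_nnnorm] using h'

lemma wh_matrix (n : ℕ) {ρ τ : ℝ} (hτ : 1 < τ) (hτρ : τ < ρ) : ∃ η : ℝ, 0 < η ∧
    ∀ e : ℤ → Matrix (Fin n) (Fin n) ℂ,
    Summable (fun k => (∑ i, ∑ j, ‖e k i j‖) * ρ ^ k.natAbs) →
    ∑' k, (∑ i, ∑ j, ‖e k i j‖) * ρ ^ k.natAbs ≤ η →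
    ∃ X G : ℂ → Matrix (Fin n) (Fin n) ℂ, MDiff X (ball 0 τ) ∧
      (∀ z ∈ ball (0 : ℂ) τ, IsUnit (X z)) ∧
      MDiff G (ball 0 τ) ∧ (∀ z ∈ ball (0 : ℂ) τ, IsUnit (G z)) ∧
      ∀ z : ℂ, ‖z‖ = 1 → ∀ E : Matrix (Fin n) (Fin n) ℂ,
        (∀ i j, HasSum (fun k : ℤ => e k i j * z ^ k) (E i j)) → X z⁻¹ * (1 + E) = G z := by
  have hcomp : CompleteSpace (Matrix (Fin n) (Fin n) ℂ) := FiniteDimensional.complete ℂ _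
  have hρ0 : 0 < ρ := by linarith
  have hρ1 : 1 < ρ := by linarith
  obtain ⟨η, hη, hmain⟩ := wh (𝔸 := Matrix (Fin n) (Fin n) ℂ) hτ hτρ
  refine ⟨η, hη, ?_⟩
  intro e hs hle
  have hbd : ∀ k, ‖e k‖ * ρ ^ k.natAbs ≤ (∑ i, ∑ j, ‖e k i j‖) * ρ ^ k.natAbs := by
    intro k
    gcongr
    exact linfty_norm_le _
  have hs' : Summable (fun k => ‖e k‖ * ρ ^ k.natAbs) :=
    Summable.of_nonneg_of_le (fun k => by positivity) hbd hs
  obtain ⟨X, G, hX, hXu, hG, hGu, heq⟩ := hmain e hs' ((hs'.tsum_le_tsum hbd hs).trans hle)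
  let ϕ : Fin n → Fin n → Matrix (Fin n) (Fin n) ℂ →L[ℂ] ℂ := fun i j =>
    (Matrix.entryLinearMap ℂ ℂ i j).toContinuousLinearMap
  have hϕ : ∀ i j A, ϕ i j A = A i j := fun i j A => rfl
  refine ⟨X, G, ?_, hXu, ?_, hGu, ?_⟩
  · intro i j
    exact (ϕ i j).differentiable.comp_differentiableOn hX
  · intro i j
    exact (ϕ i j).differentiable.comp_differentiableOn hG
  · intro z hz E hE
    have hn : ∀ k : ℤ, ‖z ^ k • e k‖ = ‖e k‖ := by
      intro k; rw [norm_smul, norm_zpow, hz, one_zpow, one_mul]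
    have hes : Summable fun k => ‖e k‖ := by
      refine Summable.of_nonneg_of_le (fun k => norm_nonneg _) (fun k => ?_) hs'
      exact le_mul_of_one_le_right (norm_nonneg _) (one_le_pow₀ hρ1.le)
    have hsum : Summable fun k : ℤ => z ^ k • e k :=
      Summable.of_norm (by simpa only [hn] using hes)
    have hEe : ∑' k : ℤ, z ^ k • e k = E := by
      ext i j
      have h1 := (ϕ i j).hasSum hsum.hasSum
      have h2 := hE i j
      rw [← hϕ i j (∑' k : ℤ, z ^ k • e k)]
      refine h1.unique ?_
      convert! h2 using 2 with k
      rw [map_smul, hϕ, smul_eq_mul, mul_comm]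
    rw [← hEe]
    exact heq z hz

end MatrixWH

lemma exists_radius (s : Multiset ℂ) (τ : ℝ) (hτ : 1 < τ) :
    (∀ b ∈ s, 1 < ‖b‖) → ∃ τ' : ℝ, 1 < τ' ∧ τ' ≤ τ ∧ ∀ b ∈ s, τ' ≤ ‖b‖ := by
  induction s using Multiset.induction_on with
  | empty => intro _; exact ⟨τ, hτ, le_rfl, by simp⟩
  | cons b t ih =>
    intro h
    obtain ⟨τ', h1, h2, h3⟩ := ih (fun c hc => h c (Multiset.mem_cons_of_mem hc))
    refine ⟨min τ' ‖b‖, lt_min h1 (h b (Multiset.mem_cons_self b t)),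
      (min_le_left _ _).trans h2, ?_⟩
    intro c hc
    rcases Multiset.mem_cons.1 hc with rfl | hc
    · exact min_le_right _ _
    · exact (min_le_left _ _).trans (h3 c hc)

/-- approximation by Laurent polynomials -/
lemma laurent_approx {n : ℕ} {R σ : ℝ} (hσ : 1 < σ) (hσR : σ < R)
    (f : ℂ → Matrix (Fin n) (Fin n) ℂ) (hf : MDiff f {z : ℂ | R⁻¹ < ‖z‖ ∧ ‖z‖ < R})
    (θ : ℝ) (hθ : 0 < θ) :
    ∃ (S : Finset ℤ) (c : Fin n → Fin n → ℤ → ℂ), ∀ z : ℂ, σ⁻¹ ≤ ‖z‖ → ‖z‖ ≤ σ → ∀ i j,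
      ‖∑ k ∈ S, c i j k * z ^ k - f z i j‖ ≤ θ := by
  have hR : 1 < R := by linarith
  have hσ0 : 0 < σ := by linarith
  choose c hc hb using fun i j => laurent hR (fun z => f z i j) (hf i j)
  have hsum : ∀ i j, Summable (fun k : ℤ => ‖c i j k‖ * σ ^ k.natAbs) := by
    intro i j
    obtain ⟨σ', h1, h2⟩ := exists_between hσR
    have hσ'0 : 0 < σ' := by linarith
    have hcomp : IsCompact (closedBall (0 : ℂ) σ' \ ball 0 σ'⁻¹) :=
      (isCompact_closedBall _ _).diff isOpen_ball
    have hcont : ContinuousOn (fun z => f z i j) (closedBall (0 : ℂ) σ' \ ball 0 σ'⁻¹) := by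
      refine (hf i j).continuousOn.mono ?_
      intro w hw
      have h3 : ‖w‖ ≤ σ' := by simpa using hw.1
      have h4 : σ'⁻¹ ≤ ‖w‖ := by simpa using hw.2
      have : R⁻¹ < σ'⁻¹ := by gcongr
      exact ⟨by linarith, by linarith⟩
    obtain ⟨B, hB⟩ := hcomp.exists_bound_of_continuousOn hcont
    have hB' := hb i j σ' (by linarith) h2 B
      (fun w h1 h2 => hB w ⟨by simpa using h2, by simpa using h1⟩)
    have hq : σ'⁻¹ * σ < 1 := by
      rw [inv_mul_lt_iff₀ hσ'0]; linarith
    refine Summable.of_nonneg_of_le (fun k => by positivity) (fun k => ?_)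
      ((summable_geom_int (q := σ'⁻¹ * σ) (by positivity) hq).mul_left B)
    rw [mul_pow, ← mul_assoc]
    gcongr
    exact hB' k
  have hS1 : ∀ i j, ∀ᶠ S : Finset ℤ in atTop,
      ∑' k : {k // k ∉ S}, ‖c i j k‖ * σ ^ (k : ℤ).natAbs < θ := by
    intro i j
    exact (tendsto_tsum_compl_atTop_zero
      (fun k : ℤ => ‖c i j k‖ * σ ^ k.natAbs)).eventually (gt_mem_nhds hθ)
  have hS2 : ∀ᶠ S : Finset ℤ in atTop, ∀ i j,
      ∑' k : {k // k ∉ S}, ‖c i j k‖ * σ ^ (k : ℤ).natAbs < θ := by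
    rw [eventually_all]; intro i; rw [eventually_all]; intro j; exact hS1 i j
  obtain ⟨S, hS⟩ := hS2.exists
  refine ⟨S, c, ?_⟩
  intro z h1 h2 i j
  have hRσ : R⁻¹ < σ⁻¹ := by gcongr
  have hz := hc i j z (by linarith) (by linarith)
  have hsplit := hz.summable.sum_add_tsum_subtype_compl S
  rw [hz.tsum_eq] at hsplit
  rw [← hsplit, sub_add_cancel_left, norm_neg]
  have hs' := (hsum i j).subtype {k | k ∉ S}
  refine (tsum_of_norm_bounded hs'.hasSum ?_).trans (hS i j).le
  intro k
  rw [norm_mul]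
  simp only [Function.comp]
  gcongr
  exact zpow_norm_le hσ0 h1 h2 _


/-- first step: `f = G⁻¹ · X(1/z) · r(z)` with `r` a Laurent polynomial -/
lemma step_approx {n : ℕ} {R : ℝ} (hR : 1 < R)
    (f : ℂ → Matrix (Fin n) (Fin n) ℂ) (hf : MDiff f {z : ℂ | R⁻¹ < ‖z‖ ∧ ‖z‖ < R})
    (hfu : ∀ z : ℂ, R⁻¹ < ‖z‖ → ‖z‖ < R → IsUnit (f z)) :
    ∃ τ : ℝ, 1 < τ ∧ ∃ (X G : ℂ → Matrix (Fin n) (Fin n) ℂ) (S : Finset ℤ)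
      (c : Fin n → Fin n → ℤ → ℂ),
      MDiff X (ball 0 τ) ∧ (∀ z ∈ ball (0 : ℂ) τ, IsUnit (X z)) ∧
      MDiff G (ball 0 τ) ∧ (∀ z ∈ ball (0 : ℂ) τ, IsUnit (G z)) ∧
      ∀ z : ℂ, ‖z‖ = 1 →
        X z⁻¹ * Matrix.of (fun i j => ∑ k ∈ S, c i j k * z ^ k) = G z * f z := by
  obtain ⟨σ, hσ1, hσR⟩ := exists_between hR
  obtain ⟨ρ, hρ1, hρσ⟩ := exists_between hσ1
  obtain ⟨τ, hτ1, hτρ⟩ := exists_between hρ1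
  have hσ0 : 0 < σ := by linarith
  have hρ0 : 0 < ρ := by linarith
  have hRσ : R⁻¹ < σ⁻¹ := by gcongr
  have hσi : σ⁻¹ < 1 := inv_lt_one_of_one_lt₀ hσ1
  obtain ⟨η, hη, hwh⟩ := wh_matrix n hτ1 hτρ
  have hg : MDiff (fun z => (f z)⁻¹) {z : ℂ | R⁻¹ < ‖z‖ ∧ ‖z‖ < R} :=
    hf.inv fun z hz => hfu z hz.1 hz.2
  have hBij : ∀ i j, ∃ B : ℝ, ∀ z : ℂ, σ⁻¹ ≤ ‖z‖ → ‖z‖ ≤ σ → ‖(f z)⁻¹ i j‖ ≤ B := by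
    intro i j
    have hcomp : IsCompact (closedBall (0 : ℂ) σ \ ball 0 σ⁻¹) :=
      (isCompact_closedBall _ _).diff isOpen_ball
    have hcont : ContinuousOn (fun z => (f z)⁻¹ i j) (closedBall (0 : ℂ) σ \ ball 0 σ⁻¹) := by
      refine (hg i j).continuousOn.mono ?_
      intro w hw
      have h3 : ‖w‖ ≤ σ := by simpa using hw.1
      have h4 : σ⁻¹ ≤ ‖w‖ := by simpa using hw.2
      exact ⟨by linarith, by linarith⟩
    obtain ⟨B, hB⟩ := hcomp.exists_bound_of_continuousOn hcont
    exact ⟨B, fun w h1 h2 => hB w ⟨by simpa using h2, by simpa using h1⟩⟩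
  choose B0 hB0 using hBij
  set B : ℝ := ∑ i, ∑ j, |B0 i j| with hB
  have hBn : 0 ≤ B := by positivity
  have hBle : ∀ i j, ∀ z : ℂ, σ⁻¹ ≤ ‖z‖ → ‖z‖ ≤ σ → ‖(f z)⁻¹ i j‖ ≤ B := by
    intro i j z h1 h2
    refine (hB0 i j z h1 h2).trans ((le_abs_self _).trans ?_)
    refine (Finset.single_le_sum (f := fun j => |B0 i j|) (fun _ _ => abs_nonneg _)
      (Finset.mem_univ j)).trans ?_
    exact Finset.single_le_sum (f := fun i => ∑ j, |B0 i j|)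
      (fun _ _ => Finset.sum_nonneg fun _ _ => abs_nonneg _) (Finset.mem_univ i)
  have hq : ρ * σ⁻¹ < 1 := by
    rw [← div_eq_mul_inv, div_lt_one hσ0]; exact hρσ
  have hgeo := summable_geom_int (q := ρ * σ⁻¹) (by positivity) hq
  set C : ℝ := ∑' k : ℤ, (ρ * σ⁻¹) ^ k.natAbs with hC
  have hCn : 0 ≤ C := tsum_nonneg fun k => by positivity
  set D : ℝ := n * n * (n * B) * C with hD
  have hDn : 0 ≤ D := by positivity
  set θ : ℝ := η / (D + 1) with hθ
  have hθ0 : 0 < θ := by positivity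
  obtain ⟨S, c, hSc⟩ := laurent_approx hσ1 hσR f hf θ hθ0
  set r : ℂ → Matrix (Fin n) (Fin n) ℂ :=
    fun z => Matrix.of (fun i j => ∑ k ∈ S, c i j k * z ^ k) with hr
  have hrd : MDiff r {z : ℂ | R⁻¹ < ‖z‖ ∧ ‖z‖ < R} := by
    intro i j
    simp only [hr, Matrix.of_apply]
    refine DifferentiableOn.fun_sum fun k _ => (differentiableOn_const _).mul ?_
    intro z hz
    have hz0 : z ≠ 0 := by
      rintro rfl
      have h1 := hz.1
      have : 0 < R⁻¹ := by positivity
      simp at h1; linarith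
    exact (differentiableAt_zpow.2 (Or.inl hz0)).differentiableWithinAt
  have hdiff : MDiff (fun z => r z - f z) {z : ℂ | R⁻¹ < ‖z‖ ∧ ‖z‖ < R} := fun i j =>
    (hrd i j).sub (hf i j)
  have hεd := hdiff.mul hg
  have hεb : ∀ z : ℂ, σ⁻¹ ≤ ‖z‖ → ‖z‖ ≤ σ → ∀ i j,
      ‖((r z - f z) * (f z)⁻¹) i j‖ ≤ n * (θ * B) := by
    intro z h1 h2 i j
    rw [Matrix.mul_apply]
    refine (norm_sum_le _ _).trans ?_
    calc ∑ l, ‖(r z - f z) i l * (f z)⁻¹ l j‖ ≤ ∑ l : Fin n, θ * B := by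
          refine Finset.sum_le_sum fun l _ => ?_
          rw [norm_mul]
          gcongr
          · exact hSc z h1 h2 i l
          · exact hBle l j z h1 h2
      _ = n * (θ * B) := by simp
  choose d hd hdb using fun i j => laurent hR (fun z => ((r z - f z) * (f z)⁻¹) i j) (hεd i j)
  have hdb' : ∀ i j k, ‖d i j k‖ ≤ n * (θ * B) * σ⁻¹ ^ k.natAbs := fun i j k =>
    hdb i j σ hσ1.le hσR _ (fun z h1 h2 => hεb z h1 h2 i j) k
  have hterm : ∀ k : ℤ, (∑ i, ∑ j, ‖Matrix.of (fun i j => d i j k) i j‖) * ρ ^ k.natAbs ≤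
      n * n * (n * (θ * B)) * (ρ * σ⁻¹) ^ k.natAbs := by
    intro k
    have h1 : ∑ i, ∑ j, ‖Matrix.of (fun i j => d i j k) i j‖ ≤
        ∑ i : Fin n, ∑ j : Fin n, n * (θ * B) * σ⁻¹ ^ k.natAbs :=
      Finset.sum_le_sum fun i _ => Finset.sum_le_sum fun j _ => hdb' i j k
    have h2 : ∑ i : Fin n, ∑ j : Fin n, (n * (θ * B) * σ⁻¹ ^ k.natAbs : ℝ) =
        n * n * (n * (θ * B)) * σ⁻¹ ^ k.natAbs := by
      simp; ring
    rw [h2] at h1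
    calc _ ≤ n * n * (n * (θ * B)) * σ⁻¹ ^ k.natAbs * ρ ^ k.natAbs := by gcongr
      _ = _ := by rw [mul_pow]; ring
  have hgeo' := hgeo.mul_left ((n : ℝ) * n * (n * (θ * B)))
  have hsum : Summable fun k : ℤ =>
      (∑ i, ∑ j, ‖Matrix.of (fun i j => d i j k) i j‖) * ρ ^ k.natAbs :=
    Summable.of_nonneg_of_le (fun k => by positivity) hterm hgeo'
  have hle : ∑' k : ℤ, (∑ i, ∑ j, ‖Matrix.of (fun i j => d i j k) i j‖) * ρ ^ k.natAbs ≤ η := by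
    refine (hsum.tsum_le_tsum hterm hgeo').trans ?_
    rw [tsum_mul_left, ← hC]
    have e1 : (n : ℝ) * n * (n * (θ * B)) * C = D * θ := by rw [hD]; ring
    rw [e1, hθ, mul_div_assoc', div_le_iff₀ (by positivity)]
    nlinarith
  obtain ⟨X, G, hX, hXu, hG, hGu, heq⟩ := hwh (fun k => Matrix.of (fun i j => d i j k)) hsum hle
  refine ⟨τ, hτ1, X, G, S, c, hX, hXu, hG, hGu, ?_⟩
  intro z hz
  have hz1 : R⁻¹ < ‖z‖ := by linarith
  have hz2 : ‖z‖ < R := by linarith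
  have h1 := heq z hz ((r z - f z) * (f z)⁻¹) (fun i j => hd i j z hz1 hz2)
  have hu := (Matrix.isUnit_iff_isUnit_det _).1 (hfu z hz1 hz2)
  have h2 : (1 + (r z - f z) * (f z)⁻¹) * f z = r z := by
    rw [Matrix.add_mul, Matrix.one_mul, Matrix.nonsing_inv_mul_cancel_right _ _ hu]
    abel
  rw [← h1, Matrix.mul_assoc, h2]

lemma exist_core {n : ℕ} {R : ℝ} (hR : 1 < R)
    (f : ℂ → Matrix (Fin n) (Fin n) ℂ) (hf : MDiff f {z : ℂ | R⁻¹ < ‖z‖ ∧ ‖z‖ < R})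
    (hfu : ∀ z : ℂ, R⁻¹ < ‖z‖ → ‖z‖ < R → IsUnit (f z)) :
    ∃ ρ : ℝ, 1 < ρ ∧ ∃ (P H : ℂ → Matrix (Fin n) (Fin n) ℂ) (κ : Fin n → ℤ),
      MDiff P (ball 0 ρ) ∧ (∀ z ∈ ball (0 : ℂ) ρ, IsUnit (P z)) ∧
      MDiff H (ball 0 ρ) ∧ (∀ z ∈ ball (0 : ℂ) ρ, IsUnit (H z)) ∧
      ∀ z : ℂ, ‖z‖ = 1 → f z = P z * Matrix.diagonal (fun i => z ^ κ i) * H z⁻¹ := by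
  obtain ⟨τ, hτ, X, G, S, c, hX, hXu, hG, hGu, heq⟩ := step_approx hR f hf hfu
  set N : ℕ := S.sup Int.natAbs with hN
  have hNk : ∀ k ∈ S, k ≤ N := by
    intro k hk
    have : k.natAbs ≤ N := Finset.le_sup (f := Int.natAbs) hk
    omega
  set PM : Matrix (Fin n) (Fin n) (Polynomial ℂ) :=
    Matrix.of (fun i j => ∑ k ∈ S, Polynomial.C (c i j k) * Polynomial.X ^ ((N : ℤ) - k).toNat)
    with hPM
  set q := PM.det with hq
  set Rm : ℂ → Matrix (Fin n) (Fin n) ℂ := fun w => PM.map (Polynomial.eval w) with hRm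
  have hRmdet : ∀ w, (Rm w).det = q.eval w := by
    intro w
    rw [hq, ← Polynomial.coe_evalRingHom, RingHom.map_det]
    rfl
  have hRmd : ∀ s, MDiff Rm s := by
    intro s i j
    exact (Polynomial.differentiable (PM i j)).differentiableOn
  have hunitball : ∀ z : ℂ, ‖z‖ = 1 → z ∈ ball (0 : ℂ) τ := by
    intro z hz; simp [hz, hτ]
  have hr : ∀ z : ℂ, ‖z‖ = 1 → Matrix.of (fun i j => ∑ k ∈ S, c i j k * z ^ k) =
      Matrix.diagonal (fun _ => z ^ (N : ℤ)) * Rm z⁻¹ := by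
    intro z hz
    have hz0 : z ≠ 0 := by rintro rfl; simp at hz
    ext i j
    rw [Matrix.diagonal_mul]
    simp only [hRm, hPM, Matrix.map_apply, Matrix.of_apply, Polynomial.eval_finsetSum,
      Polynomial.eval_mul, Polynomial.eval_C, Polynomial.eval_pow, Polynomial.eval_X]
    rw [Finset.mul_sum]
    refine Finset.sum_congr rfl fun k hk => ?_
    have h1 : (z⁻¹) ^ ((N : ℤ) - k).toNat = z ^ (k - (N : ℤ)) := by
      rw [← zpow_natCast, Int.toNat_of_nonneg (by have := hNk k hk; omega), inv_zpow', neg_sub]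
    rw [h1, mul_left_comm, ← zpow_add₀ hz0]
    congr 2
    ring
  have hcomm : ∀ (a : ℂ) (A B : Matrix (Fin n) (Fin n) ℂ),
      A * (Matrix.diagonal (fun _ => a) * B) = Matrix.diagonal (fun _ => a) * (A * B) := by
    intro a A B
    rw [← Matrix.smul_eq_diagonal_mul, ← Matrix.smul_eq_diagonal_mul, Matrix.mul_smul]
  have hGf : ∀ z : ℂ, ‖z‖ = 1 →
      Matrix.diagonal (fun _ => z ^ (N : ℤ)) * (X z⁻¹ * Rm z⁻¹) = G z * f z := by
    intro z hz
    rw [← hcomm, ← hr z hz, heq z hz]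
  have hfz : ∀ z : ℂ, ‖z‖ = 1 → IsUnit (f z) := by
    intro z hz
    exact hfu z (by rw [hz]; exact inv_lt_one_of_one_lt₀ hR) (by linarith)
  have hqcirc : ∀ w : ℂ, ‖w‖ = 1 → q.eval w ≠ 0 := by
    intro w hw h0
    have hz : ‖w⁻¹‖ = 1 := by rw [norm_inv, hw, inv_one]
    have h1 := congrArg Matrix.det (hGf w⁻¹ hz)
    rw [inv_inv, Matrix.det_mul, Matrix.det_mul, hRmdet, h0, mul_zero, mul_zero] at h1
    have h2 := (hGu w⁻¹ (hunitball _ hz)).mul (hfz _ hz)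
    exact ((Matrix.isUnit_iff_isUnit_det _).1 h2).ne_zero h1.symm
  have hq0 : q ≠ 0 := by
    intro h
    exact hqcirc 1 (by simp) (by rw [h]; simp)
  have hqe : ∀ w, q.eval w = q.leadingCoeff * (q.roots.map (fun b => w - b)).prod := fun w =>
    (IsAlgClosed.splits q).eval_eq_prod_roots w
  set s := q.roots.filter (fun b => ‖b‖ < 1) with hs
  set t := q.roots.filter (fun b => ¬ ‖b‖ < 1) with ht
  have hst : s + t = q.roots := Multiset.filter_add_not _ _
  have ht1 : ∀ b ∈ t, 1 < ‖b‖ := by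
    intro b hb
    rw [ht, Multiset.mem_filter] at hb
    refine lt_of_le_of_ne (not_lt.1 hb.2) ?_
    intro h
    exact hqcirc b h.symm ((Polynomial.mem_roots hq0).1 hb.1)
  obtain ⟨τ', hτ'1, hτ'τ, hτ't⟩ := exists_radius t τ hτ ht1
  have hsub : ball (0 : ℂ) τ' ⊆ ball 0 τ := ball_subset_ball hτ'τ
  obtain ⟨ρ1, hρ1, P, H, κ, hP, hPu, hH, hHu, hPH⟩ := reduce s
    (fun b hb => (Multiset.mem_filter.1 hb).2) τ' hτ'1 (fun w => X w * Rm w)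
    (fun _ => (N : ℤ))
    (fun w => (X w).det * (q.leadingCoeff * (t.map (fun b => w - b)).prod))
    ((hX.mono hsub).mul (hRmd _))
    (by
      refine (hX.mono hsub).det.continuousOn.mul (continuousOn_const.mul ?_)
      exact (continuous_multiset_prod t fun c _ => continuous_id.sub continuous_const).continuousOn)
    (by
      intro w hw
      refine mul_ne_zero ((Matrix.isUnit_iff_isUnit_det _).1 (hXu w (hsub hw))).ne_zero
        (mul_ne_zero (Polynomial.leadingCoeff_ne_zero.2 hq0) ?_)
      refine Multiset.prod_ne_zero ?_
      intro h0
      obtain ⟨b, hb, hwb⟩ := Multiset.mem_map.1 h0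
      have h1 : ‖w‖ < τ' := by simpa using hw
      have h2 := hτ't b hb
      rw [sub_eq_zero.1 hwb] at h1
      linarith)
    (by
      intro w _
      rw [Matrix.det_mul, hRmdet, hqe, ← hst, Multiset.map_add, Multiset.prod_add]
      ring)
  set ρ := min ρ1 τ' with hρ
  have s1 : ball (0 : ℂ) ρ ⊆ ball 0 ρ1 := ball_subset_ball (min_le_left _ _)
  have s2 : ball (0 : ℂ) ρ ⊆ ball 0 τ' := ball_subset_ball (min_le_right _ _)
  refine ⟨ρ, lt_min hρ1 hτ'1, fun z => (G z)⁻¹ * P z, H, κ, ?_, ?_, hH.mono s2,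
    fun z hz => hHu z (s2 hz), ?_⟩
  · exact ((hG.mono (s2.trans hsub)).inv fun z hz => hGu z (hsub (s2 hz))).mul (hP.mono s1)
  · intro z hz
    exact (Matrix.isUnit_nonsing_inv_iff.2 (hGu z (hsub (s2 hz)))).mul (hPu z (s1 hz))
  · intro z hz
    have hu := (Matrix.isUnit_iff_isUnit_det _).1 (hGu z (hunitball z hz))
    rw [Matrix.mul_assoc (G z)⁻¹, Matrix.mul_assoc (G z)⁻¹, ← hPH z hz, hGf z hz,
      Matrix.nonsing_inv_mul_cancel_left _ _ hu]

lemma exist_final {n : ℕ} {δ : ℝ} (hδ : 0 < δ) (f : ℂ → Matrix (Fin n) (Fin n) ℂ)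
    (hfd : ∀ i j, DifferentiableOn ℂ (fun z => f z i j)
      {z : ℂ | 1 - δ < ‖z‖ ∧ ‖z‖ < 1 + δ})
    (hfu : ∀ z : ℂ, 1 - δ < ‖z‖ → ‖z‖ < 1 + δ → IsUnit (f z)) :
    ∃ κ : Fin n → ℤ, Antitone κ ∧ AnnulusBirkhoffFactorization n f κ := by
  have hR : 1 < 1 + δ := by linarith
  have hRi : 1 - δ < (1 + δ)⁻¹ := by
    rw [← one_div, lt_div_iff₀ (by linarith)]
    nlinarith
  obtain ⟨ρ, hρ, P, H, κ, hP, hPu, hH, hHu, heq⟩ := exist_core hR f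
    (MDiff.mono (s := {z : ℂ | 1 - δ < ‖z‖ ∧ ‖z‖ < 1 + δ}) hfd
      (fun z hz => ⟨hRi.trans hz.1, hz.2⟩))
    (fun z h1 h2 => hfu z (hRi.trans h1) h2)
  set σ : Equiv.Perm (Fin n) := Tuple.sort (fun i => -κ i) with hσ
  have hmono : Monotone ((fun i => -κ i) ∘ σ) := Tuple.monotone_sort _
  refine ⟨κ ∘ σ, ?_, ?_⟩
  · intro i j hij
    have := hmono hij
    simp only [Function.comp] at this ⊢
    omega
  have hρ0 : 0 < ρ := by linarith
  have hρi : ρ⁻¹ < 1 := inv_lt_one_of_one_lt₀ hρ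
  have hρip : 0 < ρ⁻¹ := inv_pos.2 hρ0
  set δ' := min (ρ - 1) (1 - ρ⁻¹) with hδ'
  have d1 : δ' ≤ ρ - 1 := min_le_left _ _
  have d2 : δ' ≤ 1 - ρ⁻¹ := min_le_right _ _
  have hball1 : ∀ z : ℂ, ‖z‖ < 1 + δ' → z ∈ ball (0 : ℂ) ρ := by
    intro z hz
    rw [mem_ball_zero_iff]; linarith
  have hne : ∀ z : ℂ, 1 - δ' < ‖z‖ → z ≠ 0 := by
    rintro z hz rfl
    rw [norm_zero] at hz; linarith
  have hball2 : ∀ z : ℂ, 1 - δ' < ‖z‖ → z⁻¹ ∈ ball (0 : ℂ) ρ := by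
    intro z hz
    rw [mem_ball_zero_iff, norm_inv]
    exact inv_lt_of_inv_lt₀ hρ0 (by linarith)
  have h0 : (0 : ℂ) ∈ ball (0 : ℂ) ρ := by simpa using hρ0
  refine ⟨δ', lt_min (by linarith) (by linarith), fun z => (P z).submatrix id σ,
    fun z => (H z⁻¹).submatrix σ id, (H 0).submatrix σ id, ?_, ?_, ?_, ?_, ?_, ?_, ?_⟩
  · intro i j
    exact (hP i (σ j)).mono hball1
  · intro z hz
    exact (Matrix.isUnit_submatrix_equiv (Equiv.refl _) σ).2 (hPu z (hball1 z hz))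
  · intro i j
    refine DifferentiableOn.comp (hH (σ i) j) (t := ball 0 ρ) (f := fun z : ℂ => z⁻¹) ?_ ?_
    · exact differentiableOn_inv.mono fun z hz => hne z hz
    · intro z hz; exact hball2 z hz
  · intro z hz
    exact (Matrix.isUnit_submatrix_equiv σ (Equiv.refl _)).2 (hHu _ (hball2 z hz))
  · exact (Matrix.isUnit_submatrix_equiv σ (Equiv.refl _)).2 (hHu 0 h0)
  · intro i j
    have hc : ContinuousAt (fun w => H w (σ i) j) 0 :=
      (hH (σ i) j).continuousOn.continuousAt (isOpen_ball.mem_nhds h0)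
    refine hc.tendsto.comp ?_
    rw [comap_norm_atTop]
    exact tendsto_inv₀_cobounded
  · intro z hz
    rw [heq z hz]
    ext i j
    rw [Matrix.mul_apply, Matrix.mul_apply]
    simp only [Matrix.mul_diagonal, Matrix.submatrix_apply, id, Function.comp]
    exact (Equiv.sum_comp σ (fun l => P z i l * z ^ κ l * H z⁻¹ l j)).symm

/-- Every real-analytic loop in `GL_n(ℂ)`, encoded as a holomorphic
`GL_n(ℂ)`-valued map `f` on an annulus `{1−δ < |z| < 1+δ}` around the unit circle, admits
a Birkhoff decomposition `f = F₊ · diag(z^{κ₁},…,z^{κ_n}) · F₋` on `𝕊` with decreasing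
partial indices `κ₁ ≥ ⋯ ≥ κ_n` and factors holomorphic on slightly smaller disks
`{|z| < 1+δ'}` resp. `{|z| > 1−δ'}`; the partial indices are uniquely determined by `f`. -/
theorem stmt_5 (n : ℕ) (δ : ℝ) (hδ : 0 < δ) (f : ℂ → Matrix (Fin n) (Fin n) ℂ)
    (hfd : ∀ i j, DifferentiableOn ℂ (fun z => f z i j)
      {z : ℂ | 1 - δ < ‖z‖ ∧ ‖z‖ < 1 + δ})
    (hfu : ∀ z : ℂ, 1 - δ < ‖z‖ → ‖z‖ < 1 + δ → IsUnit (f z)) :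
    ∃ κ : Fin n → ℤ, Antitone κ ∧
      AnnulusBirkhoffFactorization n f κ ∧
      ∀ κ' : Fin n → ℤ, Antitone κ' → AnnulusBirkhoffFactorization n f κ' → κ' = κ := by
  obtain ⟨κ, hκ, hF⟩ := exist_final hδ f hfd hfu
  exact ⟨κ, hκ, hF, fun κ' hκ' hF' =>
    le_antisymm (uniq_le hκ' hκ hF' hF) (uniq_le hκ hκ' hF hF')⟩
end
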